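/- arXiv:2203.15091 — 8 statements merged into one kernel-verified Lean document; each statement's English description precedes it below -/
import Mathlib

section
/- Fix T > 0, p > 0, and v₀ ∈ C^∞([0,1]) with 0 ≤ v₀ ≤ 1. For each ε > 0 let u^ε ∈ C^∞([0,T]×[0,1]) with 0 ≤ u^ε ≤ 1 satisfy ∂_t u^ε = ε ∂_x² u^ε − p ∂_x[J(u^ε)] on (0,T)×(0,1), u^ε(0,·) = v₀, and the zero-flux boundary conditions [ε∂_x u^ε − pJ(u^ε)]|_{x=0} = 0 and [ε∂_x u^ε − pJ(u^ε)]|_{x=1} = 0 for all t ∈ [0,T]. Then as ε → 0, u^ε converges in the weak-⋆ topology of L^∞([0,T]×[0,1]) to a function u satisfying: (i) ∫∫ [F(u)∂_t ψ + pQ(u)∂_x ψ] dx dt ≥ 0 for every Lax entropy flux pair (F,Q) and every nonnegative ψ ∈ C_c^∞((0,T)×(0,1)); (ii) esslim_{t→0+} ∫₀¹ |u(t,x) − v₀(x)| dx = 0; (iii) for every boundary entropy flux pair (ℱ,𝒬) and every nonnegative φ ∈ C([0,T]), esslim_{x→0+} ∫₀ᵀ φ(t) 𝒬(u(t,x), 0)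 dt ≤ 0 and esslim_{x→1−} ∫₀ᵀ φ(t) 𝒬(u(t,x), 1) dt ≥ 0. (Theorem 2.8, zero-flux boundary case: the limit is the entropy solution with boundary data v₋ = 0, v₊ = 1.) -/
open Set MeasureTheory intervalIntegral Filter

/-- The flux `J u = u (1 - u)`. -/
noncomputable def J (u : ℝ) : ℝ := u * (1 - u)

/-- A Lax entropy flux pair for the flux `J u = u * (1 - u)`. -/
def IsLaxPair (F Q : ℝ → ℝ) : Prop :=
  ContDiff ℝ 2 F ∧ ContDiff ℝ 2 Q ∧
  (∀ u ∈ Set.Icc (0:ℝ) 1, deriv Q u = (1 - 2*u) * deriv F u) ∧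
  (∀ u ∈ Set.Icc (0:ℝ) 1, 0 ≤ deriv (deriv F) u)

/-- A boundary entropy flux pair. -/
def IsBoundaryPair (F Q : ℝ → ℝ → ℝ) : Prop :=
  ∀ v ∈ Set.Icc (0:ℝ) 1,
    IsLaxPair (fun u => F u v) (fun u => Q u v) ∧
    F v v = 0 ∧ deriv (fun u => F u v) v = 0 ∧ Q v v = 0

/-! ### Partial derivatives on the time-space plane -/

/-- The partial derivative in the first (time) variable. -/
noncomputable def tderiv (f : ℝ × ℝ → ℝ) (z : ℝ × ℝ) : ℝ := fderiv ℝ f z (1, 0)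

/-- The partial derivative in the second (space) variable. -/
noncomputable def xderiv (f : ℝ × ℝ → ℝ) (z : ℝ × ℝ) : ℝ := fderiv ℝ f z (0, 1)

lemma hasDerivAt_tderiv {f : ℝ × ℝ → ℝ} {t x : ℝ} (hf : DifferentiableAt ℝ f (t, x)) :
    HasDerivAt (fun s => f (s, x)) (tderiv f (t, x)) t := by
  have h : HasDerivAt (fun s : ℝ => (s, x)) ((1 : ℝ), (0 : ℝ)) t :=
    (hasDerivAt_id t).prodMk (hasDerivAt_const t x)
  exact hf.hasFDerivAt.comp_hasDerivAt t h

lemma hasDerivAt_xderiv {f : ℝ × ℝ → ℝ} {t x : ℝ} (hf : DifferentiableAt ℝ f (t, x)) :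
    HasDerivAt (fun y => f (t, y)) (xderiv f (t, x)) x := by
  have h : HasDerivAt (fun y : ℝ => (t, y)) ((0 : ℝ), (1 : ℝ)) x :=
    (hasDerivAt_const x t).prodMk (hasDerivAt_id x)
  exact hf.hasFDerivAt.comp_hasDerivAt x h

lemma tderiv_eq {f : ℝ × ℝ → ℝ} {t x f' : ℝ} (hf : DifferentiableAt ℝ f (t, x))
    (h : HasDerivAt (fun s => f (s, x)) f' t) : tderiv f (t, x) = f' :=
  (hasDerivAt_tderiv hf).unique h

lemma xderiv_eq {f : ℝ × ℝ → ℝ} {t x f' : ℝ} (hf : DifferentiableAt ℝ f (t, x))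
    (h : HasDerivAt (fun y => f (t, y)) f' x) : xderiv f (t, x) = f' :=
  (hasDerivAt_xderiv hf).unique h

lemma ContDiff.tderiv {f : ℝ × ℝ → ℝ} (hf : ContDiff ℝ (⊤ : ℕ∞) f) :
    ContDiff ℝ (⊤ : ℕ∞) (tderiv f) :=
  (hf.fderiv_right (by simp)).clm_apply contDiff_const

lemma ContDiff.xderiv {f : ℝ × ℝ → ℝ} (hf : ContDiff ℝ (⊤ : ℕ∞) f) :
    ContDiff ℝ (⊤ : ℕ∞) (xderiv f) :=
  (hf.fderiv_right (by simp)).clm_apply contDiff_const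

lemma tderiv_xderiv_comm {f : ℝ × ℝ → ℝ} (hf : ContDiff ℝ (⊤ : ℕ∞) f) (z : ℝ × ℝ) :
    tderiv (xderiv f) z = xderiv (tderiv f) z := by
  have hd : DifferentiableAt ℝ (fderiv ℝ f) z :=
    (hf.fderiv_right (m := (⊤ : ℕ∞)) (by simp)).differentiable (by simp) z
  have hsymm : IsSymmSndFDerivAt ℝ f z :=
    hf.contDiffAt.isSymmSndFDerivAt (by simpa using WithTop.coe_le_coe.2 (le_top (a := (2 : ℕ∞))))
  have h1 : ∀ v w : ℝ × ℝ, fderiv ℝ (fun y => fderiv ℝ f y v) z w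
      = fderiv ℝ (fderiv ℝ f) z w v := by
    intro v w
    have := (hd.hasFDerivAt.clm_apply (hasFDerivAt_const v z)).fderiv
    rw [this]; simp
  change fderiv ℝ (fun y => fderiv ℝ f y (0, 1)) z (1, 0)
    = fderiv ℝ (fun y => fderiv ℝ f y (1, 0)) z (0, 1)
  rw [h1, h1]
  exact hsymm _ _

/-- The divergence theorem on a rectangle, in terms of iterated integrals. -/
lemma integral_divergence_rectangle {f g : ℝ × ℝ → ℝ} (hf : ContDiff ℝ 1 f)
    (hg : ContDiff ℝ 1 g) (a b c d : ℝ) :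
    (∫ t in a..b, ∫ x in c..d, (tderiv f (t, x) + xderiv g (t, x))) =
      (((∫ t in a..b, g (t, d)) - ∫ t in a..b, g (t, c)) + ∫ x in c..d, f (b, x)) -
        ∫ x in c..d, f (a, x) := by
  have hc : Continuous fun z : ℝ × ℝ => fderiv ℝ f z (1, 0) + fderiv ℝ g z (0, 1) :=
    ((hf.continuous_fderiv one_ne_zero).clm_apply continuous_const).add
      ((hg.continuous_fderiv one_ne_zero).clm_apply continuous_const)
  exact integral2_divergence_prod_of_hasFDerivAt f g (fderiv ℝ f) (fderiv ℝ g) a c b d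
    hf.continuous.continuousOn hg.continuous.continuousOn
    (fun z _ => (hf.differentiable one_ne_zero z).hasFDerivAt)
    (fun z _ => (hg.differentiable one_ne_zero z).hasFDerivAt)
    (hc.continuousOn.integrableOn_compact (isCompact_uIcc.prod isCompact_uIcc))

lemma ContDiff.continuous_tderiv {f : ℝ × ℝ → ℝ} (hf : ContDiff ℝ 1 f) :
    Continuous (_root_.tderiv f) :=
  (hf.continuous_fderiv one_ne_zero).clm_apply continuous_const

lemma ContDiff.continuous_xderiv {f : ℝ × ℝ → ℝ} (hf : ContDiff ℝ 1 f) :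
    Continuous (_root_.xderiv f) :=
  (hf.continuous_fderiv one_ne_zero).clm_apply continuous_const

lemma continuous_integral_snd {f : ℝ × ℝ → ℝ} (hf : Continuous f) (c d : ℝ) :
    Continuous fun t => ∫ x in c..d, f (t, x) :=
  intervalIntegral.continuous_parametric_intervalIntegral_of_continuous' (f := fun t x => f (t, x))
    (by simpa [Function.uncurry_def] using hf) c d

lemma integral_rectangle_mono {f g : ℝ × ℝ → ℝ} (hf : Continuous f) (hg : Continuous g)
    {a b c d : ℝ} (hab : a ≤ b) (hcd : c ≤ d)
    (h : ∀ t ∈ Icc a b, ∀ x ∈ Icc c d, f (t, x) ≤ g (t, x)) :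
    (∫ t in a..b, ∫ x in c..d, f (t, x)) ≤ ∫ t in a..b, ∫ x in c..d, g (t, x) := by
  refine intervalIntegral.integral_mono_on hab
    ((continuous_integral_snd hf c d).intervalIntegrable _ _)
    ((continuous_integral_snd hg c d).intervalIntegrable _ _) fun t ht => ?_
  exact intervalIntegral.integral_mono_on hcd
    ((by fun_prop : Continuous fun x => f (t, x)).intervalIntegrable _ _)
    ((by fun_prop : Continuous fun x => g (t, x)).intervalIntegrable _ _) fun x hx => h t ht x hx

/-- An upper bound on the divergence bounds the outward flux through the boundary of a rectangle. -/
lemma flux_le_of_divergence_le {f g : ℝ × ℝ → ℝ} (hf : ContDiff ℝ 1 f) (hg : ContDiff ℝ 1 g)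
    {a b c d K : ℝ} (hab : a ≤ b) (hcd : c ≤ d)
    (h : ∀ t ∈ Icc a b, ∀ x ∈ Icc c d, tderiv f (t, x) + xderiv g (t, x) ≤ K) :
    (((∫ t in a..b, g (t, d)) - ∫ t in a..b, g (t, c)) + ∫ x in c..d, f (b, x)) -
        (∫ x in c..d, f (a, x)) ≤ K * ((b - a) * (d - c)) := by
  rw [← integral_divergence_rectangle hf hg]
  refine (integral_rectangle_mono (hf.continuous_tderiv.add hg.continuous_xderiv)
    (continuous_const (y := K)) hab hcd h).trans (le_of_eq ?_)
  simp; ring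

/-! ### Viscous solutions -/

/-- A smooth function with values in `[0, 1]` on `[0, T] × [0, 1]` solving the viscous conservation
law with viscosity `ε`, initial datum `v0` and zero-flux boundary conditions. -/
structure IsViscousSolution (T p ε : ℝ) (v0 : ℝ → ℝ) (u : ℝ × ℝ → ℝ) : Prop where
  smooth : ContDiff ℝ (⊤ : ℕ∞) u
  mem : ∀ t ∈ Icc 0 T, ∀ x ∈ Icc (0 : ℝ) 1, u (t, x) ∈ Icc (0 : ℝ) 1
  eqn : ∀ t ∈ Icc 0 T, ∀ x ∈ Icc (0 : ℝ) 1,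
    tderiv u (t, x) = ε * xderiv (xderiv u) (t, x) - p * ((1 - 2 * u (t, x)) * xderiv u (t, x))
  initial : ∀ x ∈ Icc (0 : ℝ) 1, u (0, x) = v0 x
  flux_left : ∀ t ∈ Icc 0 T, ε * xderiv u (t, 0) = p * J (u (t, 0))
  flux_right : ∀ t ∈ Icc 0 T, ε * xderiv u (t, 1) = p * J (u (t, 1))

lemma J_nonneg {u : ℝ} (hu : u ∈ Icc (0 : ℝ) 1) : 0 ≤ J u :=
  mul_nonneg hu.1 (by linarith [hu.2])

lemma J_le {u : ℝ} : J u ≤ 1 / 4 := by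
  unfold J; nlinarith [sq_nonneg (u - 1 / 2)]

lemma hasDerivAt_J (u : ℝ) : HasDerivAt J (1 - 2 * u) u := by
  have h := (hasDerivAt_id u).mul ((hasDerivAt_id u).const_sub 1)
  refine h.congr_deriv ?_
  simp; ring

lemma contDiff_J {n : WithTop ℕ∞} : ContDiff ℝ n J := contDiff_id.mul (contDiff_const.sub contDiff_id)

namespace IsViscousSolution

lemma of_interior {T p ε : ℝ} (hT : 0 < T) {v0 : ℝ → ℝ} {u : ℝ × ℝ → ℝ}
    (hsm : ContDiff ℝ (⊤ : ℕ∞) u)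
    (hub : ∀ z ∈ Icc (0 : ℝ) T ×ˢ Icc (0 : ℝ) 1, u z ∈ Icc (0 : ℝ) 1)
    (hpde : ∀ t ∈ Ioo 0 T, ∀ x ∈ Ioo (0 : ℝ) 1,
      deriv (fun s => u (s, x)) t
        = ε * deriv (deriv (fun y => u (t, y))) x - p * deriv (fun y => J (u (t, y))) x)
    (hinit : ∀ x ∈ Icc (0 : ℝ) 1, u (0, x) = v0 x)
    (hbc0 : ∀ t ∈ Icc (0 : ℝ) T, ε * deriv (fun y => u (t, y)) 0 - p * J (u (t, 0)) = 0)
    (hbc1 : ∀ t ∈ Icc (0 : ℝ) T, ε * deriv (fun y => u (t, y)) 1 - p * J (u (t, 1)) = 0) :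
    IsViscousSolution T p ε v0 u := by
  have hd : Differentiable ℝ u := hsm.differentiable (by simp)
  have hdx : Differentiable ℝ (xderiv u) := hsm.xderiv.differentiable (by simp)
  have hx : ∀ t x, deriv (fun y => u (t, y)) x = xderiv u (t, x) :=
    fun t x => (hasDerivAt_xderiv (hd _)).deriv
  refine ⟨hsm, fun t ht x hx => hub _ ⟨ht, hx⟩, ?_, hinit, fun t ht => ?_, fun t ht => ?_⟩
  · have hint : ∀ z ∈ Ioo 0 T ×ˢ Ioo (0 : ℝ) 1, tderiv u z
        = ε * xderiv (xderiv u) z - p * ((1 - 2 * u z) * xderiv u z) := by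
      rintro ⟨t, x⟩ ⟨ht, hx'⟩
      have h := hpde t ht x hx'
      have hJ : HasDerivAt (fun y => J (u (t, y))) ((1 - 2 * u (t, x)) * xderiv u (t, x)) x :=
        (hasDerivAt_J _).comp x (hasDerivAt_xderiv (hd (t, x)))
      rw [(hasDerivAt_tderiv (hd _)).deriv, funext (hx t), (hasDerivAt_xderiv (hdx _)).deriv,
        hJ.deriv] at h
      exact h
    have hclos : IsClosed {z | tderiv u z
        = ε * xderiv (xderiv u) z - p * ((1 - 2 * u z) * xderiv u z)} := by
      have h1 := hsm.tderiv.continuous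
      have h2 := hsm.xderiv.continuous
      have h3 := hsm.xderiv.xderiv.continuous
      have h4 := hsm.continuous
      exact isClosed_eq h1 (by fun_prop)
    intro t ht x hx'
    have := closure_minimal hint hclos
    rw [closure_prod_eq, closure_Ioo hT.ne, closure_Ioo zero_ne_one] at this
    exact this ⟨ht, hx'⟩
  · have := hbc0 t ht
    rw [hx] at this; linarith
  · have := hbc1 t ht
    rw [hx] at this; linarith

end IsViscousSolution

namespace IsViscousSolution

variable {T p ε : ℝ} {v0 : ℝ → ℝ} {u : ℝ × ℝ → ℝ}

lemma contDiff_one (hu : IsViscousSolution T p ε v0 u) : ContDiff ℝ 1 u :=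
  hu.smooth.of_le (by exact_mod_cast le_top)

lemma contDiff_one_xderiv (hu : IsViscousSolution T p ε v0 u) : ContDiff ℝ 1 (xderiv u) :=
  hu.smooth.xderiv.of_le (by exact_mod_cast le_top)

lemma contDiff_one_tderiv (hu : IsViscousSolution T p ε v0 u) : ContDiff ℝ 1 (tderiv u) :=
  hu.smooth.tderiv.of_le (by exact_mod_cast le_top)

lemma hasDerivAt_time (hu : IsViscousSolution T p ε v0 u) (t x : ℝ) :
    HasDerivAt (fun s => u (s, x)) (tderiv u (t, x)) t :=
  hasDerivAt_tderiv (hu.contDiff_one.differentiable one_ne_zero _)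

lemma hasDerivAt_space (hu : IsViscousSolution T p ε v0 u) (t x : ℝ) :
    HasDerivAt (fun y => u (t, y)) (xderiv u (t, x)) x :=
  hasDerivAt_xderiv (hu.contDiff_one.differentiable one_ne_zero _)

lemma hasDerivAt_space_xderiv (hu : IsViscousSolution T p ε v0 u) (t x : ℝ) :
    HasDerivAt (fun y => xderiv u (t, y)) (xderiv (xderiv u) (t, x)) x :=
  hasDerivAt_xderiv (hu.contDiff_one_xderiv.differentiable one_ne_zero _)

/-- The divergence of the entropy field `(ψ F(u), ψ (p Q(u) - ε F'(u) ∂ₓu))`. -/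
lemma divergence_entropy (hu : IsViscousSolution T p ε v0 u) {F Q : ℝ → ℝ} (hFQ : IsLaxPair F Q)
    {ψ : ℝ × ℝ → ℝ} (hψ : ContDiff ℝ 1 ψ) {t x : ℝ} (ht : t ∈ Icc 0 T) (hx : x ∈ Icc (0 : ℝ) 1) :
    tderiv (fun z => ψ z * F (u z)) (t, x)
      + xderiv (fun z => ψ z * (p * Q (u z) - ε * (deriv F (u z) * xderiv u z))) (t, x)
    = tderiv ψ (t, x) * F (u (t, x)) + xderiv ψ (t, x) * (p * Q (u (t, x))
        - ε * (deriv F (u (t, x)) * xderiv u (t, x)))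
      - ψ (t, x) * (ε * (deriv (deriv F) (u (t, x)) * xderiv u (t, x) ^ 2)) := by
  obtain ⟨hF, hQ, hQF, -⟩ := hFQ
  have hF1 : ContDiff ℝ 1 (deriv F) := hF.deriv'
  have hdF : Differentiable ℝ F := hF.differentiable two_ne_zero
  have hdQ : Differentiable ℝ Q := hQ.differentiable two_ne_zero
  have hdF1 : Differentiable ℝ (deriv F) := hF1.differentiable one_ne_zero
  have hdu := hu.contDiff_one.differentiable one_ne_zero
  have hdux := hu.contDiff_one_xderiv.differentiable one_ne_zero
  have hdψ := hψ.differentiable one_ne_zero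
  have e1 : tderiv (fun z => ψ z * F (u z)) (t, x) = tderiv ψ (t, x) * F (u (t, x))
      + ψ (t, x) * (deriv F (u (t, x)) * tderiv u (t, x)) := by
    refine tderiv_eq (by fun_prop) ?_
    exact (hasDerivAt_tderiv (hdψ (t, x))).mul
      ((hdF (u (t, x))).hasDerivAt.comp t (hu.hasDerivAt_time t x))
  have e2 : xderiv (fun z => ψ z * (p * Q (u z) - ε * (deriv F (u z) * xderiv u z))) (t, x)
      = xderiv ψ (t, x) * (p * Q (u (t, x)) - ε * (deriv F (u (t, x)) * xderiv u (t, x)))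
        + ψ (t, x) * (p * (deriv Q (u (t, x)) * xderiv u (t, x))
          - ε * ((deriv (deriv F) (u (t, x)) * xderiv u (t, x)) * xderiv u (t, x)
            + deriv F (u (t, x)) * xderiv (xderiv u) (t, x))) := by
    refine xderiv_eq (by fun_prop) ?_
    have hc := hu.hasDerivAt_space t x
    have hQc : HasDerivAt (fun y => Q (u (t, y))) (deriv Q (u (t, x)) * xderiv u (t, x)) x :=
      (hdQ (u (t, x))).hasDerivAt.comp x hc
    have hFc : HasDerivAt (fun y => deriv F (u (t, y)))
        (deriv (deriv F) (u (t, x)) * xderiv u (t, x)) x :=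
      HasDerivAt.comp (h₂ := deriv F) x (hdF1 (u (t, x))).hasDerivAt hc
    exact (hasDerivAt_xderiv (hdψ (t, x))).mul
      ((hQc.const_mul p).sub ((hFc.mul (hu.hasDerivAt_space_xderiv t x)).const_mul ε))
  rw [e1, e2, hu.eqn t ht x hx, hQF _ (hu.mem t ht x hx)]
  ring

lemma contDiff_entropy (hu : IsViscousSolution T p ε v0 u) {F Q : ℝ → ℝ} (hFQ : IsLaxPair F Q)
    {ψ : ℝ × ℝ → ℝ} (hψ : ContDiff ℝ 1 ψ) :
    ContDiff ℝ 1 (fun z => ψ z * F (u z)) ∧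
    ContDiff ℝ 1 (fun z => ψ z * (p * Q (u z) - ε * (deriv F (u z) * xderiv u z))) := by
  obtain ⟨hF, hQ, -, -⟩ := hFQ
  have hF1 : ContDiff ℝ 1 (deriv F) := hF.deriv'
  have hF0 : ContDiff ℝ 1 F := hF.of_le one_le_two
  have hQ0 : ContDiff ℝ 1 Q := hQ.of_le one_le_two
  have := hu.contDiff_one
  have := hu.contDiff_one_xderiv
  constructor <;> fun_prop

/-- Quantitative continuity at the initial time, uniformly in the viscosity. -/
lemma integral_sq_sub_init_le (hu : IsViscousSolution T p ε v0 u) (hε : 0 < ε) (hε1 : ε ≤ 1)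
    (hp : 0 < p) (hv0 : ContDiff ℝ (⊤ : ℕ∞) v0) {B : ℝ}
    (hB : ∀ x ∈ Icc (0 : ℝ) 1, |deriv v0 x| ≤ B) {t : ℝ} (ht : t ∈ Icc 0 T) :
    ∫ x in (0 : ℝ)..1, (u (t, x) - v0 x) ^ 2 ≤ (B ^ 2 + p * B + p) * t := by
  set K : ℝ → ℝ := fun a => a ^ 2 / 2 - a ^ 3 / 3 with hK
  have hK' : ∀ a, HasDerivAt K (J a) a := fun a => by
    refine (((hasDerivAt_pow 2 a).div_const 2).sub ((hasDerivAt_pow 3 a).div_const 3)).congr_deriv ?_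
    simp [J]; ring
  have hKb : ∀ a ∈ Icc (0 : ℝ) 1, 0 ≤ K a ∧ K a ≤ 1 / 2 := by
    rintro a ⟨h0, h1⟩
    have h2 : a ^ 2 * a ≤ a ^ 2 * 1 := by gcongr
    have h3 : a ^ 2 ≤ 1 := by nlinarith
    have h4 : 0 ≤ a ^ 3 := by positivity
    simp only [hK]
    constructor <;> nlinarith
  set f : ℝ × ℝ → ℝ := fun z => (u z - v0 z.2) ^ 2 with hfdef
  set g : ℝ × ℝ → ℝ := fun z => -2 * ((u z - v0 z.2) * (ε * xderiv u z - p * J (u z)))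
    - 2 * p * K (u z) with hgdef
  have hu1 := hu.contDiff_one
  have hux1 := hu.contDiff_one_xderiv
  have hv1 : ContDiff ℝ 1 v0 := hv0.of_le (by exact_mod_cast le_top)
  have hJ1 : ContDiff ℝ 1 J := contDiff_J
  have hK1 : ContDiff ℝ 1 K := by simp only [hK]; fun_prop
  have hf : ContDiff ℝ 1 f := by fun_prop
  have hg : ContDiff ℝ 1 g := by fun_prop
  have hsub : Icc 0 t ⊆ Icc 0 T := Icc_subset_Icc_right ht.2
  have hdiv : ∀ s ∈ Icc 0 t, ∀ x ∈ Icc (0 : ℝ) 1,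
      tderiv f (s, x) + xderiv g (s, x) ≤ B ^ 2 + p * B := by
    intro s hs x hx
    have hsT := hsub hs
    have hdv := (hv1.differentiable one_ne_zero x).hasDerivAt
    have e1 : tderiv f (s, x) = 2 * (u (s, x) - v0 x) * tderiv u (s, x) := by
      refine tderiv_eq (hf.differentiable one_ne_zero _) ?_
      refine (((hu.hasDerivAt_time s x).sub_const (v0 x)).pow 2).congr_deriv ?_
      simp
    have e2 : xderiv g (s, x) = -2 * ((xderiv u (s, x) - deriv v0 x)
          * (ε * xderiv u (s, x) - p * J (u (s, x))) + (u (s, x) - v0 x)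
          * (ε * xderiv (xderiv u) (s, x) - p * ((1 - 2 * u (s, x)) * xderiv u (s, x))))
        - 2 * p * (J (u (s, x)) * xderiv u (s, x)) := by
      refine xderiv_eq (hg.differentiable one_ne_zero _) ?_
      have hc := hu.hasDerivAt_space s x
      exact (((hc.sub hdv).mul (((hu.hasDerivAt_space_xderiv s x).const_mul ε).sub
        (((hasDerivAt_J (u (s, x))).comp x hc).const_mul p))).const_mul (-2)).sub
          (((hK' (u (s, x))).comp x hc).const_mul (2 * p))
    rw [e1, e2, hu.eqn s hsT x hx]
    have hm := hu.mem s hsT x hx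
    have hJ0 := J_nonneg hm
    have hJ4 := J_le (u := u (s, x))
    have hBx := abs_le.1 (hB x hx)
    have hBx2 : deriv v0 x ^ 2 ≤ B ^ 2 := sq_le_sq' hBx.1 hBx.2
    have hB0 : 0 ≤ B := (abs_nonneg _).trans (hB x hx)
    have k1 : -(deriv v0 x) * J (u (s, x)) ≤ B * (1 / 4) := by
      calc -(deriv v0 x) * J (u (s, x)) ≤ B * J (u (s, x)) := by gcongr; linarith [hBx.1]
        _ ≤ B * (1 / 4) := by gcongr
    have k2 : 0 ≤ (1 - ε) * B ^ 2 := by apply mul_nonneg <;> nlinarith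
    have k3 := mul_le_mul_of_nonneg_left k1 hp.le
    have k4 : 0 ≤ ε * (2 * xderiv u (s, x) - deriv v0 x) ^ 2 := by positivity
    have k5 := mul_le_mul_of_nonneg_left hBx2 hε.le
    have k6 := mul_nonneg hp.le hB0
    nlinarith
  have hmain := flux_le_of_divergence_le hf hg ht.1 zero_le_one hdiv
  have hf0 : ∫ x in (0 : ℝ)..1, f (0, x) = 0 := by
    rw [intervalIntegral.integral_congr (g := fun _ => (0 : ℝ))]
    · simp
    · intro x hx
      rw [uIcc_of_le zero_le_one] at hx
      simp [hfdef, hu.initial x hx]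
  have hcont : ∀ c : ℝ, IntervalIntegrable (fun s => g (s, c)) volume 0 t := fun c => by
    have := hg.continuous
    exact (by fun_prop : Continuous fun s => g (s, c)).intervalIntegrable _ _
  have hg1 : -p * t ≤ ∫ s in (0 : ℝ)..t, g (s, 1) := by
    have := intervalIntegral.integral_mono_on (μ := volume) ht.1
      (intervalIntegrable_const (c := -p)) (hcont 1) fun s hs => by
        have h1 := (hKb _ (hu.mem s (hsub hs) 1 (by simp))).2
        have := mul_le_mul_of_nonneg_left h1 hp.le
        simp only [hgdef, hu.flux_right s (hsub hs)]
        linarith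
    simp only [intervalIntegral.integral_const, smul_eq_mul, sub_zero] at this
    linarith
  have hg0 : ∫ s in (0 : ℝ)..t, g (s, 0) ≤ 0 := by
    have := intervalIntegral.integral_mono_on (μ := volume) ht.1 (hcont 0)
      (intervalIntegrable_const (c := (0 : ℝ))) fun s hs => by
        have h1 := (hKb _ (hu.mem s (hsub hs) 0 (by simp))).1
        have := mul_nonneg hp.le h1
        simp only [hgdef, hu.flux_left s (hsub hs)]
        linarith
    simpa using this
  simp only [sub_zero, mul_one] at hmain
  have : ∫ x in (0 : ℝ)..1, f (t, x) = ∫ x in (0 : ℝ)..1, (u (t, x) - v0 x) ^ 2 := rfl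
  linarith

end IsViscousSolution

/-! ### The uniform bound on the total variation in space -/

lemma hasDerivAt_comp_max_neg_zero {k k' : ℝ → ℝ} (hk : ∀ s, 0 ≤ s → HasDerivAt k (k' s) s)
    (h0 : k' 0 = 0) (z : ℝ) :
    HasDerivAt (fun y => k (max (-y) 0)) (-k' (max (-z) 0)) z := by
  rcases lt_trichotomy z 0 with hz | rfl | hz
  · have hm : max (-z) 0 = -z := max_eq_left (by linarith)
    rw [hm]
    have h1 : HasDerivAt (fun y => k (-y)) (-k' (-z)) z := by
      have := (hk (-z) (by linarith)).comp z (hasDerivAt_neg z)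
      exact this.congr_deriv (by ring)
    refine h1.congr_of_eventuallyEq ?_
    filter_upwards [gt_mem_nhds hz] with y hy
    rw [max_eq_left (by linarith)]
  · simp only [neg_zero, max_self, h0]
    have hl : HasDerivWithinAt (fun y => k (max (-y) 0)) 0 (Iic 0) 0 := by
      have := (hk (-0) (by simp)).comp (0 : ℝ) (hasDerivAt_neg 0)
      simp only [neg_zero, h0, zero_mul] at this
      refine this.hasDerivWithinAt.congr (fun y hy => ?_) (by simp)
      rw [max_eq_left (by simpa using hy)]; rfl
    have hr : HasDerivWithinAt (fun y => k (max (-y) 0)) 0 (Ici 0) 0 := by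
      refine (hasDerivWithinAt_const (0 : ℝ) (Ici 0) (k 0)).congr (fun y hy => ?_) (by simp)
      rw [max_eq_right (by simpa using hy)]
    have := hl.union hr
    rwa [Iic_union_Ici, hasDerivWithinAt_univ] at this
  · have hm : max (-z) 0 = 0 := max_eq_right (by linarith)
    rw [hm, h0, neg_zero]
    refine (hasDerivAt_const z (k 0)).congr_of_eventuallyEq ?_
    filter_upwards [lt_mem_nhds hz] with y hy
    rw [max_eq_right (by linarith)]

/-- A `C²` convex approximation of the negative part: there are `η` and its first two derivatives
`η'`, `η''` with `η` close to the negative part and `η''(z) z²` small. -/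
lemma exists_smooth_negPart {δ : ℝ} (hδ : 0 < δ) :
    ∃ η η' η'' : ℝ → ℝ, (∀ z, HasDerivAt η (η' z) z) ∧ (∀ z, HasDerivAt η' (η'' z) z) ∧
      Continuous η'' ∧ (∀ z, 0 ≤ z → η' z = 0) ∧ (∀ z, 0 ≤ η'' z) ∧
      (∀ z, η'' z * z ^ 2 ≤ 6 * δ) ∧ (∀ z, η z ≤ |z|) ∧ (∀ z, |z| ≤ z + 2 * η z + 4 * δ) := by
  set k₀ : ℝ → ℝ := fun s => s ^ 3 / (s + δ) ^ 2 with hk₀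
  set k₁ : ℝ → ℝ := fun s => (s ^ 3 + 3 * s ^ 2 * δ) / (s + δ) ^ 3 with hk₁
  set k₂ : ℝ → ℝ := fun s => 6 * δ ^ 2 * s / (s + δ) ^ 4 with hk₂
  have hd₀ : ∀ s, 0 ≤ s → HasDerivAt k₀ (k₁ s) s := by
    intro s hs
    have hne : s + δ ≠ 0 := by positivity
    have h := (hasDerivAt_pow 3 s).div (((hasDerivAt_id s).add_const δ).pow 2)
      (by simpa using pow_ne_zero 2 hne)
    refine h.congr_deriv ?_
    simp only [hk₁, id, Pi.pow_apply]
    field_simp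
    ring
  have hd₁ : ∀ s, 0 ≤ s → HasDerivAt k₁ (k₂ s) s := by
    intro s hs
    have hne : s + δ ≠ 0 := by positivity
    have h := ((hasDerivAt_pow 3 s).add (((hasDerivAt_pow 2 s).const_mul 3).mul_const δ)).div
      (((hasDerivAt_id s).add_const δ).pow 3) (by simpa using pow_ne_zero 3 hne)
    refine h.congr_deriv ?_
    simp only [hk₂, id, Pi.pow_apply, Pi.add_apply]
    field_simp
    ring
  have hmax : ∀ z : ℝ, 0 ≤ max (-z) 0 := fun z => le_max_right _ _
  have h₂₀ : ∀ s, 0 ≤ s → 0 ≤ k₂ s := fun s hs => by simp only [hk₂]; positivity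
  refine ⟨fun z => k₀ (max (-z) 0), fun z => -k₁ (max (-z) 0), fun z => k₂ (max (-z) 0),
    hasDerivAt_comp_max_neg_zero hd₀ (by simp [hk₁]), fun z => ?_, ?_, fun z hz => ?_,
    fun z => h₂₀ _ (hmax z), fun z => ?_, fun z => ?_, fun z => ?_⟩
  · simpa using (hasDerivAt_comp_max_neg_zero hd₁ (by simp [hk₂]) z).fun_neg
  · simp only [hk₂]
    refine Continuous.div (by fun_prop) (by fun_prop) fun z => ?_
    have := hmax z
    positivity
  · change -k₁ (max (-z) 0) = 0
    rw [max_eq_right (by linarith)]; simp [hk₁]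
  · have hs := hmax z
    have hz : k₂ (max (-z) 0) * z ^ 2 = k₂ (max (-z) 0) * (max (-z) 0) ^ 2 := by
      rcases le_total 0 z with h | h
      · rw [max_eq_right (by linarith)]; simp [hk₂]
      · rw [max_eq_left (by linarith)]; ring
    beta_reduce
    rw [hz]
    generalize max (-z) 0 = s at hs
    simp only [hk₂]
    rw [div_mul_eq_mul_div, div_le_iff₀ (by positivity)]
    have h1 : δ * s ^ 3 ≤ (s + δ) ^ 4 := by
      calc δ * s ^ 3 ≤ (s + δ) * (s + δ) ^ 3 := by gcongr <;> linarith
        _ = (s + δ) ^ 4 := by ring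
    have := mul_le_mul_of_nonneg_left h1 hδ.le
    nlinarith
  · have hs := hmax z
    have hle : max (-z) 0 ≤ |z| := max_le (neg_le_abs z) (abs_nonneg z)
    refine le_trans ?_ hle
    beta_reduce
    generalize max (-z) 0 = s at hs
    simp only [hk₀]
    rw [div_le_iff₀ (by positivity)]
    calc s ^ 3 = s * s ^ 2 := by ring
      _ ≤ s * (s + δ) ^ 2 := by gcongr; linarith
  · have hs := hmax z
    have hle : |z| = z + 2 * max (-z) 0 := by
      rcases le_total 0 z with h | h
      · rw [max_eq_right (by linarith), abs_of_nonneg h]; ring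
      · rw [max_eq_left (by linarith), abs_of_nonpos h]; ring
    rw [hle]
    beta_reduce
    generalize max (-z) 0 = s at hs
    have : s ≤ k₀ s + 2 * δ := by
      simp only [hk₀]
      rw [← sub_le_iff_le_add, le_div_iff₀ (by positivity)]
      nlinarith [mul_nonneg hs hδ.le, pow_pos hδ 3, mul_nonneg hs (sq_nonneg δ)]
    linarith

namespace IsViscousSolution

variable {T p ε : ℝ} {v0 : ℝ → ℝ} {u : ℝ × ℝ → ℝ}

lemma xderiv_init (hu : IsViscousSolution T p ε v0 u) (hv0 : Differentiable ℝ v0) {x : ℝ}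
    (hx : x ∈ Icc (0 : ℝ) 1) : xderiv u (0, x) = deriv v0 x := by
  have h1 : HasDerivWithinAt (fun y => u (0, y)) (xderiv u (0, x)) (Icc 0 1) x :=
    (hu.hasDerivAt_space 0 x).hasDerivWithinAt
  have h2 : HasDerivWithinAt (fun y => u (0, y)) (deriv v0 x) (Icc 0 1) x :=
    (hv0 x).hasDerivAt.hasDerivWithinAt.congr (fun y hy => hu.initial y hy) (hu.initial x hx)
  exact (uniqueDiffOn_Icc zero_lt_one x hx).eq_deriv _ h1 h2

lemma integral_xderiv (hu : IsViscousSolution T p ε v0 u) (t : ℝ) :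
    ∫ x in (0 : ℝ)..1, xderiv u (t, x) = u (t, 1) - u (t, 0) :=
  intervalIntegral.integral_eq_sub_of_hasDerivAt (fun x _ => hu.hasDerivAt_space t x)
    ((by have := hu.contDiff_one_xderiv.continuous; fun_prop :
      Continuous fun x => xderiv u (t, x)).intervalIntegrable _ _)

/-- The total variation in space is bounded uniformly in time and in the viscosity. -/
lemma integral_abs_xderiv_le (hu : IsViscousSolution T p ε v0 u) (hε : 0 < ε) (hp : 0 < p)
    (hv0 : ContDiff ℝ (⊤ : ℕ∞) v0) {B : ℝ} (hB : ∀ x ∈ Icc (0 : ℝ) 1, |deriv v0 x| ≤ B) {t : ℝ}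
    (ht : t ∈ Icc 0 T) : ∫ x in (0 : ℝ)..1, |xderiv u (t, x)| ≤ 1 + 2 * B := by
  have hu1 := hu.contDiff_one
  have hux1 := hu.contDiff_one_xderiv
  have hut1 := hu.contDiff_one_tderiv
  have huxc := hux1.continuous
  have hsub : Icc 0 t ⊆ Icc 0 T := Icc_subset_Icc_right ht.2
  suffices key : ∀ δ > 0, ∫ x in (0 : ℝ)..1, |xderiv u (t, x)|
      ≤ 1 + 2 * B + δ * (4 + 3 * p ^ 2 / ε * t) by
    have hC : 0 < 4 + 3 * p ^ 2 / ε * t := by have := ht.1; positivity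
    refine le_of_forall_pos_le_add fun r hr => ?_
    have := key (r / (4 + 3 * p ^ 2 / ε * t)) (by positivity)
    rwa [div_mul_cancel₀ _ hC.ne'] at this
  intro δ hδ
  obtain ⟨η, η', η'', hη, hη', hη''c, hη'0, hη''0, hη''δ, hηle, hleη⟩ := exists_smooth_negPart hδ
  have hη'1 : ContDiff ℝ 1 η' := contDiff_one_iff_deriv.2
    ⟨fun z => (hη' z).differentiableAt, by rwa [funext fun z => (hη' z).deriv]⟩
  have hη1 : ContDiff ℝ 1 η := contDiff_one_iff_deriv.2
    ⟨fun z => (hη z).differentiableAt, by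
      rw [funext fun z => (hη z).deriv]; exact hη'1.continuous⟩
  set f : ℝ × ℝ → ℝ := fun z => η (xderiv u z) with hfdef
  set g : ℝ × ℝ → ℝ := fun z => -(η' (xderiv u z) * tderiv u z) with hgdef
  have hf : ContDiff ℝ 1 f := by fun_prop
  have hg : ContDiff ℝ 1 g := by fun_prop
  have hdiv : ∀ s ∈ Icc 0 t, ∀ x ∈ Icc (0 : ℝ) 1,
      tderiv f (s, x) + xderiv g (s, x) ≤ 3 / 2 * δ * p ^ 2 / ε := by
    intro s hs x hx
    have e1 : tderiv f (s, x) = η' (xderiv u (s, x)) * tderiv (xderiv u) (s, x) :=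
      tderiv_eq (hf.differentiable one_ne_zero _) ((hη _).comp s
        (hasDerivAt_tderiv (hux1.differentiable one_ne_zero (s, x))))
    have e2 : xderiv g (s, x)
        = -(η'' (xderiv u (s, x)) * xderiv (xderiv u) (s, x) * tderiv u (s, x)
          + η' (xderiv u (s, x)) * xderiv (tderiv u) (s, x)) := by
      have hc : HasDerivAt (fun y => η' (xderiv u (s, y)))
          (η'' (xderiv u (s, x)) * xderiv (xderiv u) (s, x)) x :=
        (hη' _).comp x (hu.hasDerivAt_space_xderiv s x)
      exact xderiv_eq (hg.differentiable one_ne_zero _)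
        (hc.mul (hasDerivAt_xderiv (hut1.differentiable one_ne_zero (s, x)))).fun_neg
    rw [e1, e2, tderiv_xderiv_comm hu.smooth, hu.eqn s (hsub hs) x hx]
    have hm := hu.mem s (hsub hs) x hx
    have h0 := hη''0 (xderiv u (s, x))
    have h1 := hη''δ (xderiv u (s, x))
    generalize xderiv (xderiv u) (s, x) = a
    generalize xderiv u (s, x) = z at *
    generalize u (s, x) = c at *
    have hc2 : (1 - 2 * c) ^ 2 ≤ 1 := by nlinarith [hm.1, hm.2]
    have h2 : -(a * (ε * a - p * ((1 - 2 * c) * z))) ≤ p ^ 2 / (4 * ε) * z ^ 2 := by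
      rw [div_mul_eq_mul_div, le_div_iff₀ (by positivity)]
      have : p ^ 2 * z ^ 2 * (1 - 2 * c) ^ 2 ≤ p ^ 2 * z ^ 2 * 1 := by gcongr
      nlinarith [sq_nonneg (2 * ε * a - p * (1 - 2 * c) * z)]
    calc _ = η'' z * (-(a * (ε * a - p * ((1 - 2 * c) * z)))) := by ring
      _ ≤ η'' z * (p ^ 2 / (4 * ε) * z ^ 2) := by gcongr
      _ = p ^ 2 / (4 * ε) * (η'' z * z ^ 2) := by ring
      _ ≤ p ^ 2 / (4 * ε) * (6 * δ) := by gcongr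
      _ = 3 / 2 * δ * p ^ 2 / ε := by field_simp; ring
  have hmain := flux_le_of_divergence_le hf hg ht.1 zero_le_one hdiv
  have hbdry : ∀ c : ℝ, (∀ s ∈ Icc 0 T, ε * xderiv u (s, c) = p * J (u (s, c))) →
      c ∈ Icc (0 : ℝ) 1 → ∫ s in (0 : ℝ)..t, g (s, c) = 0 := by
    intro c hc hcm
    rw [intervalIntegral.integral_congr (g := fun _ => (0 : ℝ))]
    · simp
    · intro s hs
      rw [uIcc_of_le ht.1] at hs
      have h1 : 0 ≤ ε * xderiv u (s, c) := by
        rw [hc s (hsub hs)]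
        exact mul_nonneg hp.le (J_nonneg (hu.mem s (hsub hs) c hcm))
      simp [hgdef, hη'0 _ (nonneg_of_mul_nonneg_right h1 hε)]
  rw [hbdry 0 hu.flux_left (by simp), hbdry 1 hu.flux_right (by simp)] at hmain
  have hf0 : ∫ x in (0 : ℝ)..1, f (0, x) ≤ B := by
    have := intervalIntegral.integral_mono_on (μ := volume) zero_le_one
      ((by have := hf.continuous; fun_prop :
        Continuous fun x => f (0, x)).intervalIntegrable 0 1)
      (intervalIntegrable_const (c := B)) fun x hx => by
        simp only [hfdef, hu.xderiv_init (hv0.differentiable (by simp)) hx]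
        exact (hηle _).trans (hB x hx)
    simpa using this
  have hfin : ∫ x in (0 : ℝ)..1, |xderiv u (t, x)|
      ≤ ∫ x in (0 : ℝ)..1, (xderiv u (t, x) + 2 * f (t, x) + 4 * δ) := by
    have := hf.continuous
    exact intervalIntegral.integral_mono_on zero_le_one
      ((by fun_prop : Continuous fun x => |xderiv u (t, x)|).intervalIntegrable _ _)
      ((by fun_prop : Continuous fun x =>
        xderiv u (t, x) + 2 * f (t, x) + 4 * δ).intervalIntegrable _ _)
      fun x _ => hleη _
  have hfc := hf.continuous
  have i1 : IntervalIntegrable (fun x => xderiv u (t, x)) volume 0 1 :=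
    (by fun_prop : Continuous fun x => xderiv u (t, x)).intervalIntegrable _ _
  have i2 : IntervalIntegrable (fun x => 2 * f (t, x)) volume 0 1 :=
    (by fun_prop : Continuous fun x => 2 * f (t, x)).intervalIntegrable _ _
  rw [intervalIntegral.integral_add (i1.add i2) intervalIntegrable_const,
    intervalIntegral.integral_add i1 i2, hu.integral_xderiv, intervalIntegral.integral_const_mul]
    at hfin
  simp only [sub_zero, mul_one, intervalIntegral.integral_const, one_smul] at hfin hmain
  have hm1 := (hu.mem t ht 1 (by simp)).2
  have hm0 := (hu.mem t ht 0 (by simp)).1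
  have : δ * (4 + 3 * p ^ 2 / ε * t) = 4 * δ + 2 * (3 / 2 * δ * p ^ 2 / ε * t) := by ring
  linarith

end IsViscousSolution

/-! ### Comparison of the primitives of two viscous solutions -/

lemma IsLocalMax.deriv_eq_zero_and_nonpos {f f' : ℝ → ℝ} {x₀ c : ℝ} (h : IsLocalMax f x₀)
    (hf : ∀ x, HasDerivAt f (f' x) x) (hf' : HasDerivAt f' c x₀) : f' x₀ = 0 ∧ c ≤ 0 := by
  refine ⟨h.hasDerivAt_eq_zero (hf x₀), not_lt.1 fun hc => ?_⟩
  have hd : deriv f = f' := funext fun x => (hf x).deriv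
  have hmin : IsLocalMin f x₀ := isLocalMin_of_deriv_deriv_pos (by rw [hd, hf'.deriv]; exact hc)
    (by rw [hd]; exact h.hasDerivAt_eq_zero (hf x₀)) (hf x₀).continuousAt
  have hconst : f =ᶠ[nhds x₀] fun _ => f x₀ := by
    filter_upwards [h, hmin] with x h1 h2 using le_antisymm h1 h2
  have h0 : f' =ᶠ[nhds x₀] fun _ => 0 := by
    rw [← hd]
    simpa using hconst.deriv
  have : c = 0 := hf'.unique ((hasDerivAt_const x₀ (0 : ℝ)).congr_of_eventuallyEq h0)
  exact hc.ne' this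

lemma nonneg_of_hasDerivAt_of_forall_le {f : ℝ → ℝ} {a t c : ℝ} (hat : a < t)
    (hf : HasDerivAt f c t) (h : ∀ s ∈ Ico a t, f s ≤ f t) : 0 ≤ c := by
  have h1 : Tendsto (slope f t) (nhdsWithin t (Iio t)) (nhds c) :=
    (hasDerivAt_iff_tendsto_slope.1 hf).mono_left (nhdsWithin_mono _ fun s hs => ne_of_lt hs)
  refine ge_of_tendsto h1 ?_
  filter_upwards [Ico_mem_nhdsLT hat] with s hs
  rw [slope_def_field]
  exact div_nonneg_of_nonpos (by linarith [h s hs]) (by linarith [hs.2])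

/-- The primitive in space, vanishing at `x = 0`. -/
noncomputable def spacePrimitive (u : ℝ × ℝ → ℝ) (z : ℝ × ℝ) : ℝ := ∫ y in (0 : ℝ)..z.2, u (z.1, y)

namespace IsViscousSolution

variable {T p ε δ : ℝ} {v0 : ℝ → ℝ} {u v : ℝ × ℝ → ℝ}

lemma continuous_slice (hu : IsViscousSolution T p ε v0 u) (t : ℝ) :
    Continuous fun x => u (t, x) := by
  have := hu.smooth.continuous
  fun_prop

lemma continuous_spacePrimitive (hu : IsViscousSolution T p ε v0 u) :
    Continuous (spacePrimitive u) :=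
  intervalIntegral.continuous_parametric_primitive_of_continuous (f := fun t x => u (t, x))
    (a₀ := 0) (by simpa [Function.uncurry_def] using hu.smooth.continuous)

lemma hasDerivAt_spacePrimitive (hu : IsViscousSolution T p ε v0 u) (t x : ℝ) :
    HasDerivAt (fun y => spacePrimitive u (t, y)) (u (t, x)) x :=
  (hu.continuous_slice t).integral_hasStrictDerivAt 0 x |>.hasDerivAt

lemma spacePrimitive_zero (t : ℝ) : spacePrimitive u (t, 0) = 0 := by simp [spacePrimitive]

lemma spacePrimitive_sub_mem (hu : IsViscousSolution T p ε v0 u) {t x y : ℝ} (ht : t ∈ Icc 0 T)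
    (hx : x ∈ Icc (0 : ℝ) 1) (hy : y ∈ Icc (0 : ℝ) 1) (hxy : x ≤ y) :
    0 ≤ spacePrimitive u (t, y) - spacePrimitive u (t, x) ∧
      spacePrimitive u (t, y) - spacePrimitive u (t, x) ≤ y - x := by
  have hi : ∀ a b, IntervalIntegrable (fun x => u (t, x)) volume a b :=
    fun a b => (hu.continuous_slice t).intervalIntegrable a b
  have he : spacePrimitive u (t, y) - spacePrimitive u (t, x) = ∫ s in x..y, u (t, s) :=
    intervalIntegral.integral_interval_sub_left (hi _ _) (hi _ _)
  have hm : ∀ s ∈ Icc x y, u (t, s) ∈ Icc (0 : ℝ) 1 :=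
    fun s hs => hu.mem t ht s ⟨hx.1.trans hs.1, hs.2.trans hy.2⟩
  rw [he]
  refine ⟨intervalIntegral.integral_nonneg hxy fun s hs => (hm s hs).1, ?_⟩
  have := intervalIntegral.integral_mono_on hxy (hi _ _)
    (intervalIntegrable_const (c := (1 : ℝ))) fun s hs => (hm s hs).2
  simpa using this

lemma spacePrimitive_sub_le_abs (hu : IsViscousSolution T p ε v0 u) {t x y : ℝ} (ht : t ∈ Icc 0 T)
    (hx : x ∈ Icc (0 : ℝ) 1) (hy : y ∈ Icc (0 : ℝ) 1) :
    spacePrimitive u (t, x) - spacePrimitive u (t, y) ≤ |x - y| := by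
  rcases le_total x y with h | h
  · linarith [(hu.spacePrimitive_sub_mem ht hx hy h).1, abs_nonneg (x - y)]
  · linarith [(hu.spacePrimitive_sub_mem ht hy hx h).2, le_abs_self (x - y)]

/-- The primitive evolves by the flux. -/
lemma spacePrimitive_sub_eq (hu : IsViscousSolution T p ε v0 u) {t x : ℝ} (ht : t ∈ Icc 0 T)
    (hx : x ∈ Icc (0 : ℝ) 1) : spacePrimitive u (t, x) - spacePrimitive u (0, x)
      = ∫ s in (0 : ℝ)..t, (ε * xderiv u (s, x) - p * J (u (s, x))) := by
  set g : ℝ × ℝ → ℝ := fun z => -(ε * xderiv u z - p * J (u z)) with hgdef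
  have hu1 := hu.contDiff_one
  have hux1 := hu.contDiff_one_xderiv
  have hJ1 : ContDiff ℝ 1 J := contDiff_J
  have hg : ContDiff ℝ 1 g := by fun_prop
  have hdiv := integral_divergence_rectangle hu.contDiff_one hg 0 t 0 x
  have hz : ∫ s in (0 : ℝ)..t, ∫ y in (0 : ℝ)..x, (tderiv u (s, y) + xderiv g (s, y)) = 0 := by
    rw [intervalIntegral.integral_congr (g := fun _ => (0 : ℝ))]
    · simp
    · intro s hs
      rw [uIcc_of_le ht.1] at hs
      change ∫ y in (0 : ℝ)..x, (tderiv u (s, y) + xderiv g (s, y)) = 0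
      rw [intervalIntegral.integral_congr (g := fun _ => (0 : ℝ))]
      · simp
      · intro y hy
        rw [uIcc_of_le hx.1] at hy
        have e2 : xderiv g (s, y) = -(ε * xderiv (xderiv u) (s, y)
            - p * ((1 - 2 * u (s, y)) * xderiv u (s, y))) := by
          refine xderiv_eq (hg.differentiable one_ne_zero _) ?_
          exact (((hu.hasDerivAt_space_xderiv s y).const_mul ε).sub
            (((hasDerivAt_J (u (s, y))).comp y (hu.hasDerivAt_space s y)).const_mul p)).fun_neg
        change tderiv u (s, y) + xderiv g (s, y) = 0
        rw [e2, hu.eqn s ⟨hs.1, hs.2.trans ht.2⟩ y ⟨hy.1, hy.2.trans hx.2⟩]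
        ring
  have hg0 : ∫ s in (0 : ℝ)..t, g (s, 0) = 0 := by
    rw [intervalIntegral.integral_congr (g := fun _ => (0 : ℝ))]
    · simp
    · intro s hs
      rw [uIcc_of_le ht.1] at hs
      simp [hgdef, hu.flux_left s ⟨hs.1, hs.2.trans ht.2⟩]
  have hgx : ∫ s in (0 : ℝ)..t, g (s, x)
      = -∫ s in (0 : ℝ)..t, (ε * xderiv u (s, x) - p * J (u (s, x))) := by
    rw [← intervalIntegral.integral_neg]
  rw [hz, hg0, hgx] at hdiv
  simp only [spacePrimitive]
  linarith

lemma spacePrimitive_init (hu : IsViscousSolution T p ε v0 u) {x : ℝ} (hx : x ∈ Icc (0 : ℝ) 1) :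
    spacePrimitive u (0, x) = ∫ y in (0 : ℝ)..x, v0 y := by
  refine intervalIntegral.integral_congr fun y hy => ?_
  rw [uIcc_of_le hx.1] at hy
  exact hu.initial y ⟨hy.1, hy.2.trans hx.2⟩

/-- Conservation of mass. -/
lemma spacePrimitive_one (hu : IsViscousSolution T p ε v0 u) {t : ℝ} (ht : t ∈ Icc 0 T) :
    spacePrimitive u (t, 1) = ∫ y in (0 : ℝ)..1, v0 y := by
  rw [← hu.spacePrimitive_init (by simp), ← sub_eq_zero, hu.spacePrimitive_sub_eq ht (by simp),
    intervalIntegral.integral_congr (g := fun _ => (0 : ℝ))]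
  · simp
  · intro s hs
    rw [uIcc_of_le ht.1] at hs
    simp [hu.flux_right s ⟨hs.1, hs.2.trans ht.2⟩]

/-- Doubling of variables: the maximum principle compares the primitives of two solutions with
different viscosities. -/
lemma spacePrimitive_sub_le_of_lt (hu : IsViscousSolution T p ε v0 u)
    (hv : IsViscousSolution T p δ v0 v) (hε : 0 < ε) (hδ : 0 < δ) {α K : ℝ} (hα : 0 < α)
    (hK : (ε + δ) / α < K) {t x : ℝ} (ht : t ∈ Icc 0 T) (hx : x ∈ Icc (0 : ℝ) 1) :
    spacePrimitive u (t, x) - spacePrimitive v (t, x) ≤ α / 2 + K * T := by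
  have hK0 : 0 < K := lt_trans (by positivity) hK
  set U := spacePrimitive u with hU
  set V := spacePrimitive v with hV
  set Φ : ℝ × ℝ × ℝ → ℝ := fun q =>
    U (q.1, q.2.1) - V (q.1, q.2.2) - (q.2.1 - q.2.2) ^ 2 / (2 * α) - K * q.1 with hΦ
  have hUc : Continuous U := hu.continuous_spacePrimitive
  have hVc : Continuous V := hv.continuous_spacePrimitive
  have hΦc : Continuous Φ := by fun_prop
  obtain ⟨⟨t₀, x₀, y₀⟩, ⟨ht₀, hx₀, hy₀⟩, hmax⟩ :=
    (isCompact_Icc.prod (isCompact_Icc.prod isCompact_Icc) :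
      IsCompact (Icc 0 T ×ˢ (Icc (0 : ℝ) 1 ×ˢ Icc (0 : ℝ) 1))).exists_isMaxOn
      ⟨(t, x, x), ht, hx, hx⟩ hΦc.continuousOn
  simp only at ht₀ hx₀ hy₀
  have hmax' : ∀ s ∈ Icc 0 T, ∀ a ∈ Icc (0 : ℝ) 1, ∀ b ∈ Icc (0 : ℝ) 1,
      Φ (s, a, b) ≤ Φ (t₀, x₀, y₀) := fun s hs a ha b hb => hmax ⟨hs, ha, hb⟩
  have hpar : U (t₀, x₀) - V (t₀, y₀) ≤ |x₀ - y₀| → Φ (t₀, x₀, y₀) ≤ α / 2 := by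
    intro h
    have h1 : |x₀ - y₀| - |x₀ - y₀| ^ 2 / (2 * α) ≤ α / 2 := by
      rw [sub_le_iff_le_add, ← sub_le_iff_le_add', le_div_iff₀ (by positivity)]
      nlinarith [sq_nonneg (|x₀ - y₀| - α)]
    have h2 := mul_nonneg hK0.le ht₀.1
    rw [sq_abs] at h1
    simp only [hΦ]
    linarith
  have hle : Φ (t₀, x₀, y₀) ≤ α / 2 := by
    have hV0 : V (t₀, 0) = 0 := spacePrimitive_zero t₀
    have hU0 : U (t₀, 0) = 0 := spacePrimitive_zero t₀
    have hUV1 : U (t₀, 1) = V (t₀, 1) :=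
      (hu.spacePrimitive_one ht₀).trans (hv.spacePrimitive_one ht₀).symm
    have h0m : (0 : ℝ) ∈ Icc (0 : ℝ) 1 := by simp
    have h1m : (1 : ℝ) ∈ Icc (0 : ℝ) 1 := by simp
    rcases eq_or_lt_of_le ht₀.1 with htz | htz
    · apply hpar
      have h1 : U (t₀, x₀) = V (t₀, x₀) := by
        rw [← htz]
        exact (hu.spacePrimitive_init hx₀).trans (hv.spacePrimitive_init hx₀).symm
      rw [h1]
      exact hv.spacePrimitive_sub_le_abs ht₀ hx₀ hy₀
    rcases eq_or_lt_of_le hx₀.1 with hxz | hxz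
    · apply hpar
      rw [← hxz, hU0.trans hV0.symm]
      exact hv.spacePrimitive_sub_le_abs ht₀ h0m hy₀
    rcases eq_or_lt_of_le hx₀.2 with hxo | hxo
    · apply hpar
      rw [hxo, hUV1]
      exact hv.spacePrimitive_sub_le_abs ht₀ h1m hy₀
    rcases eq_or_lt_of_le hy₀.1 with hyz | hyz
    · apply hpar
      rw [← hyz, hV0.trans hU0.symm]
      exact hu.spacePrimitive_sub_le_abs ht₀ hx₀ h0m
    rcases eq_or_lt_of_le hy₀.2 with hyo | hyo
    · apply hpar
      rw [hyo, ← hUV1]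
      exact hu.spacePrimitive_sub_le_abs ht₀ hx₀ h1m
    exfalso
    have hsq : ∀ c a : ℝ, HasDerivAt (fun b => (b - c) ^ 2 / (2 * α)) ((a - c) / α) a := by
      intro c a
      refine ((((hasDerivAt_id a).sub_const c).pow 2).div_const (2 * α)).congr_deriv ?_
      simp only [id]
      field_simp
      simp [mul_comm]
    have hlin : ∀ c a : ℝ, HasDerivAt (fun b => (b - c) / α) (1 / α) a := fun c a =>
      ((hasDerivAt_id a).sub_const c).div_const α
    have hspaceU := IsLocalMax.deriv_eq_zero_and_nonpos
      (f := fun a => U (t₀, a) - (a - y₀) ^ 2 / (2 * α))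
      (f' := fun a => u (t₀, a) - (a - y₀) / α) (x₀ := x₀) (c := xderiv u (t₀, x₀) - 1 / α)
      (by
        filter_upwards [Icc_mem_nhds hxz hxo] with a ha
        have := hmax' t₀ ht₀ a ha y₀ hy₀
        simp only [hΦ] at this
        linarith)
      (fun a => (hu.hasDerivAt_spacePrimitive t₀ a).sub (hsq y₀ a))
      ((hu.hasDerivAt_space t₀ x₀).sub (hlin y₀ x₀))
    have hspaceV := IsLocalMax.deriv_eq_zero_and_nonpos
      (f := fun b => -V (t₀, b) - (b - x₀) ^ 2 / (2 * α))
      (f' := fun b => -v (t₀, b) - (b - x₀) / α) (x₀ := y₀) (c := -xderiv v (t₀, y₀) - 1 / α)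
      (by
        filter_upwards [Icc_mem_nhds hyz hyo] with b hb
        have := hmax' t₀ ht₀ x₀ hx₀ b hb
        simp only [hΦ] at this
        rw [sub_sq_comm b, sub_sq_comm y₀]
        linarith)
      (fun b => (hv.hasDerivAt_spacePrimitive t₀ b).fun_neg.sub (hsq x₀ b))
      ((hv.hasDerivAt_space t₀ y₀).fun_neg.sub (hlin x₀ y₀))
    set q : ℝ → ℝ := fun s => (ε * xderiv u (s, x₀) - p * J (u (s, x₀)))
      - (δ * xderiv v (s, y₀) - p * J (v (s, y₀))) - K with hq
    have huc := hu.smooth.continuous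
    have hvc := hv.smooth.continuous
    have huxc := hu.smooth.xderiv.continuous
    have hvxc := hv.smooth.xderiv.continuous
    have hJc : Continuous J := (contDiff_J (n := 0)).continuous
    have hqc : Continuous q := by fun_prop
    have hqi : ∀ s ∈ Icc 0 T, ∫ r in (0 : ℝ)..s, q r
        = (U (s, x₀) - U (0, x₀)) - (V (s, y₀) - V (0, y₀)) - K * s := by
      intro s hs
      rw [hu.spacePrimitive_sub_eq hs hx₀, hv.spacePrimitive_sub_eq hs hy₀]
      simp only [hq]
      rw [intervalIntegral.integral_sub
          ((by fun_prop : Continuous _).intervalIntegrable _ _) intervalIntegrable_const,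
        intervalIntegral.integral_sub ((by fun_prop : Continuous _).intervalIntegrable _ _)
          ((by fun_prop : Continuous _).intervalIntegrable _ _)]
      simp [mul_comm]
    have htime : 0 ≤ q t₀ := by
      refine nonneg_of_hasDerivAt_of_forall_le htz
        (hqc.integral_hasStrictDerivAt 0 t₀).hasDerivAt fun s hs => ?_
      have hsT : s ∈ Icc 0 T := ⟨hs.1, hs.2.le.trans ht₀.2⟩
      rw [hqi s hsT, hqi t₀ ht₀]
      have := hmax' s hsT x₀ hx₀ y₀ hy₀
      simp only [hΦ] at this
      linarith
    have huv : u (t₀, x₀) = v (t₀, y₀) := by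
      have h1 := hspaceU.1
      have h2 := hspaceV.1
      have h3 : (y₀ - x₀) / α = -((x₀ - y₀) / α) := by ring
      linarith
    have h1 := mul_le_mul_of_nonneg_left hspaceU.2 hε.le
    have h2 := mul_le_mul_of_nonneg_left hspaceV.2 hδ.le
    have h3 : (ε + δ) / α = ε * (1 / α) + δ * (1 / α) := by ring
    simp only [hq, huv] at htime
    linarith
  have hfin := hmax' t ht x hx x hx
  have hKt : K * t ≤ K * T := by gcongr; exact ht.2
  have hval : Φ (t, x, x) = U (t, x) - V (t, x) - K * t := by simp [hΦ]
  linarith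

lemma abs_spacePrimitive_sub_le (hu : IsViscousSolution T p ε v0 u)
    (hv : IsViscousSolution T p δ v0 v) (hε : 0 < ε) (hδ : 0 < δ) {t x : ℝ} (ht : t ∈ Icc 0 T)
    (hx : x ∈ Icc (0 : ℝ) 1) :
    |spacePrimitive u (t, x) - spacePrimitive v (t, x)| ≤ (1 + 2 * T) * √(ε + δ) := by
  have hs : 0 < √(ε + δ) := Real.sqrt_pos.2 (by linarith)
  have hK : (ε + δ) / √(ε + δ) < 2 * √(ε + δ) := by rw [Real.div_sqrt]; linarith
  have h1 := hu.spacePrimitive_sub_le_of_lt hv hε hδ hs hK ht hx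
  have h2 := hv.spacePrimitive_sub_le_of_lt hu hδ hε hs (by rwa [add_comm δ ε]) ht hx
  rw [abs_le]
  constructor <;> nlinarith

/-- Solutions with small viscosities are close in `L²` in space, uniformly in time. -/
lemma integral_sq_sub_le (hu : IsViscousSolution T p ε v0 u) (hv : IsViscousSolution T p δ v0 v)
    (hε : 0 < ε) (hδ : 0 < δ) (hp : 0 < p) (hv0 : ContDiff ℝ (⊤ : ℕ∞) v0) {B : ℝ}
    (hB : ∀ x ∈ Icc (0 : ℝ) 1, |deriv v0 x| ≤ B) {t : ℝ} (ht : t ∈ Icc 0 T) :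
    ∫ x in (0 : ℝ)..1, (u (t, x) - v (t, x)) ^ 2
      ≤ (1 + 2 * T) * (2 * (1 + 2 * B)) * √(ε + δ) := by
  set f : ℝ → ℝ := fun x => spacePrimitive u (t, x) - spacePrimitive v (t, x) with hf
  have hfd : ∀ x, HasDerivAt f (u (t, x) - v (t, x)) x := fun x =>
    (hu.hasDerivAt_spacePrimitive t x).sub (hv.hasDerivAt_spacePrimitive t x)
  have huc := hu.smooth.continuous
  have hvc := hv.smooth.continuous
  have huxc := hu.smooth.xderiv.continuous
  have hvxc := hv.smooth.xderiv.continuous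
  have hfc : Continuous f := continuous_iff_continuousAt.2 fun x => (hfd x).continuousAt
  have hparts := intervalIntegral.integral_mul_deriv_eq_deriv_mul (a := 0) (b := 1)
    (u := fun x => u (t, x) - v (t, x)) (v := f)
    (u' := fun x => xderiv u (t, x) - xderiv v (t, x)) (v' := fun x => u (t, x) - v (t, x))
    (fun x _ => (hu.hasDerivAt_space t x).sub (hv.hasDerivAt_space t x)) (fun x _ => hfd x)
    ((by fun_prop : Continuous _).intervalIntegrable _ _)
    ((by fun_prop : Continuous _).intervalIntegrable _ _)
  have hf0 : f 0 = 0 := by simp [hf, spacePrimitive_zero]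
  have hf1 : f 1 = 0 := by simp [hf, hu.spacePrimitive_one ht, hv.spacePrimitive_one ht]
  rw [hf0, hf1] at hparts
  have hTn : 0 ≤ T := ht.1.trans ht.2
  set C := (1 + 2 * T) * √(ε + δ) with hC
  have hC0 : 0 ≤ C := by positivity
  have iu : IntervalIntegrable (fun x => |xderiv u (t, x)|) volume 0 1 :=
    (by fun_prop : Continuous fun x => |xderiv u (t, x)|).intervalIntegrable _ _
  have iv : IntervalIntegrable (fun x => |xderiv v (t, x)|) volume 0 1 :=
    (by fun_prop : Continuous fun x => |xderiv v (t, x)|).intervalIntegrable _ _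
  calc ∫ x in (0 : ℝ)..1, (u (t, x) - v (t, x)) ^ 2
      = ∫ x in (0 : ℝ)..1, -((xderiv u (t, x) - xderiv v (t, x)) * f x) := by
        rw [intervalIntegral.integral_neg]
        simp only [sq]
        rw [hparts]; ring
    _ ≤ ∫ x in (0 : ℝ)..1, C * (|xderiv u (t, x)| + |xderiv v (t, x)|) := by
        refine intervalIntegral.integral_mono_on zero_le_one
          ((by fun_prop : Continuous _).intervalIntegrable _ _)
          ((iu.add iv).const_mul C) fun x hx => ?_
        have h1 := hu.abs_spacePrimitive_sub_le hv hε hδ ht hx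
        calc -((xderiv u (t, x) - xderiv v (t, x)) * f x)
            ≤ |(xderiv u (t, x) - xderiv v (t, x)) * f x| := neg_le_abs _
          _ = |f x| * |xderiv u (t, x) - xderiv v (t, x)| := by rw [abs_mul, mul_comm]
          _ ≤ C * (|xderiv u (t, x)| + |xderiv v (t, x)|) := by
              gcongr
              exact abs_sub _ _
    _ = C * ((∫ x in (0 : ℝ)..1, |xderiv u (t, x)|) + ∫ x in (0 : ℝ)..1, |xderiv v (t, x)|) := by
        rw [intervalIntegral.integral_const_mul, intervalIntegral.integral_add iu iv]
    _ ≤ C * ((1 + 2 * B) + (1 + 2 * B)) := by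
        gcongr
        · exact hu.integral_abs_xderiv_le hε hp hv0 hB ht
        · exact hv.integral_abs_xderiv_le hδ hp hv0 hB ht
    _ = (1 + 2 * T) * (2 * (1 + 2 * B)) * √(ε + δ) := by rw [hC]; ring

end IsViscousSolution

/-! ### The limit of the viscous solutions -/

lemma exists_tendstoInMeasure_of_integral_abs_sub_le {α : Type*} {mα : MeasurableSpace α}
    {μ : Measure α} {f : ℝ → α → ℝ} (hf : ∀ ε > 0, Integrable (f ε) μ)
    (h : ∀ η > 0, ∃ d > 0, ∀ ε ∈ Ioo 0 d, ∀ δ ∈ Ioo 0 d, ∫ z, |f ε z - f δ z| ∂μ ≤ η) :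
    ∃ w : α → ℝ, Measurable w ∧ TendstoInMeasure μ f (nhdsWithin 0 (Ioi 0)) w := by
  classical
  let g : ℝ → Lp ℝ 1 μ := fun ε => if hε : 0 < ε then (hf ε hε).toL1 (f ε) else 0
  have hg : ∀ ε > 0, g ε =ᵐ[μ] f ε := fun ε hε => by
    simp only [g, dif_pos hε]
    exact (hf ε hε).coeFn_toL1
  have hc : Cauchy (map g (nhdsWithin 0 (Ioi 0))) := by
    refine Metric.cauchy_iff.2 ⟨inferInstance, fun η hη => ?_⟩
    obtain ⟨d, hd, hd'⟩ := h (η / 2) (half_pos hη)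
    refine ⟨g '' Ioo 0 d, image_mem_map (Ioo_mem_nhdsGT hd), ?_⟩
    rintro _ ⟨ε, hε, rfl⟩ _ ⟨δ, hδ, rfl⟩
    have : dist (g ε) (g δ) = ∫ z, |f ε z - f δ z| ∂μ := by
      rw [L1.dist_eq_integral_dist]
      refine integral_congr_ae ?_
      filter_upwards [hg ε hε.1, hg δ hδ.1] with z h1 h2
      rw [h1, h2, Real.dist_eq]
    rw [this]
    linarith [hd' ε hε δ hδ]
  obtain ⟨w, hw⟩ := cauchy_map_iff_exists_tendsto.1 hc
  refine ⟨w, (Lp.stronglyMeasurable w).measurable, ?_⟩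
  refine (tendstoInMeasure_of_tendsto_Lp hw).congr' ?_ EventuallyEq.rfl
  filter_upwards [self_mem_nhdsWithin] with ε hε using hg ε hε

lemma setIntegral_rectangle {f : ℝ × ℝ → ℝ} {a b c d : ℝ} (hab : a ≤ b) (hcd : c ≤ d)
    (hf : IntegrableOn f (Icc a b ×ˢ Icc c d)) :
    ∫ z in Icc a b ×ˢ Icc c d, f z = ∫ t in a..b, ∫ x in c..d, f (t, x) := by
  rw [Measure.volume_eq_prod] at hf ⊢
  rw [setIntegral_prod f hf, integral_of_le hab, integral_Icc_eq_integral_Ioc]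
  simp only [integral_of_le hcd, integral_Icc_eq_integral_Ioc]

lemma Continuous.integrableOn_rectangle {f : ℝ × ℝ → ℝ} (hf : Continuous f) (a b c d : ℝ) :
    IntegrableOn f (Icc a b ×ˢ Icc c d) :=
  hf.continuousOn.integrableOn_compact (isCompact_Icc.prod isCompact_Icc)

/-- A measurable function into which a sequence of viscous solutions with vanishing viscosity
converges almost everywhere, the viscous fluxes converging to zero on almost every vertical line. -/
structure IsViscousLimit (T p : ℝ) (v0 : ℝ → ℝ) (M : ℝ) (e : ℕ → ℝ) (u : ℕ → ℝ × ℝ → ℝ)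
    (w : ℝ × ℝ → ℝ) : Prop where
  sol : ∀ n, IsViscousSolution T p (e n) v0 (u n)
  pos : ∀ n, 0 < e n
  le_one : ∀ n, e n ≤ 1
  tendsto_zero : Tendsto e atTop (nhds 0)
  total_variation : ∀ n, ∀ t ∈ Icc 0 T, ∫ x in (0 : ℝ)..1, |xderiv (u n) (t, x)| ≤ M
  measurable : Measurable w
  mem : ∀ z, w z ∈ Icc (0 : ℝ) 1
  tendsto_ae : ∀ᵐ z ∂(volume.restrict (Icc (0 : ℝ) T ×ˢ Icc (0 : ℝ) 1)),
    Tendsto (fun n => u n z) atTop (nhds (w z))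
  tendsto_flux : ∀ᵐ x ∂(volume.restrict (Icc (0 : ℝ) 1)),
    Tendsto (fun n => e n * ∫ t in (0 : ℝ)..T, |xderiv (u n) (t, x)|) atTop (nhds 0)

lemma abs_le_add_sq_div {κ : ℝ} (hκ : 0 < κ) (a : ℝ) : |a| ≤ κ + a ^ 2 / κ := by
  have : κ + a ^ 2 / κ - |a| = ((κ - |a|) ^ 2 + κ * |a|) / κ := by
    rw [← sq_abs a]; field_simp; ring
  have h2 : 0 ≤ ((κ - |a|) ^ 2 + κ * |a|) / κ := by positivity
  linarith

/-- A bound on an `L¹` norm by an `L²` norm, in Young form. -/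
lemma integral_abs_le_of_integral_sq_le {f : ℝ → ℝ} {κ K : ℝ} (hκ : 0 < κ)
    (hf : IntervalIntegrable f volume 0 1) (hf2 : IntervalIntegrable (fun x => f x ^ 2) volume 0 1)
    (h : ∫ x in (0 : ℝ)..1, f x ^ 2 ≤ K) : ∫ x in (0 : ℝ)..1, |f x| ≤ κ + K / κ := by
  calc ∫ x in (0 : ℝ)..1, |f x| ≤ ∫ x in (0 : ℝ)..1, (κ + f x ^ 2 / κ) :=
        integral_mono_on zero_le_one hf.abs (intervalIntegrable_const.add (hf2.div_const κ))
          fun x _ => abs_le_add_sq_div hκ (f x)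
    _ = κ + (∫ x in (0 : ℝ)..1, f x ^ 2) / κ := by
        rw [integral_add intervalIntegrable_const (hf2.div_const κ)]
        simp
    _ ≤ κ + K / κ := by gcongr

lemma exists_tendstoInMeasure_viscous {T p B : ℝ} (hT : 0 < T) (hp : 0 < p) {v0 : ℝ → ℝ}
    (hv0 : ContDiff ℝ (⊤ : ℕ∞) v0)
    (hB : ∀ x ∈ Icc (0 : ℝ) 1, |deriv v0 x| ≤ B) {u : ℝ → ℝ × ℝ → ℝ}
    (hu : ∀ ε > 0, IsViscousSolution T p ε v0 (u ε)) :
    ∃ w : ℝ × ℝ → ℝ, Measurable w ∧ (∀ z, w z ∈ Icc (0 : ℝ) 1) ∧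
      TendstoInMeasure (volume.restrict (Icc (0 : ℝ) T ×ˢ Icc (0 : ℝ) 1)) u
        (nhdsWithin 0 (Ioi 0)) w := by
  have hB0 : 0 ≤ B := (abs_nonneg _).trans (hB 0 (by simp))
  have hint : ∀ ε > 0, Integrable (u ε) (volume.restrict (Icc (0 : ℝ) T ×ˢ Icc (0 : ℝ) 1)) :=
    fun ε hε => (hu ε hε).smooth.continuous.integrableOn_rectangle _ _ _ _
  obtain ⟨w, hwm, hw⟩ := exists_tendstoInMeasure_of_integral_abs_sub_le hint (by
    intro η hη
    set C := (1 + 2 * T) * (2 * (1 + 2 * B)) with hC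
    have hC0 : 0 < C := by positivity
    set κ := η / (2 * T) with hκ
    have hκ0 : 0 < κ := by positivity
    refine ⟨(κ ^ 2 / C) ^ 2 / 2, by positivity, fun ε hε δ hδ => ?_⟩
    have hcε := (hu ε hε.1).smooth.continuous
    have hcδ := (hu δ hδ.1).smooth.continuous
    have hc : Continuous fun z => |u ε z - u δ z| := (hcε.sub hcδ).abs
    rw [setIntegral_rectangle hT.le zero_le_one (hc.integrableOn_rectangle _ _ _ _)]
    have hs : √(ε + δ) ≤ κ ^ 2 / C := by
      rw [Real.sqrt_le_left (by positivity)]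
      linarith [hε.2, hδ.2]
    have hpt : ∀ t ∈ Icc 0 T, ∫ x in (0 : ℝ)..1, |u ε (t, x) - u δ (t, x)| ≤ 2 * κ := by
      intro t ht
      have h2 := (hu ε hε.1).integral_sq_sub_le (hu δ hδ.1) hε.1 hδ.1 hp hv0 hB ht
      have hcs := ((hu ε hε.1).continuous_slice t).sub ((hu δ hδ.1).continuous_slice t)
      have h3 := integral_abs_le_of_integral_sq_le hκ0 (hcs.intervalIntegrable 0 1)
        ((hcs.pow 2).intervalIntegrable 0 1) h2
      refine h3.trans ?_
      have : C * √(ε + δ) / κ ≤ C * (κ ^ 2 / C) / κ := by gcongr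
      have h4 : C * (κ ^ 2 / C) / κ = κ := by field_simp
      linarith
    calc ∫ t in (0 : ℝ)..T, ∫ x in (0 : ℝ)..1, |u ε (t, x) - u δ (t, x)|
        ≤ ∫ t in (0 : ℝ)..T, 2 * κ :=
          integral_mono_on hT.le ((continuous_integral_snd hc 0 1).intervalIntegrable _ _)
            intervalIntegrable_const hpt
      _ = η := by
          rw [intervalIntegral.integral_const, smul_eq_mul, hκ]; field_simp; ring)
  obtain ⟨ns, hns, hae⟩ := hw.exists_seq_tendsto_ae'
  have hmem : ∀ᵐ z ∂(volume.restrict (Icc (0 : ℝ) T ×ˢ Icc (0 : ℝ) 1)), w z ∈ Icc (0 : ℝ) 1 := by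
    filter_upwards [hae, ae_restrict_mem (measurableSet_Icc.prod measurableSet_Icc)] with z hz hzR
    refine isClosed_Icc.mem_of_tendsto hz ?_
    filter_upwards [hns.eventually self_mem_nhdsWithin] with n hn
    exact (hu _ hn).mem _ hzR.1 _ hzR.2
  refine ⟨fun z => max 0 (min 1 (w z)), measurable_const.max (measurable_const.min hwm),
    fun z => ⟨le_max_left _ _, max_le zero_le_one (min_le_left _ _)⟩, hw.congr_right ?_⟩
  filter_upwards [hmem] with z hz
  simp [hz.1, hz.2]

lemma tendsto_integral_mul_of_tendstoInMeasure {α : Type*} {mα : MeasurableSpace α}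
    {μ : Measure α} {u : ℝ → α → ℝ} {w g : α → ℝ} (hg : Integrable g μ)
    (hum : ∀ ε > 0, AEStronglyMeasurable (u ε) μ)
    (hu : ∀ ε > 0, ∀ᵐ z ∂μ, u ε z ∈ Icc (0 : ℝ) 1)
    (hw : TendstoInMeasure μ u (nhdsWithin 0 (Ioi 0)) w) :
    Tendsto (fun ε => ∫ z, u ε z * g z ∂μ) (nhdsWithin 0 (Ioi 0)) (nhds (∫ z, w z * g z ∂μ)) := by
  refine tendsto_of_subseq_tendsto fun ns hns => ?_
  obtain ⟨ms, hms, hae⟩ := (hw.comp hns).exists_seq_tendsto_ae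
  refine ⟨ms, ?_⟩
  have hpos : ∀ᶠ n in atTop, 0 < ns (ms n) :=
    (hns.comp hms.tendsto_atTop).eventually self_mem_nhdsWithin
  refine tendsto_integral_filter_of_dominated_convergence (fun z => |g z|) ?_ ?_ hg.abs ?_
  · filter_upwards [hpos] with n hn using (hum _ hn).mul hg.1
  · filter_upwards [hpos] with n hn
    filter_upwards [hu _ hn] with z hz
    rw [norm_mul, Real.norm_eq_abs, Real.norm_eq_abs, abs_of_nonneg hz.1]
    exact mul_le_of_le_one_left (abs_nonneg _) hz.2
  · filter_upwards [hae] with z hz using hz.mul_const _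

lemma integral_rectangle_swap {f : ℝ × ℝ → ℝ} (hf : Continuous f) {a b c d : ℝ} (hab : a ≤ b)
    (hcd : c ≤ d) :
    ∫ x in c..d, ∫ t in a..b, f (t, x) = ∫ t in a..b, ∫ x in c..d, f (t, x) := by
  simp only [integral_of_le hab, integral_of_le hcd]
  refine integral_integral_swap (f := fun x t => f (t, x)) ?_
  rw [Measure.prod_restrict, ← Measure.volume_eq_prod]
  exact ((hf.comp continuous_swap).integrableOn_rectangle c d a b).mono_set
    (prod_mono Ioc_subset_Icc_self Ioc_subset_Icc_self)

lemma Continuous.integral_fst {f : ℝ × ℝ → ℝ} (hf : Continuous f) (a b : ℝ) :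
    Continuous fun x => ∫ t in a..b, f (t, x) :=
  continuous_integral_snd (f := fun z => f z.swap) (hf.comp continuous_swap) a b

lemma exists_isViscousLimit {T p B : ℝ} (hT : 0 < T) (hp : 0 < p) {v0 : ℝ → ℝ}
    (hv0 : ContDiff ℝ (⊤ : ℕ∞) v0)
    (hB : ∀ x ∈ Icc (0 : ℝ) 1, |deriv v0 x| ≤ B) {u : ℝ → ℝ × ℝ → ℝ}
    (hu : ∀ ε > 0, IsViscousSolution T p ε v0 (u ε)) {w : ℝ × ℝ → ℝ} (hwm : Measurable w)
    (hwb : ∀ z, w z ∈ Icc (0 : ℝ) 1)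
    (hw : TendstoInMeasure (volume.restrict (Icc (0 : ℝ) T ×ˢ Icc (0 : ℝ) 1)) u
        (nhdsWithin 0 (Ioi 0)) w) :
    ∃ e : ℕ → ℝ, IsViscousLimit T p v0 (1 + 2 * B) e (fun n => u (e n)) w := by
  have hB0 : 0 ≤ B := (abs_nonneg _).trans (hB 0 (by simp))
  let r : ℕ → ℝ := fun n => 1 / ((n : ℝ) + 1)
  have hr0 : ∀ n, 0 < r n := fun n => by positivity
  have hr1 : ∀ n, r n ≤ 1 := fun n => by
    simp only [r]
    rw [div_le_one (by positivity)]
    linarith [(Nat.cast_nonneg n : (0 : ℝ) ≤ n)]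
  have hr : Tendsto r atTop (nhds 0) := tendsto_one_div_add_atTop_nhds_zero_nat
  obtain ⟨ms, hms, hae⟩ := (hw.comp (tendsto_nhdsWithin_iff.2
    ⟨hr, Eventually.of_forall hr0⟩)).exists_seq_tendsto_ae
  let g : ℕ → ℝ → ℝ := fun n x => r (ms n) * ∫ t in (0 : ℝ)..T, |xderiv (u (r (ms n))) (t, x)|
  have hcx : ∀ n, Continuous fun z => |xderiv (u (r n)) z| := fun n =>
    (hu _ (hr0 n)).contDiff_one.continuous_xderiv.abs
  have hgc : ∀ n, Continuous (g n) := fun n => ((hcx (ms n)).integral_fst 0 T).const_mul _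
  have hg0 : ∀ n x, 0 ≤ g n x := fun n x =>
    mul_nonneg (hr0 _).le (integral_nonneg hT.le fun t _ => abs_nonneg _)
  have hTV : ∀ ε > 0, ∀ t ∈ Icc 0 T, ∫ x in (0 : ℝ)..1, |xderiv (u ε) (t, x)| ≤ 1 + 2 * B :=
    fun ε hε t ht => (hu ε hε).integral_abs_xderiv_le hε hp hv0 hB ht
  have hgi : ∀ n, ∫ x in Icc (0 : ℝ) 1, g n x ≤ r (ms n) * (T * (1 + 2 * B)) := fun n => by
    rw [integral_Icc_eq_integral_Ioc, ← integral_of_le zero_le_one]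
    simp only [g]
    rw [intervalIntegral.integral_const_mul, integral_rectangle_swap (hcx _) hT.le zero_le_one]
    refine mul_le_mul_of_nonneg_left ?_ (hr0 _).le
    calc _ ≤ ∫ t in (0 : ℝ)..T, (1 + 2 * B) :=
          integral_mono_on hT.le ((continuous_integral_snd (hcx _) 0 1).intervalIntegrable _ _)
            intervalIntegrable_const (hTV _ (hr0 _))
      _ = _ := by rw [intervalIntegral.integral_const, smul_eq_mul, sub_zero]
  have hrm : Tendsto (fun n => r (ms n)) atTop (nhds 0) := hr.comp hms.tendsto_atTop
  have hgm : TendstoInMeasure (volume.restrict (Icc (0 : ℝ) 1)) g atTop (fun _ => 0) := by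
    refine tendstoInMeasure_of_tendsto_eLpNorm (p := 1) one_ne_zero
      (fun n => (hgc n).aestronglyMeasurable) aestronglyMeasurable_const ?_
    have hlim : Tendsto (fun n => ENNReal.ofReal (r (ms n) * (T * (1 + 2 * B)))) atTop (nhds 0) := by
      have := ENNReal.tendsto_ofReal (hrm.mul_const (T * (1 + 2 * B)))
      simpa using this
    refine tendsto_of_tendsto_of_tendsto_of_le_of_le tendsto_const_nhds hlim
      (fun _ => zero_le) fun n => ?_
    have hi : IntegrableOn (g n) (Icc (0 : ℝ) 1) := (hgc n).continuousOn.integrableOn_Icc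
    have he : (g n - fun _ => (0 : ℝ)) = g n := by ext x; simp
    simp only [he]
    rw [eLpNorm_one_eq_lintegral_enorm, ← ofReal_integral_norm_eq_lintegral_enorm hi]
    refine ENNReal.ofReal_le_ofReal ((le_of_eq ?_).trans (hgi n))
    exact integral_congr_ae (Eventually.of_forall fun x => Real.norm_of_nonneg (hg0 n x))
  obtain ⟨ks, hks, hgae⟩ := hgm.exists_seq_tendsto_ae
  refine ⟨fun n => r (ms (ks n)), fun n => hu _ (hr0 _), fun n => hr0 _, fun n => hr1 _,
    hrm.comp hks.tendsto_atTop, fun n => hTV _ (hr0 _), hwm, hwb, ?_, hgae⟩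
  filter_upwards [hae] with z hz using hz.comp hks.tendsto_atTop

lemma Continuous.exists_abs_le_Icc {f : ℝ → ℝ} (hf : Continuous f) (a b : ℝ) :
    ∃ C, 0 ≤ C ∧ ∀ x ∈ Icc a b, |f x| ≤ C := by
  obtain ⟨C, hC⟩ := isCompact_Icc.exists_bound_of_continuousOn (s := Icc a b) hf.continuousOn
  exact ⟨max C 0, le_max_right _ _, fun x hx => (hC x hx).trans (le_max_left _ _)⟩

namespace IsViscousSolution

variable {T p ε : ℝ} {v0 : ℝ → ℝ} {u : ℝ × ℝ → ℝ}

/-- The weak entropy inequality for a viscous solution, up to an error of the size of the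
viscosity. -/
lemma entropy_inequality (hu : IsViscousSolution T p ε v0 u) (hT : 0 < T) (hε : 0 < ε)
    {M : ℝ} (hM : ∀ t ∈ Icc 0 T, ∫ x in (0 : ℝ)..1, |xderiv u (t, x)| ≤ M)
    {F Q : ℝ → ℝ} (hFQ : IsLaxPair F Q) {ψ : ℝ × ℝ → ℝ} (hψ : ContDiff ℝ 1 ψ)
    (hsupp : tsupport ψ ⊆ Ioo 0 T ×ˢ Ioo (0 : ℝ) 1) (hψ0 : ∀ z, 0 ≤ ψ z) {C D : ℝ} (hC0 : 0 ≤ C)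
    (hD0 : 0 ≤ D) (hC : ∀ a ∈ Icc (0 : ℝ) 1, |deriv F a| ≤ C) (hD : ∀ z, |xderiv ψ z| ≤ D) :
    -(ε * (D * C * (T * M))) ≤ ∫ z in Icc 0 T ×ˢ Icc (0 : ℝ) 1,
      (tderiv ψ z * F (u z) + xderiv ψ z * (p * Q (u z))) := by
  have hz : ∀ z ∉ Ioo 0 T ×ˢ Ioo (0 : ℝ) 1, ψ z = 0 := fun z hz =>
    image_eq_zero_of_notMem_tsupport fun h => hz (hsupp h)
  obtain ⟨hc1, hc2⟩ := hu.contDiff_entropy hFQ hψ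
  have hdiv := integral_divergence_rectangle hc1 hc2 0 T 0 1
  have hl : ∀ t, ψ (t, 0) = 0 := fun t => hz _ (by simp)
  have hr : ∀ t, ψ (t, 1) = 0 := fun t => hz _ (by simp)
  have hb : ∀ x, ψ (0, x) = 0 := fun t => hz _ (by simp)
  have ht : ∀ x, ψ (T, x) = 0 := fun t => hz _ (by simp)
  simp only [hl, hr, hb, ht, zero_mul, intervalIntegral.integral_zero, sub_zero, add_zero] at hdiv
  have hux : Continuous fun z => |xderiv u z| := hu.contDiff_one.continuous_xderiv.abs
  have hg : Continuous fun z => tderiv ψ z * F (u z) + xderiv ψ z * (p * Q (u z)) := by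
    have := hψ.continuous_tderiv
    have := hψ.continuous_xderiv
    have := hFQ.1.continuous
    have := hFQ.2.1.continuous
    have := hu.smooth.continuous
    fun_prop
  have hmono := integral_rectangle_mono (hc1.continuous_tderiv.add hc2.continuous_xderiv)
    (hg.add (hux.const_mul (ε * (D * C)))) hT.le zero_le_one (fun t ht x hx => by
      simp only [Pi.add_apply]
      rw [hu.divergence_entropy hFQ hψ ht hx]
      have h1 : 0 ≤ ψ (t, x) * (ε * (deriv (deriv F) (u (t, x)) * xderiv u (t, x) ^ 2)) :=
        mul_nonneg (hψ0 _) (mul_nonneg hε.le (mul_nonneg (hFQ.2.2.2 _ (hu.mem t ht x hx))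
          (sq_nonneg _)))
      have h2 : |xderiv ψ (t, x) * deriv F (u (t, x)) * xderiv u (t, x)|
          ≤ D * C * |xderiv u (t, x)| := by
        rw [abs_mul, abs_mul]
        gcongr
        · exact hD _
        · exact hC _ (hu.mem t ht x hx)
      have h3 := mul_le_mul_of_nonneg_left ((neg_le_abs _).trans h2) hε.le
      linarith)
  have hzero : (∫ t in (0 : ℝ)..T, ∫ x in (0 : ℝ)..1,
      ((tderiv fun z => ψ z * F (u z)) + xderiv fun z => ψ z * (p * Q (u z) - ε *
        (deriv F (u z) * xderiv u z))) (t, x)) = 0 := hdiv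
  have hg' := hg.integrableOn_rectangle 0 T 0 1
  have hux' := (hux.const_mul (ε * (D * C))).integrableOn_rectangle 0 T 0 1
  rw [hzero, ← setIntegral_rectangle hT.le zero_le_one (hg'.add hux'),
    integral_add' hg' hux', MeasureTheory.integral_const_mul,
    setIntegral_rectangle hT.le zero_le_one (hux.integrableOn_rectangle 0 T 0 1)] at hmono
  have hTM : ∫ t in (0 : ℝ)..T, ∫ x in (0 : ℝ)..1, |xderiv u (t, x)| ≤ T * M :=
    calc _ ≤ ∫ t in (0 : ℝ)..T, M :=
          integral_mono_on hT.le ((continuous_integral_snd hux 0 1).intervalIntegrable _ _)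
            intervalIntegrable_const hM
      _ = _ := by rw [intervalIntegral.integral_const, smul_eq_mul, sub_zero]
  have := mul_le_mul_of_nonneg_left hTM (by positivity : 0 ≤ ε * (D * C))
  linarith

end IsViscousSolution

namespace IsViscousLimit

variable {T p M : ℝ} {v0 : ℝ → ℝ} {e : ℕ → ℝ} {u : ℕ → ℝ × ℝ → ℝ} {w : ℝ × ℝ → ℝ}

lemma tendsto_ae_prod (h : IsViscousLimit T p v0 M e u w) :
    ∀ᵐ z ∂((volume.restrict (Icc 0 T)).prod (volume.restrict (Icc (0 : ℝ) 1))),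
      Tendsto (fun n => u n z) atTop (nhds (w z)) := by
  rw [Measure.prod_restrict, ← Measure.volume_eq_prod]
  exact h.tendsto_ae

lemma tendsto_ae_time (h : IsViscousLimit T p v0 M e u w) :
    ∀ᵐ t ∂(volume.restrict (Icc 0 T)), ∀ᵐ x ∂(volume.restrict (Icc (0 : ℝ) 1)),
      Tendsto (fun n => u n (t, x)) atTop (nhds (w (t, x))) :=
  Measure.ae_ae_of_ae_prod h.tendsto_ae_prod

lemma tendsto_ae_space (h : IsViscousLimit T p v0 M e u w) :
    ∀ᵐ x ∂(volume.restrict (Icc (0 : ℝ) 1)), ∀ᵐ t ∂(volume.restrict (Icc 0 T)),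
      Tendsto (fun n => u n (t, x)) atTop (nhds (w (t, x))) :=
  Measure.ae_ae_of_ae_prod (p := fun z => Tendsto (fun n => u n z.swap) atTop (nhds (w z.swap)))
    (Measure.measurePreserving_swap.quasiMeasurePreserving.ae h.tendsto_ae_prod)

/-- The entropy inequality in the interior. -/
lemma entropy_inequality (h : IsViscousLimit T p v0 M e u w) (hT : 0 < T) {F Q : ℝ → ℝ}
    (hFQ : IsLaxPair F Q) {ψ : ℝ × ℝ → ℝ} (hψ : ContDiff ℝ 1 ψ) (hcs : HasCompactSupport ψ)
    (hsupp : tsupport ψ ⊆ Ioo 0 T ×ˢ Ioo (0 : ℝ) 1) (hψ0 : ∀ z, 0 ≤ ψ z) :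
    0 ≤ ∫ z in Ioo 0 T ×ˢ Ioo (0 : ℝ) 1, (F (w z) * tderiv ψ z + p * Q (w z) * xderiv ψ z) := by
  have hset : (Ioo 0 T ×ˢ Ioo (0 : ℝ) 1 : Set (ℝ × ℝ)) =ᵐ[volume] Icc 0 T ×ˢ Icc (0 : ℝ) 1 :=
    Measure.set_prod_ae_eq Ioo_ae_eq_Icc Ioo_ae_eq_Icc
  rw [setIntegral_congr_set hset]
  obtain ⟨C, hC0, hC⟩ := (hFQ.1.continuous_deriv one_le_two).exists_abs_le_Icc 0 1
  obtain ⟨A, hA0, hA⟩ := hFQ.1.continuous.exists_abs_le_Icc 0 1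
  obtain ⟨A', hA'0, hA'⟩ := hFQ.2.1.continuous.exists_abs_le_Icc 0 1
  have hcx : Continuous (xderiv ψ) := hψ.continuous_xderiv
  have hct : Continuous (tderiv ψ) := hψ.continuous_tderiv
  have hcsx : HasCompactSupport (xderiv ψ) := hcs.fderiv_apply (𝕜 := ℝ) (0, 1)
  obtain ⟨D, hD⟩ := hcsx.exists_bound_of_continuous hcx
  have hD0 : 0 ≤ D := (norm_nonneg _).trans (hD 0)
  have hlim : Tendsto (fun n => ∫ z in Icc 0 T ×ˢ Icc (0 : ℝ) 1,
      (tderiv ψ z * F (u n z) + xderiv ψ z * (p * Q (u n z)))) atTop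
      (nhds (∫ z in Icc 0 T ×ˢ Icc (0 : ℝ) 1,
        (tderiv ψ z * F (w z) + xderiv ψ z * (p * Q (w z))))) := by
    have hcF := hFQ.1.continuous
    have hcQ := hFQ.2.1.continuous
    refine tendsto_integral_of_dominated_convergence
      (fun z => |tderiv ψ z| * A + |xderiv ψ z| * (|p| * A')) (fun n => ?_) ?_ (fun n => ?_) ?_
    · have := (h.sol n).smooth.continuous
      exact Continuous.aestronglyMeasurable (by fun_prop)
    · exact Continuous.integrableOn_rectangle (by fun_prop) _ _ _ _
    · filter_upwards [ae_restrict_mem (measurableSet_Icc.prod measurableSet_Icc)] with z hz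
      have hm := (h.sol n).mem _ hz.1 _ hz.2
      refine (norm_add_le _ _).trans ?_
      simp only [norm_mul, Real.norm_eq_abs]
      gcongr
      · exact hA _ hm
      · exact hA' _ hm
    · filter_upwards [h.tendsto_ae] with z hz
      exact (((hcF.tendsto _).comp hz).const_mul _).add
        ((((hcQ.tendsto _).comp hz).const_mul _).const_mul _)
  have hlow : Tendsto (fun n => -(e n * (D * C * (T * M)))) atTop (nhds 0) := by
    simpa using (h.tendsto_zero.mul_const (D * C * (T * M))).neg
  have := le_of_tendsto_of_tendsto' hlow hlim fun n => (h.sol n).entropy_inequality hT (h.pos n)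
    (h.total_variation n) hFQ hψ hsupp hψ0 hC0 hD0 hC hD
  refine this.trans (le_of_eq ?_)
  congr 1
  ext z
  ring

/-- The initial condition, as an essential limit. -/
lemma tendsto_initial (h : IsViscousLimit T p v0 M e u w) (hT : 0 < T) (hp : 0 < p)
    (hv0 : ContDiff ℝ (⊤ : ℕ∞) v0) {B : ℝ} (hB : ∀ x ∈ Icc (0 : ℝ) 1, |deriv v0 x| ≤ B) :
    Tendsto (fun t => ∫ x in (0 : ℝ)..1, |w (t, x) - v0 x|)
      (nhdsWithin 0 (Ioi 0) ⊓ ae volume) (nhds 0) := by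
  set K := B ^ 2 + p * B + p
  have hv := hv0.continuous
  obtain ⟨A, hA0, hA⟩ := hv.exists_abs_le_Icc 0 1
  have hae : ∀ᵐ t ∂(volume : Measure ℝ), t ∈ Icc 0 T → 0 < t →
      ∫ x in (0 : ℝ)..1, |w (t, x) - v0 x| ≤ (1 + K) * √t := by
    filter_upwards [(ae_restrict_iff' measurableSet_Icc).1 h.tendsto_ae_time] with t hlim ht ht0
    have hae := hlim ht
    rw [Measure.restrict_congr_set Ioc_ae_eq_Icc.symm] at hae
    have hwm : Measurable fun x => w (t, x) := h.measurable.comp measurable_prodMk_left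
    have hbd : ∀ x ∈ Ioc (0 : ℝ) 1, ∀ a ∈ Icc (0 : ℝ) 1, |a - v0 x| ≤ 1 + A := fun x hx a ha =>
      (abs_sub _ _).trans (add_le_add (abs_le.2 ⟨by linarith [ha.1], ha.2⟩)
        (hA x (Ioc_subset_Icc_self hx)))
    have hi : IntervalIntegrable (fun x => w (t, x) - v0 x) volume 0 1 := by
      rw [intervalIntegrable_iff, uIoc_of_le zero_le_one]
      refine Measure.integrableOn_of_bounded (M := 1 + A) (by simp)
        (hwm.sub hv.measurable).aestronglyMeasurable ?_
      filter_upwards [ae_restrict_mem measurableSet_Ioc] with x hx using hbd x hx _ (h.mem _)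
    have hi2 : IntervalIntegrable (fun x => (w (t, x) - v0 x) ^ 2) volume 0 1 := by
      rw [intervalIntegrable_iff, uIoc_of_le zero_le_one]
      refine Measure.integrableOn_of_bounded (M := (1 + A) ^ 2) (by simp)
        ((hwm.sub hv.measurable).pow_const 2).aestronglyMeasurable ?_
      filter_upwards [ae_restrict_mem measurableSet_Ioc] with x hx
      rw [norm_pow]
      exact pow_le_pow_left₀ (norm_nonneg _) (hbd x hx _ (h.mem _)) 2
    have hsq : ∫ x in (0 : ℝ)..1, (w (t, x) - v0 x) ^ 2 ≤ K * t := by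
      have hconv : Tendsto (fun n => ∫ x in (0 : ℝ)..1, (u n (t, x) - v0 x) ^ 2) atTop
          (nhds (∫ x in (0 : ℝ)..1, (w (t, x) - v0 x) ^ 2)) := by
        simp only [integral_of_le zero_le_one]
        refine tendsto_integral_of_dominated_convergence (fun _ => (1 + A) ^ 2)
          (fun n => ?_) (integrable_const _) (fun n => ?_) ?_
        · exact (((h.sol n).continuous_slice t).sub hv |>.pow 2).aestronglyMeasurable
        · filter_upwards [ae_restrict_mem measurableSet_Ioc] with x hx
          rw [norm_pow]
          exact pow_le_pow_left₀ (norm_nonneg _)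
            (hbd x hx _ ((h.sol n).mem t ht x (Ioc_subset_Icc_self hx))) 2
        · filter_upwards [hae] with x hx using (hx.sub_const _).pow 2
      exact le_of_tendsto' hconv fun n =>
        (h.sol n).integral_sq_sub_init_le (h.pos n) (h.le_one n) hp hv0 hB ht
    refine (integral_abs_le_of_integral_sq_le (Real.sqrt_pos.2 ht0) hi hi2 hsq).trans ?_
    rw [mul_div_assoc, Real.div_sqrt]
    linarith
  have hlim : Tendsto (fun t => (1 + K) * √t) (nhdsWithin 0 (Ioi 0) ⊓ ae volume) (nhds 0) := by
    have : Tendsto (fun t => (1 + K) * √t) (nhds 0) (nhds ((1 + K) * √0)) :=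
      (by fun_prop : Continuous fun t : ℝ => (1 + K) * √t).tendsto 0
    rw [Real.sqrt_zero, mul_zero] at this
    exact this.mono_left (inf_le_left.trans nhdsWithin_le_nhds)
  refine tendsto_of_tendsto_of_tendsto_of_le_of_le' tendsto_const_nhds hlim
    (Eventually.of_forall fun t => integral_nonneg zero_le_one fun x _ => abs_nonneg _) ?_
  filter_upwards [mem_inf_of_right hae, mem_inf_of_left (Ioo_mem_nhdsGT hT)]
    with t h1 h2 using h1 (Ioo_subset_Icc_self h2) h2.1

end IsViscousLimit

/-! ### Boundary conditions -/

lemma exists_mem_tendsto_of_uniform_approx {l : Filter ℝ} {S : Set ℝ} (hS : IsClosed S)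
    {f : ℝ → ℝ} (h : ∀ η > 0, ∃ g : ℝ → ℝ, ∃ L ∈ S, Tendsto g l (nhds L) ∧
      ∀ᶠ x in l, |f x - g x| ≤ η) : ∃ L ∈ S, Tendsto f l (nhds L) := by
  rcases l.eq_or_neBot with rfl | hl
  · obtain ⟨-, L, hL, -⟩ := h 1 one_pos
    exact ⟨L, hL, tendsto_bot⟩
  have hc : Cauchy (map f l) := by
    refine Metric.cauchy_iff.2 ⟨inferInstance, fun η hη => ?_⟩
    obtain ⟨g, L, -, hg, hfg⟩ := h (η / 4) (by positivity)
    have hb : {x | |f x - L| < η / 2} ∈ l := by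
      filter_upwards [hfg, Metric.tendsto_nhds.1 hg (η / 4) (by positivity)] with x h1 h2
      rw [Real.dist_eq] at h2
      have := abs_sub_le (f x) (g x) L
      linarith
    refine ⟨_, image_mem_map hb, ?_⟩
    rintro _ ⟨x, hx, rfl⟩ _ ⟨y, hy, rfl⟩
    change |f x - L| < _ at hx
    change |f y - L| < _ at hy
    have := abs_sub_le (f x) L (f y)
    rw [abs_sub_comm L] at this
    rw [Real.dist_eq]
    linarith
  obtain ⟨L, hL⟩ := cauchy_map_iff_exists_tendsto.1 hc
  refine ⟨L, ?_, hL⟩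
  rw [← hS.closure_eq, Metric.mem_closure_iff]
  intro η hη
  obtain ⟨g, L', hL', hg, hfg⟩ := h (η / 2) (by positivity)
  refine ⟨L', hL', ?_⟩
  have := le_of_tendsto (hL.sub hg).abs hfg
  rw [Real.dist_eq]
  linarith

lemma nonempty_of_ae_mem_Ioo {S : Set ℝ} (hae : ∀ᵐ x, x ∈ Ioo (0 : ℝ) 1 → x ∈ S) : S.Nonempty := by
  have : NeBot (ae (volume.restrict (Ioo (0 : ℝ) 1))) :=
    ae_neBot.2 (by simp [Measure.restrict_eq_zero])
  exact ((ae_restrict_iff' measurableSet_Ioo).2 hae).exists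

lemma exists_nonpos_essential_limit_right {D : ℝ → ℝ} {S : Set ℝ} (hS : S ⊆ Ioo 0 1)
    (hae : ∀ᵐ x, x ∈ Ioo (0 : ℝ) 1 → x ∈ S) (hD : AntitoneOn D S) (h0 : ∀ x ∈ S, D x ≤ 0) :
    ∃ L ≤ (0 : ℝ), Tendsto D (nhdsWithin 0 (Ioi 0) ⊓ ae volume) (nhds L) := by
  have hne : (D '' S).Nonempty := (nonempty_of_ae_mem_Ioo hae).image D
  have hle : ∀ y ∈ D '' S, y ≤ 0 := by rintro _ ⟨x, hx, rfl⟩; exact h0 x hx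
  refine ⟨sSup (D '' S), csSup_le hne hle, Metric.tendsto_nhds.2 fun η hη => ?_⟩
  obtain ⟨_, ⟨x₀, hx₀, rfl⟩, hlt⟩ := exists_lt_of_lt_csSup hne (sub_lt_self _ hη)
  filter_upwards [mem_inf_of_right hae, mem_inf_of_left (Ioo_mem_nhdsGT (hS hx₀).1)] with x h1 h2
  have hx : x ∈ S := h1 ⟨h2.1, h2.2.trans (hS hx₀).2⟩
  have h3 := hD hx hx₀ h2.2.le
  have h4 : D x ≤ sSup (D '' S) := le_csSup ⟨0, hle⟩ ⟨x, hx, rfl⟩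
  rw [Real.dist_eq, abs_lt]
  constructor <;> linarith

lemma exists_nonneg_essential_limit_left {D : ℝ → ℝ} {S : Set ℝ} (hS : S ⊆ Ioo 0 1)
    (hae : ∀ᵐ x, x ∈ Ioo (0 : ℝ) 1 → x ∈ S) (hD : AntitoneOn D S) (h0 : ∀ x ∈ S, 0 ≤ D x) :
    ∃ L ≥ (0 : ℝ), Tendsto D (nhdsWithin 1 (Iio 1) ⊓ ae volume) (nhds L) := by
  have hne : (D '' S).Nonempty := (nonempty_of_ae_mem_Ioo hae).image D
  have hle : ∀ y ∈ D '' S, 0 ≤ y := by rintro _ ⟨x, hx, rfl⟩; exact h0 x hx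
  refine ⟨sInf (D '' S), le_csInf hne hle, Metric.tendsto_nhds.2 fun η hη => ?_⟩
  obtain ⟨_, ⟨x₀, hx₀, rfl⟩, hlt⟩ := exists_lt_of_csInf_lt hne (lt_add_of_pos_right _ hη)
  filter_upwards [mem_inf_of_right hae, mem_inf_of_left (Ioo_mem_nhdsLT (hS hx₀).2)] with x h1 h2
  have hx : x ∈ S := h1 ⟨(hS hx₀).1.trans h2.1, h2.2⟩
  have h3 := hD hx₀ hx h2.1.le
  have h4 : sInf (D '' S) ≤ D x := csInf_le ⟨0, hle⟩ ⟨x, hx, rfl⟩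
  rw [Real.dist_eq, abs_lt]
  constructor <;> linarith

lemma IsLaxPair.antitoneOn_sub {F Q : ℝ → ℝ} (h : IsLaxPair F Q) :
    AntitoneOn (fun a => Q a - deriv F a * J a) (Icc 0 1) := by
  have hF1 : ContDiff ℝ 1 (deriv F) := h.1.deriv'
  have hd : ∀ a, HasDerivAt (fun a => Q a - deriv F a * J a)
      (deriv Q a - (deriv (deriv F) a * J a + deriv F a * (1 - 2 * a))) a := fun a =>
    (h.2.1.differentiable two_ne_zero a).hasDerivAt.sub
      ((hF1.differentiable one_ne_zero a).hasDerivAt.mul (hasDerivAt_J a))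
  refine antitoneOn_of_deriv_nonpos (convex_Icc 0 1)
    (fun a _ => (hd a).continuousAt.continuousWithinAt)
    (fun a _ => (hd a).differentiableAt.differentiableWithinAt) fun a ha => ?_
  have ha' := interior_subset ha
  rw [(hd a).deriv, h.2.2.1 a ha']
  have := mul_nonneg (h.2.2.2 a ha') (J_nonneg ha')
  linarith

/-- The time average, weighted by `φ`, of the viscous entropy flux through a point. -/
noncomputable def viscousFlux (T p ε : ℝ) (F Q φ : ℝ → ℝ) (u : ℝ × ℝ → ℝ) (x : ℝ) : ℝ :=
  ∫ t in (0 : ℝ)..T, φ t * (p * Q (u (t, x)) - ε * (deriv F (u (t, x)) * xderiv u (t, x)))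

namespace IsViscousSolution

variable {T p ε : ℝ} {v0 : ℝ → ℝ} {u : ℝ × ℝ → ℝ} {F Q φ : ℝ → ℝ}

lemma viscousFlux_zero_nonpos (hu : IsViscousSolution T p ε v0 u) (hT : 0 < T) (hp : 0 < p)
    (hFQ : IsLaxPair F Q) (hQ : Q 0 = 0) (hφ0 : ∀ t ∈ Icc 0 T, 0 ≤ φ t) :
    viscousFlux T p ε F Q φ u 0 ≤ 0 := by
  rw [viscousFlux, ← neg_nonneg, ← intervalIntegral.integral_neg]
  refine integral_nonneg hT.le fun t ht => neg_nonneg.2 ?_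
  have hm := hu.mem t ht 0 (by simp)
  have := hFQ.antitoneOn_sub (by simp) hm hm.1
  simp only [J, hQ] at this
  refine mul_nonpos_of_nonneg_of_nonpos (hφ0 t ht) ?_
  have he : ε * (deriv F (u (t, 0)) * xderiv u (t, 0)) = p * (deriv F (u (t, 0)) * J (u (t, 0))) := by
    linear_combination deriv F (u (t, 0)) * hu.flux_left t ht
  rw [he, ← mul_sub]
  refine mul_nonpos_of_nonneg_of_nonpos hp.le ?_
  simp only [J]
  linarith

lemma viscousFlux_one_nonneg (hu : IsViscousSolution T p ε v0 u) (hT : 0 < T) (hp : 0 < p)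
    (hFQ : IsLaxPair F Q) (hQ : Q 1 = 0) (hφ0 : ∀ t ∈ Icc 0 T, 0 ≤ φ t) :
    0 ≤ viscousFlux T p ε F Q φ u 1 := by
  refine integral_nonneg hT.le fun t ht => ?_
  have hm := hu.mem t ht 1 (by simp)
  have := hFQ.antitoneOn_sub hm (by simp) hm.2
  simp only [J, hQ] at this
  refine mul_nonneg (hφ0 t ht) ?_
  have he : ε * (deriv F (u (t, 1)) * xderiv u (t, 1)) = p * (deriv F (u (t, 1)) * J (u (t, 1))) := by
    linear_combination deriv F (u (t, 1)) * hu.flux_right t ht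
  rw [he, ← mul_sub]
  refine mul_nonneg hp.le ?_
  simp only [J]
  linarith

/-- The weighted viscous entropy flux is one-sided Lipschitz, uniformly in the viscosity. -/
lemma viscousFlux_sub_le (hu : IsViscousSolution T p ε v0 u) (hT : 0 < T) (hε : 0 < ε)
    (hFQ : IsLaxPair F Q) (hφ : ContDiff ℝ 1 φ) (hφ0 : ∀ t ∈ Icc 0 T, 0 ≤ φ t) {A Φ Φ' : ℝ}
    (hA : ∀ a ∈ Icc (0 : ℝ) 1, |F a| ≤ A) (hΦ : ∀ t ∈ Icc 0 T, |φ t| ≤ Φ)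
    (hΦ' : ∀ t ∈ Icc 0 T, |deriv φ t| ≤ Φ') {x y : ℝ} (hx : 0 ≤ x) (hxy : x ≤ y) (hy : y ≤ 1) :
    viscousFlux T p ε F Q φ u y - viscousFlux T p ε F Q φ u x
      ≤ (Φ' * A * T + 2 * (Φ * A)) * (y - x) := by
  have hψ : ContDiff ℝ 1 fun z : ℝ × ℝ => φ z.1 := hφ.comp contDiff_fst
  have hψt : ∀ t x, tderiv (fun z : ℝ × ℝ => φ z.1) (t, x) = deriv φ t := fun t x =>
    tderiv_eq (hψ.differentiable one_ne_zero _) (hφ.differentiable one_ne_zero t).hasDerivAt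
  have hψx : ∀ t x, xderiv (fun z : ℝ × ℝ => φ z.1) (t, x) = 0 := fun t x =>
    xderiv_eq (hψ.differentiable one_ne_zero _) (hasDerivAt_const x (φ t))
  obtain ⟨hc1, hc2⟩ := hu.contDiff_entropy hFQ hψ
  have h0T : (0 : ℝ) ∈ Icc 0 T := ⟨le_rfl, hT.le⟩
  have hTT : T ∈ Icc 0 T := ⟨hT.le, le_rfl⟩
  have hIcc : ∀ s ∈ Icc x y, s ∈ Icc (0 : ℝ) 1 := fun s hs => ⟨hx.trans hs.1, hs.2.trans hy⟩
  have hflux := flux_le_of_divergence_le hc1 hc2 hT.le hxy (K := Φ' * A) (fun t ht s hs => by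
    rw [hu.divergence_entropy hFQ hψ ht (hIcc s hs), hψt, hψx]
    have hm := hu.mem t ht s (hIcc s hs)
    have h1 : 0 ≤ φ t * (ε * (deriv (deriv F) (u (t, s)) * xderiv u (t, s) ^ 2)) :=
      mul_nonneg (hφ0 t ht) (mul_nonneg hε.le (mul_nonneg (hFQ.2.2.2 _ hm) (sq_nonneg _)))
    have h2 : deriv φ t * F (u (t, s)) ≤ Φ' * A := by
      refine (le_abs_self _).trans ?_
      rw [abs_mul]
      exact mul_le_mul (hΦ' t ht) (hA _ hm) (abs_nonneg _) ((abs_nonneg _).trans (hΦ' t ht))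
    simp only
    linarith)
  have hend : ∀ t ∈ Icc 0 T, |∫ s in x..y, φ t * F (u (t, s))| ≤ Φ * A * (y - x) := by
    intro t ht
    have := intervalIntegral.norm_integral_le_of_norm_le_const (a := x) (b := y) (C := Φ * A)
      (f := fun s => φ t * F (u (t, s))) (fun s hs => by
        rw [uIoc_of_le hxy] at hs
        rw [Real.norm_eq_abs, abs_mul]
        exact mul_le_mul (hΦ t ht) (hA _ (hu.mem t ht s (hIcc s (Ioc_subset_Icc_self hs))))
          (abs_nonneg _) ((abs_nonneg _).trans (hΦ t ht)))
    rwa [Real.norm_eq_abs, abs_of_nonneg (sub_nonneg.2 hxy)] at this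
  have h1 := (abs_le.1 (hend 0 h0T)).2
  have h2 := (abs_le.1 (hend T hTT)).1
  simp only [viscousFlux]
  simp only at hflux
  linarith

end IsViscousSolution

namespace IsViscousLimit

variable {T p M : ℝ} {v0 : ℝ → ℝ} {e : ℕ → ℝ} {u : ℕ → ℝ × ℝ → ℝ} {w : ℝ × ℝ → ℝ}
  {F Q φ : ℝ → ℝ}

lemma tendsto_viscousFlux (h : IsViscousLimit T p v0 M e u w) (hT : 0 < T) (hFQ : IsLaxPair F Q)
    (hφ : Continuous φ) {x : ℝ} (hx : x ∈ Icc (0 : ℝ) 1)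
    (hlim : ∀ᵐ t ∂(volume.restrict (Icc 0 T)), Tendsto (fun n => u n (t, x)) atTop (nhds (w (t, x))))
    (hflux : Tendsto (fun n => e n * ∫ t in (0 : ℝ)..T, |xderiv (u n) (t, x)|) atTop (nhds 0)) :
    Tendsto (fun n => viscousFlux T p (e n) F Q φ (u n) x) atTop
      (nhds (p * ∫ t in (0 : ℝ)..T, φ t * Q (w (t, x)))) := by
  have hcF : Continuous (deriv F) := hFQ.1.continuous_deriv one_le_two
  have hcQ := hFQ.2.1.continuous
  obtain ⟨C, hC0, hC⟩ := hcF.exists_abs_le_Icc 0 1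
  obtain ⟨A, hA0, hA⟩ := hcQ.exists_abs_le_Icc 0 1
  obtain ⟨Φ, hΦ0, hΦ⟩ := hφ.exists_abs_le_Icc 0 T
  have hct : ∀ n, Continuous fun t => u n (t, x) := fun n => by
    have := (h.sol n).smooth.continuous
    fun_prop
  have hcx : ∀ n, Continuous fun t => xderiv (u n) (t, x) := fun n => by
    have := (h.sol n).contDiff_one.continuous_xderiv
    fun_prop
  have hcφQ : ∀ n, Continuous fun t => φ t * Q (u n (t, x)) := fun n => hφ.mul (hcQ.comp (hct n))
  have hcφF : ∀ n, Continuous fun t => φ t * (e n * (deriv F (u n (t, x)) * xderiv (u n) (t, x))) :=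
    fun n => hφ.mul (((hcF.comp (hct n)).mul (hcx n)).const_mul _)
  rw [Measure.restrict_congr_set Ioc_ae_eq_Icc.symm] at hlim
  have hconv : Tendsto (fun n => ∫ t in (0 : ℝ)..T, φ t * Q (u n (t, x))) atTop
      (nhds (∫ t in (0 : ℝ)..T, φ t * Q (w (t, x)))) := by
    simp only [integral_of_le hT.le]
    refine tendsto_integral_of_dominated_convergence (fun _ => Φ * A) (fun n => ?_)
      (integrable_const _) (fun n => ?_) ?_
    · exact (hcφQ n).aestronglyMeasurable
    · filter_upwards [ae_restrict_mem measurableSet_Ioc] with t ht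
      have ht' := Ioc_subset_Icc_self ht
      rw [norm_mul]
      exact mul_le_mul (hΦ t ht') (hA _ ((h.sol n).mem t ht' x hx)) (norm_nonneg _) hΦ0
    · filter_upwards [hlim] with t ht using ((hcQ.tendsto _).comp ht).const_mul _
  have herr : Tendsto (fun n => ∫ t in (0 : ℝ)..T,
      φ t * (e n * (deriv F (u n (t, x)) * xderiv (u n) (t, x)))) atTop (nhds 0) := by
    refine squeeze_zero_norm (fun n => ?_) (by simpa using hflux.const_mul (Φ * C))
    refine (intervalIntegral.norm_integral_le_integral_norm hT.le).trans ?_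
    rw [← mul_assoc, ← intervalIntegral.integral_const_mul]
    refine integral_mono_on hT.le ((hcφF n).norm.intervalIntegrable _ _)
      (((hcx n).abs.const_mul _).intervalIntegrable _ _) fun t ht => ?_
    rw [Real.norm_eq_abs, abs_mul, abs_mul, abs_mul, abs_of_pos (h.pos n)]
    have h1 := mul_le_mul (hΦ t ht) (hC _ ((h.sol n).mem t ht x hx)) (abs_nonneg _) hΦ0
    have h2 := mul_le_mul_of_nonneg_right h1
      (mul_nonneg (h.pos n).le (abs_nonneg (xderiv (u n) (t, x))))
    linarith
  have := (hconv.const_mul p).sub herr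
  rw [sub_zero] at this
  refine this.congr fun n => ?_
  rw [viscousFlux, ← intervalIntegral.integral_const_mul, ← intervalIntegral.integral_sub
    (((hcφQ n).const_mul p).intervalIntegrable _ _) ((hcφF n).intervalIntegrable _ _)]
  congr 1
  ext t
  ring

/-- On a set of full measure the weighted entropy flux is one-sided Lipschitz, with the sign
imposed by the zero-flux condition at the two end points. -/
lemma exists_flux_bound (h : IsViscousLimit T p v0 M e u w) (hT : 0 < T) (hp : 0 < p)
    (hFQ : IsLaxPair F Q) (hφ : ContDiff ℝ 1 φ) (hφ0 : ∀ t ∈ Icc 0 T, 0 ≤ φ t) :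
    ∃ S ⊆ Ioo (0 : ℝ) 1, (∀ᵐ x, x ∈ Ioo (0 : ℝ) 1 → x ∈ S) ∧ ∃ C : ℝ,
      AntitoneOn (fun x => (p * ∫ t in (0 : ℝ)..T, φ t * Q (w (t, x))) - C * x) S ∧
      (Q 0 = 0 → ∀ x ∈ S, p * ∫ t in (0 : ℝ)..T, φ t * Q (w (t, x)) ≤ C * x) ∧
      (Q 1 = 0 → ∀ x ∈ S, -(C * (1 - x)) ≤ p * ∫ t in (0 : ℝ)..T, φ t * Q (w (t, x))) := by
  obtain ⟨A, -, hA⟩ := hFQ.1.continuous.exists_abs_le_Icc 0 1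
  obtain ⟨Φ, -, hΦ⟩ := hφ.continuous.exists_abs_le_Icc 0 T
  obtain ⟨Φ', -, hΦ'⟩ := (hφ.continuous_deriv le_rfl).exists_abs_le_Icc 0 T
  set S := {x | x ∈ Ioo (0 : ℝ) 1 ∧ Tendsto (fun n => viscousFlux T p (e n) F Q φ (u n) x) atTop
    (nhds (p * ∫ t in (0 : ℝ)..T, φ t * Q (w (t, x))))} with hS
  have hsub : S ⊆ Ioo (0 : ℝ) 1 := fun x hx => hx.1
  have hlim : ∀ x ∈ S, Tendsto (fun n => viscousFlux T p (e n) F Q φ (u n) x) atTop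
      (nhds (p * ∫ t in (0 : ℝ)..T, φ t * Q (w (t, x)))) := fun x hx => hx.2
  have hle : ∀ n x y, 0 ≤ x → x ≤ y → y ≤ 1 →
      viscousFlux T p (e n) F Q φ (u n) y - viscousFlux T p (e n) F Q φ (u n) x
        ≤ (Φ' * A * T + 2 * (Φ * A)) * (y - x) := fun n x y hx hxy hy =>
    (h.sol n).viscousFlux_sub_le hT (h.pos n) hFQ hφ hφ0 hA hΦ hΦ' hx hxy hy
  refine ⟨S, hsub, ?_, Φ' * A * T + 2 * (Φ * A), ?_, ?_, ?_⟩
  · filter_upwards [(ae_restrict_iff' measurableSet_Icc).1 h.tendsto_ae_space,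
      (ae_restrict_iff' measurableSet_Icc).1 h.tendsto_flux] with x h1 h2 hx
    have hx' := Ioo_subset_Icc_self hx
    exact ⟨hx, h.tendsto_viscousFlux hT hFQ hφ.continuous hx' (h1 hx') (h2 hx')⟩
  · intro x hx y hy hxy
    have := le_of_tendsto' ((hlim y hy).sub (hlim x hx))
      fun n => hle n x y (hsub hx).1.le hxy (hsub hy).2.le
    simp only
    linarith
  · intro hQ x hx
    refine le_of_tendsto' (hlim x hx) fun n => ?_
    have h1 := hle n 0 x le_rfl (hsub hx).1.le (hsub hx).2.le
    have h2 := (h.sol n).viscousFlux_zero_nonpos hT hp hFQ hQ hφ0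
    rw [sub_zero] at h1
    linarith
  · intro hQ x hx
    refine ge_of_tendsto' (hlim x hx) fun n => ?_
    have h1 := hle n x 1 (hsub hx).1.le (hsub hx).2.le le_rfl
    have h2 := (h.sol n).viscousFlux_one_nonneg hT hp hFQ hQ hφ0
    linarith

lemma intervalIntegrable_mul_flux (h : IsViscousLimit T p v0 M e u w) (hT : 0 < T)
    (hQ : Continuous Q) (hφ : ContinuousOn φ (Icc 0 T)) (x : ℝ) :
    IntervalIntegrable (fun t => φ t * Q (w (t, x))) volume 0 T := by
  obtain ⟨A, hA0, hA⟩ := hQ.exists_abs_le_Icc 0 1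
  rw [intervalIntegrable_iff, uIoc_of_le hT.le]
  refine Integrable.mul_bdd (c := A) (hφ.integrableOn_Icc.mono_set Ioc_subset_Icc_self)
    (hQ.measurable.comp (h.measurable.comp measurable_prodMk_right)).aestronglyMeasurable
    (Eventually.of_forall fun t => hA _ (h.mem _))

lemma exists_smooth_weight_approx (h : IsViscousLimit T p v0 M e u w) (hT : 0 < T)
    (hQ : Continuous Q) (hφ : ContinuousOn φ (Icc 0 T)) (hφ0 : ∀ t ∈ Icc 0 T, 0 ≤ φ t)
    {η : ℝ} (hη : 0 < η) :
    ∃ χ : ℝ → ℝ, ContDiff ℝ 1 χ ∧ (∀ t ∈ Icc 0 T, 0 ≤ χ t) ∧ ∀ x,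
      |(∫ t in (0 : ℝ)..T, φ t * Q (w (t, x))) - ∫ t in (0 : ℝ)..T, χ t * Q (w (t, x))| ≤ η := by
  obtain ⟨A, hA0, hA⟩ := hQ.exists_abs_le_Icc 0 1
  set κ := η / (2 * (A + 1) * T) with hκ
  have hκ0 : 0 < κ := by positivity
  obtain ⟨q, hq⟩ := exists_polynomial_near_of_continuousOn 0 T φ hφ κ hκ0
  have hχ : ContDiff ℝ 1 fun t => q.eval t + κ := by
    simpa using (q.contDiff_aeval (𝕜 := ℝ) 1).add contDiff_const
  refine ⟨fun t => q.eval t + κ, hχ, fun t ht => ?_, fun x => ?_⟩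
  · linarith [(abs_lt.1 (hq t ht)).1, hφ0 t ht]
  rw [← intervalIntegral.integral_sub (h.intervalIntegrable_mul_flux hT hQ hφ x)
    (h.intervalIntegrable_mul_flux hT hQ hχ.continuous.continuousOn x)]
  have := intervalIntegral.norm_integral_le_of_norm_le_const (a := 0) (b := T)
    (C := 2 * κ * (A + 1))
    (f := fun t => φ t * Q (w (t, x)) - (q.eval t + κ) * Q (w (t, x))) (fun t ht => by
      rw [uIoc_of_le hT.le] at ht
      have h1 := abs_lt.1 (hq t (Ioc_subset_Icc_self ht))
      rw [← sub_mul, Real.norm_eq_abs, abs_mul]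
      refine mul_le_mul (abs_le.2 ⟨?_, ?_⟩) ((hA _ (h.mem _)).trans (by linarith)) (abs_nonneg _)
        (by positivity) <;> linarith [h1.1, h1.2])
  rw [Real.norm_eq_abs, sub_zero, abs_of_pos hT] at this
  refine this.trans (le_of_eq ?_)
  rw [hκ]
  field_simp

/-- The boundary entropy condition at the left end point. -/
lemma exists_nonpos_boundary_flux (h : IsViscousLimit T p v0 M e u w) (hT : 0 < T) (hp : 0 < p)
    (hFQ : IsLaxPair F Q) (hQ : Q 0 = 0) (hφ : ContinuousOn φ (Icc 0 T))
    (hφ0 : ∀ t ∈ Icc 0 T, 0 ≤ φ t) :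
    ∃ L ≤ (0 : ℝ), Tendsto (fun x => ∫ t in (0 : ℝ)..T, φ t * Q (w (t, x)))
      (nhdsWithin 0 (Ioi 0) ⊓ ae volume) (nhds L) := by
  refine exists_mem_tendsto_of_uniform_approx isClosed_Iic fun η hη => ?_
  obtain ⟨χ, hχ, hχ0, happ⟩ := h.exists_smooth_weight_approx hT hFQ.2.1.continuous hφ hφ0 hη
  obtain ⟨S, hS, hae, C, hanti, hl, -⟩ := h.exists_flux_bound hT hp hFQ hχ hχ0
  obtain ⟨L, hL, hlim⟩ := exists_nonpos_essential_limit_right hS hae hanti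
    fun x hx => by linarith [hl hQ x hx]
  refine ⟨_, L / p, div_nonpos_of_nonpos_of_nonneg hL hp.le, ?_, Eventually.of_forall happ⟩
  have hCx : Tendsto (fun x => C * x) (nhdsWithin 0 (Ioi 0) ⊓ ae volume) (nhds (C * 0)) :=
    ((continuous_const_mul C).tendsto 0).mono_left (inf_le_left.trans nhdsWithin_le_nhds)
  have := (hlim.add hCx).div_const p
  rw [mul_zero, add_zero] at this
  refine this.congr fun x => ?_
  field_simp
  ring

/-- The boundary entropy condition at the right end point. -/
lemma exists_nonneg_boundary_flux (h : IsViscousLimit T p v0 M e u w) (hT : 0 < T) (hp : 0 < p)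
    (hFQ : IsLaxPair F Q) (hQ : Q 1 = 0) (hφ : ContinuousOn φ (Icc 0 T))
    (hφ0 : ∀ t ∈ Icc 0 T, 0 ≤ φ t) :
    ∃ L ≥ (0 : ℝ), Tendsto (fun x => ∫ t in (0 : ℝ)..T, φ t * Q (w (t, x)))
      (nhdsWithin 1 (Iio 1) ⊓ ae volume) (nhds L) := by
  refine exists_mem_tendsto_of_uniform_approx isClosed_Ici fun η hη => ?_
  obtain ⟨χ, hχ, hχ0, happ⟩ := h.exists_smooth_weight_approx hT hFQ.2.1.continuous hφ hφ0 hη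
  obtain ⟨S, hS, hae, C, hanti, -, hr⟩ := h.exists_flux_bound hT hp hFQ hχ hχ0
  obtain ⟨L, hL, hlim⟩ := exists_nonneg_essential_limit_left hS hae
    (D := fun x => ((p * ∫ t in (0 : ℝ)..T, χ t * Q (w (t, x))) - C * x) + C)
    (fun x hx y hy hxy => by linarith [hanti hx hy hxy])
    fun x hx => by linarith [hr hQ x hx]
  refine ⟨_, L / p, div_nonneg hL hp.le, ?_, Eventually.of_forall happ⟩
  have hCx : Tendsto (fun x => C * x - C) (nhdsWithin 1 (Iio 1) ⊓ ae volume) (nhds (C * 1 - C)) :=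
    (((continuous_const_mul C).sub continuous_const).tendsto 1).mono_left
      (inf_le_left.trans nhdsWithin_le_nhds)
  have := (hlim.add hCx).div_const p
  rw [mul_one, sub_self, add_zero] at this
  refine this.congr fun x => ?_
  field_simp
  ring

end IsViscousLimit

/-- Theorem 2.8, zero-flux boundary case: vanishing viscosity limit of the viscous
conservation law with zero-flux boundary conditions converges (weak-⋆ in `L^∞`) to the
entropy solution with boundary data `v₋ = 0`, `v₊ = 1`. -/
theorem stmt5 (T p : ℝ) (hT : 0 < T) (hp : 0 < p)
    (v0 : ℝ → ℝ) (hv0sm : ContDiff ℝ (⊤ : ℕ∞) v0)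
    (hv0b : ∀ x ∈ Set.Icc (0:ℝ) 1, v0 x ∈ Set.Icc (0:ℝ) 1)
    (u : ℝ → ℝ × ℝ → ℝ)
    (hsm : ∀ ε > (0:ℝ), ContDiff ℝ (⊤ : ℕ∞) (u ε))
    (hub : ∀ ε > (0:ℝ), ∀ z ∈ Set.Icc (0:ℝ) T ×ˢ Set.Icc (0:ℝ) 1, u ε z ∈ Set.Icc (0:ℝ) 1)
    (hpde : ∀ ε > (0:ℝ), ∀ t ∈ Set.Ioo 0 T, ∀ x ∈ Set.Ioo (0:ℝ) 1,
      deriv (fun s => u ε (s, x)) t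
        = ε * deriv (deriv (fun y => u ε (t, y))) x
          - p * deriv (fun y => J (u ε (t, y))) x)
    (hinit : ∀ ε > (0:ℝ), ∀ x ∈ Set.Icc (0:ℝ) 1, u ε (0, x) = v0 x)
    (hbc0 : ∀ ε > (0:ℝ), ∀ t ∈ Set.Icc (0:ℝ) T,
      ε * deriv (fun y => u ε (t, y)) 0 - p * J (u ε (t, 0)) = 0)
    (hbc1 : ∀ ε > (0:ℝ), ∀ t ∈ Set.Icc (0:ℝ) T,
      ε * deriv (fun y => u ε (t, y)) 1 - p * J (u ε (t, 1)) = 0) :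
    ∃ w : ℝ × ℝ → ℝ, Measurable w ∧
      (∀ᵐ z ∂(volume.restrict (Set.Icc (0:ℝ) T ×ˢ Set.Icc (0:ℝ) 1)), w z ∈ Set.Icc (0:ℝ) 1) ∧
      -- weak-⋆ convergence in L^∞([0,T]×[0,1]) as ε → 0⁺
      (∀ g : ℝ × ℝ → ℝ, IntegrableOn g (Set.Icc (0:ℝ) T ×ˢ Set.Icc (0:ℝ) 1) →
        Tendsto (fun ε => ∫ z in Set.Icc (0:ℝ) T ×ˢ Set.Icc (0:ℝ) 1, u ε z * g z)
          (nhdsWithin 0 (Set.Ioi 0))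
          (nhds (∫ z in Set.Icc (0:ℝ) T ×ˢ Set.Icc (0:ℝ) 1, w z * g z))) ∧
      -- (i) the entropy inequality
      (∀ F Q : ℝ → ℝ, IsLaxPair F Q → ∀ ψ : ℝ × ℝ → ℝ,
        ContDiff ℝ (⊤ : ℕ∞) ψ → HasCompactSupport ψ →
        tsupport ψ ⊆ Set.Ioo 0 T ×ˢ Set.Ioo (0:ℝ) 1 → (∀ z, 0 ≤ ψ z) →
        0 ≤ ∫ z in Set.Ioo (0:ℝ) T ×ˢ Set.Ioo (0:ℝ) 1,
              (F (w z) * fderiv ℝ ψ z (1, 0) + p * Q (w z) * fderiv ℝ ψ z (0, 1))) ∧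
      -- (ii) the initial condition, as an essential limit t → 0+
      Tendsto (fun t => ∫ x in (0:ℝ)..1, |w (t, x) - v0 x|)
        (nhdsWithin 0 (Set.Ioi 0) ⊓ ae volume) (nhds 0) ∧
      -- (iii) the Otto boundary conditions with data v₋ = 0, v₊ = 1
      (∀ F Q : ℝ → ℝ → ℝ, IsBoundaryPair F Q →
        ∀ φ : ℝ → ℝ, ContinuousOn φ (Set.Icc 0 T) → (∀ t ∈ Set.Icc (0:ℝ) T, 0 ≤ φ t) →
        (∃ Lm ≤ (0:ℝ), Tendsto (fun x => ∫ t in (0:ℝ)..T, φ t * Q (w (t, x)) 0)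
            (nhdsWithin 0 (Set.Ioi 0) ⊓ ae volume) (nhds Lm)) ∧
        (∃ Lp, 0 ≤ Lp ∧ Tendsto (fun x => ∫ t in (0:ℝ)..T, φ t * Q (w (t, x)) 1)
            (nhdsWithin 1 (Set.Iio 1) ⊓ ae volume) (nhds Lp))) := by
  have hsol : ∀ ε > 0, IsViscousSolution T p ε v0 (u ε) := fun ε hε =>
    IsViscousSolution.of_interior hT (hsm ε hε) (hub ε hε) (hpde ε hε) (hinit ε hε)
      (hbc0 ε hε) (hbc1 ε hε)
  obtain ⟨B, -, hB⟩ := (hv0sm.continuous_deriv (by simp)).exists_abs_le_Icc 0 1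
  obtain ⟨w, hwm, hwb, hw⟩ := exists_tendstoInMeasure_viscous hT hp hv0sm hB hsol
  obtain ⟨e, he⟩ := exists_isViscousLimit hT hp hv0sm hB hsol hwm hwb hw
  refine ⟨w, hwm, Eventually.of_forall hwb, fun g hg => ?_, fun F Q hFQ ψ hψ hcs hsupp hψ0 => ?_,
    he.tendsto_initial hT hp hv0sm hB, fun F Q hFQ φ hφ hφ0 => ⟨?_, ?_⟩⟩
  · refine tendsto_integral_mul_of_tendstoInMeasure hg
      (fun ε hε => (hsm ε hε).continuous.aestronglyMeasurable) (fun ε hε => ?_) hw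
    filter_upwards [ae_restrict_mem (measurableSet_Icc.prod measurableSet_Icc)] with z hz
      using hub ε hε z hz
  · exact he.entropy_inequality hT hFQ (hψ.of_le (by simp)) hcs hsupp hψ0
  · obtain ⟨hlax, -, -, hQ⟩ := hFQ 0 (by simp)
    exact he.exists_nonpos_boundary_flux hT hp hlax hQ hφ hφ0
  · obtain ⟨hlax, -, -, hQ⟩ := hFQ 1 (by simp)
    exact he.exists_nonneg_boundary_flux hT hp hlax hQ hφ hφ0
end

section
/- Fix T > 0, p > 0 and constants α, β, γ, δ ≥ 0. There exists a constant C, depending only on p, T, α, β, γ, δ (and not on ε), such that for every ε > 0 and every u ∈ C^∞([0,T]×[0,1]) with 0 ≤ u ≤ 1 satisfying ∂_t u = ε ∂_x² u − p ∂_x[J(u)] on (0,T)×(0,1) and the Robin boundary conditions [ε∂_x u − pJ(u) + α − (α+γ)u]|_{x=0} = 0 and [ε∂_x u − pJ(u) − δ + (β+δ)u]|_{x=1} = 0 for all t ∈ [0,T], one has ε ∫₀ᵀ ∫₀¹ (∂_x u(t,x))² dx dt ≤ C. (The uniform H¹-type estimate (eq. v1) in the proof of Theorem 2.8.) -/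
open Set MeasureTheory

/-- The energy identity tested against `u`: in divergence form,
`∂ₜ(-u²/2) + ∂ₓ(ε u v - p (u²/2 - 2u³/3)) = ε v²` integrates over the rectangle to boundary terms. -/
lemma integral_sq_eq_boundary {T p ε : ℝ} (hT : 0 < T) {u v : ℝ × ℝ → ℝ}
    (hu : ContDiff ℝ 1 u) (hv : ContDiff ℝ 1 v)
    (hvu : ∀ z, fderiv ℝ u z (0, 1) = v z)
    (heq : ∀ z ∈ Ioo (0:ℝ) T ×ˢ Ioo (0:ℝ) 1,
      fderiv ℝ u z (1, 0) = ε * fderiv ℝ v z (0, 1) - p * ((1 - 2 * u z) * v z)) :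
    ε * ∫ z in Icc (0:ℝ) T ×ˢ Icc (0:ℝ) 1, v z ^ 2 =
      (((∫ t in (0:ℝ)..T,
            (ε * (u (t, 1) * v (t, 1)) - p * (u (t, 1) ^ 2 / 2 - 2 / 3 * u (t, 1) ^ 3))) -
          ∫ t in (0:ℝ)..T,
            (ε * (u (t, 0) * v (t, 0)) - p * (u (t, 0) ^ 2 / 2 - 2 / 3 * u (t, 0) ^ 3))) +
        ∫ x in (0:ℝ)..1, -(u (T, x) ^ 2 / 2)) - ∫ x in (0:ℝ)..1, -(u (0, x) ^ 2 / 2) := by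
  have hcu := hu.continuous
  have hcv := hv.continuous
  have hcu' := hu.continuous_fderiv one_ne_zero
  have hcv' := hv.continuous_fderiv one_ne_zero
  have hdu (z) : HasFDerivAt u (fderiv ℝ u z) z :=
    (hu.differentiable one_ne_zero z).hasFDerivAt
  have hdv (z) : HasFDerivAt v (fderiv ℝ v z) z :=
    (hv.differentiable one_ne_zero z).hasFDerivAt
  have hdf (z) : HasFDerivAt (fun z => -(u z ^ 2 / 2)) (-(u z) • fderiv ℝ u z) z := by
    have h : HasDerivAt (fun w : ℝ => -(w ^ 2 / 2)) (-(u z)) (u z) := by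
      refine ((hasDerivAt_pow 2 (u z)).div_const 2).neg.congr_deriv ?_
      norm_num
    exact h.comp_hasFDerivAt z (hdu z)
  have hdg (z) : HasFDerivAt
      (fun z => ε * (u z * v z) - p * (u z ^ 2 / 2 - 2 / 3 * u z ^ 3))
      (ε • (u z • fderiv ℝ v z + v z • fderiv ℝ u z)
        - (p * (u z - 2 * u z ^ 2)) • fderiv ℝ u z) z := by
    have h : HasDerivAt (fun w : ℝ => p * (w ^ 2 / 2 - 2 / 3 * w ^ 3))
        (p * (u z - 2 * u z ^ 2)) (u z) := by
      refine ((((hasDerivAt_pow 2 (u z)).div_const 2).sub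
        ((hasDerivAt_pow 3 (u z)).const_mul (2 / 3))).const_mul p).congr_deriv ?_
      push_cast
      ring
    exact (((hdu z).mul (hdv z)).const_mul ε).sub (h.comp_hasFDerivAt z (hdu z))
  have hdiv : EqOn (fun z => (-(u z) • fderiv ℝ u z) (1, 0)
      + (ε • (u z • fderiv ℝ v z + v z • fderiv ℝ u z)
        - (p * (u z - 2 * u z ^ 2)) • fderiv ℝ u z) (0, 1))
      (fun z => ε * v z ^ 2) (Icc (0:ℝ) T ×ˢ Icc (0:ℝ) 1) := by
    have hopen : EqOn (fun z => (-(u z) • fderiv ℝ u z) (1, 0)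
        + (ε • (u z • fderiv ℝ v z + v z • fderiv ℝ u z)
          - (p * (u z - 2 * u z ^ 2)) • fderiv ℝ u z) (0, 1))
        (fun z => ε * v z ^ 2) (Ioo (0:ℝ) T ×ˢ Ioo (0:ℝ) 1) := by
      intro z hz
      simp only [smul_apply, sub_apply,
        add_apply, smul_eq_mul, hvu, heq z hz]
      ring
    have hclosed := hopen.closure (by fun_prop) (by fun_prop)
    rwa [closure_prod_eq, closure_Ioo hT.ne, closure_Ioo zero_ne_one] at hclosed
  have hmeas : MeasurableSet (Icc (0:ℝ) T ×ˢ Icc (0:ℝ) 1) :=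
    measurableSet_Icc.prod measurableSet_Icc
  rw [← integral_const_mul, ← setIntegral_congr_fun hmeas hdiv, Icc_prod_Icc]
  exact integral_divergence_prod_Icc_of_hasFDerivAt_of_le
    (fun z => -(u z ^ 2 / 2))
    (fun z => ε * (u z * v z) - p * (u z ^ 2 / 2 - 2 / 3 * u z ^ 3))
    _ _ (0, 0) (T, 1) ⟨hT.le, zero_le_one⟩
    (by fun_prop) (by fun_prop) (fun z _ => hdf z) (fun z _ => hdg z)
    (Continuous.integrableOn_Icc (by fun_prop))

/-- A continuous function bounded above by `c` on `[a, b]` has integral at most `(b - a) * c`. -/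
lemma intervalIntegral_le_mul_of_le {f : ℝ → ℝ} {a b c : ℝ} (hab : a ≤ b) (hf : Continuous f)
    (h : ∀ x ∈ Icc a b, f x ≤ c) : ∫ x in a..b, f x ≤ (b - a) * c := by
  simpa using intervalIntegral.integral_mono_on hab (hf.intervalIntegrable a b)
    (intervalIntegrable_const (μ := volume) (c := c)) h

/-- A continuous function bounded below by `c` on `[a, b]` has integral at least `(b - a) * c`. -/
lemma mul_le_intervalIntegral_of_le {f : ℝ → ℝ} {a b c : ℝ} (hab : a ≤ b) (hf : Continuous f)
    (h : ∀ x ∈ Icc a b, c ≤ f x) : (b - a) * c ≤ ∫ x in a..b, f x := by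
  simpa using intervalIntegral.integral_mono_on hab
    (intervalIntegrable_const (μ := volume) (c := c)) (hf.intervalIntegrable a b) h

/-- A partial derivative in the second variable is the Fréchet derivative applied to `(0, 1)`. -/
lemma deriv_snd_eq_fderiv {w : ℝ × ℝ → ℝ} (hw : Differentiable ℝ w) (t x : ℝ) :
    deriv (fun y => w (t, y)) x = fderiv ℝ w (t, x) (0, 1) :=
  ((hw (t, x)).hasFDerivAt.comp_hasDerivAt x
    ((hasDerivAt_const x t).prodMk (hasDerivAt_id x))).deriv

/-- A partial derivative in the first variable is the Fréchet derivative applied to `(1, 0)`. -/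
lemma deriv_fst_eq_fderiv {w : ℝ × ℝ → ℝ} (hw : Differentiable ℝ w) (t x : ℝ) :
    deriv (fun s => w (s, x)) t = fderiv ℝ w (t, x) (1, 0) :=
  ((hw (t, x)).hasFDerivAt.comp_hasDerivAt t
    ((hasDerivAt_id t).prodMk (hasDerivAt_const t x))).deriv

/-- The uniform H¹-type estimate (eq. v1) in the proof of Theorem 2.8:
`ε ∫₀ᵀ∫₀¹ (∂ₓu)² dx dt ≤ C` uniformly in `ε`, for solutions of the viscous
conservation law with Robin boundary conditions. -/
theorem stmt6 (T p α β γ δ : ℝ) (hT : 0 < T) (hp : 0 < p)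
    (hα : 0 ≤ α) (hβ : 0 ≤ β) (hγ : 0 ≤ γ) (hδ : 0 ≤ δ) :
    ∃ C : ℝ, ∀ ε > (0:ℝ), ∀ u : ℝ × ℝ → ℝ,
      ContDiff ℝ (⊤ : ℕ∞) u →
      (∀ z ∈ Set.Icc (0:ℝ) T ×ˢ Set.Icc (0:ℝ) 1, u z ∈ Set.Icc (0:ℝ) 1) →
      (∀ t ∈ Set.Ioo (0:ℝ) T, ∀ x ∈ Set.Ioo (0:ℝ) 1,
        deriv (fun s => u (s, x)) t
          = ε * deriv (deriv (fun y => u (t, y))) x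
            - p * deriv (fun y => J (u (t, y))) x) →
      (∀ t ∈ Set.Icc (0:ℝ) T,
        ε * deriv (fun y => u (t, y)) 0 - p * J (u (t, 0))
          + α - (α + γ) * u (t, 0) = 0) →
      (∀ t ∈ Set.Icc (0:ℝ) T,
        ε * deriv (fun y => u (t, y)) 1 - p * J (u (t, 1))
          - δ + (β + δ) * u (t, 1) = 0) →
      ε * ∫ z in Set.Icc (0:ℝ) T ×ˢ Set.Icc (0:ℝ) 1,
            (deriv (fun y => u (z.1, y)) z.2)^2 ≤ C := by
  refine ⟨T * (p + δ + α) + 1 / 2, fun ε _ u hu hrange hpde hleft hright => ?_⟩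
  set v : ℝ × ℝ → ℝ := fun z => fderiv ℝ u z (0, 1)
  have hu1 : ContDiff ℝ 1 u := contDiff_infty.1 hu 1
  have hu2 : ContDiff ℝ 2 u := contDiff_infty.1 hu 2
  have hv1 : ContDiff ℝ 1 v :=
    (hu2.fderiv_right (m := 1) (by norm_num)).clm_apply contDiff_const
  have hdu : Differentiable ℝ u := hu1.differentiable one_ne_zero
  have hcu := hu1.continuous
  have hcv := hv1.continuous
  have hux (t x : ℝ) : deriv (fun y => u (t, y)) x = v (t, x) := deriv_snd_eq_fderiv hdu t x
  have huxx (t x : ℝ) : deriv (deriv (fun y => u (t, y))) x = fderiv ℝ v (t, x) (0, 1) := by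
    rw [funext (hux t), deriv_snd_eq_fderiv (hv1.differentiable one_ne_zero)]
  have hJ (t x : ℝ) :
      deriv (fun y => J (u (t, y))) x = (1 - 2 * u (t, x)) * v (t, x) := by
    have h : HasDerivAt (fun y => u (t, y)) (v (t, x)) x := by
      rw [← hux]
      exact DifferentiableAt.hasDerivAt (by fun_prop)
    have h' := (h.mul (h.const_sub 1)).deriv
    simp only [J]
    refine h'.trans ?_
    ring
  simp only [hux] at hleft hright ⊢
  rw [integral_sq_eq_boundary hT hu1 hv1 (fun _ => rfl) (p := p) (fun z hz => by
    rw [← hJ z.1 z.2, ← huxx z.1 z.2, ← hpde z.1 hz.1 z.2 hz.2, deriv_fst_eq_fderiv hdu])]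
  have hrt : ∀ t ∈ Icc (0:ℝ) T,
      ε * (u (t, 1) * v (t, 1)) - p * (u (t, 1) ^ 2 / 2 - 2 / 3 * u (t, 1) ^ 3) ≤ p + δ := by
    intro t ht
    obtain ⟨h0, h1⟩ := hrange (t, 1) ⟨ht, by simp⟩
    have hb := hright t ht
    simp only [J] at hb
    have hflux : ε * (u (t, 1) * v (t, 1)) = u (t, 1) *
        (p * (u (t, 1) * (1 - u (t, 1))) + δ - (β + δ) * u (t, 1)) := by
      linear_combination u (t, 1) * hb
    rw [hflux]
    generalize u (t, 1) = w at h0 h1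
    have hsq : w ^ 2 ≤ 1 := pow_le_one₀ h0 h1
    have hpoly : p * (w ^ 2 / 2 - w ^ 3 / 3) ≤ p * 1 :=
      mul_le_mul_of_nonneg_left (by nlinarith [pow_nonneg h0 3]) hp.le
    have hδw : δ * w ≤ δ * 1 := mul_le_mul_of_nonneg_left h1 hδ
    have hsink : 0 ≤ (β + δ) * w ^ 2 := by positivity
    linarith
  have hlt : ∀ t ∈ Icc (0:ℝ) T,
      -α ≤ ε * (u (t, 0) * v (t, 0)) - p * (u (t, 0) ^ 2 / 2 - 2 / 3 * u (t, 0) ^ 3) := by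
    intro t ht
    obtain ⟨h0, h1⟩ := hrange (t, 0) ⟨ht, by simp⟩
    have hb := hleft t ht
    simp only [J] at hb
    have hflux : ε * (u (t, 0) * v (t, 0)) = u (t, 0) *
        (p * (u (t, 0) * (1 - u (t, 0))) - α + (α + γ) * u (t, 0)) := by
      linear_combination u (t, 0) * hb
    rw [hflux]
    generalize u (t, 0) = w at h0 h1
    have hpoly : 0 ≤ p * (w ^ 2 * (1 / 2 - w / 3)) :=
      mul_nonneg hp.le (mul_nonneg (sq_nonneg w) (by linarith))
    have hαw : α * w ≤ α * 1 := mul_le_mul_of_nonneg_left h1 hα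
    have hsource : 0 ≤ (α + γ) * w ^ 2 := by positivity
    linarith
  have hright_int := intervalIntegral_le_mul_of_le hT.le (by fun_prop) hrt
  have hleft_int := mul_le_intervalIntegral_of_le hT.le (by fun_prop) hlt
  have hfinal := intervalIntegral_le_mul_of_le (f := fun x => -(u (T, x) ^ 2 / 2)) (c := 0)
    zero_le_one (by fun_prop) (fun x _ => by have := sq_nonneg (u (T, x)); linarith)
  have hinit := mul_le_intervalIntegral_of_le (f := fun x => -(u (0, x) ^ 2 / 2)) (c := -(1 / 2))
    zero_le_one (by fun_prop) (fun x hx => by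
      obtain ⟨h0, h1⟩ := hrange (0, x) ⟨⟨le_rfl, hT.le⟩, hx⟩
      have := pow_le_one₀ (n := 2) h0 h1
      linarith)
  linarith
end

section
/- Let p > 0, α, γ ≥ 0, set v₋ = (p+α+γ−√((p−α+γ)²+4αγ))/(2p) and 𝔧(u) = p u(1−u) + (α+γ)u − α. Then for every boundary entropy flux pair (ℱ,𝒬) and every u ∈ [0,1], ∂_u ℱ(u, v₋) · 𝔧(u) − p 𝒬(u, v₋) ≥ 0. (Claim (eq. v2) in the proof of Theorem 2.8.) -/
open Set

/-- The zero `vm` of the boundary flux lies in `[0, 1]`, and the flux factors through it with a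
cofactor that is nonnegative on `[0, 1]`. -/
lemma boundaryFlux_factor {p α γ vm : ℝ} (hp : 0 < p) (hα : 0 ≤ α) (hγ : 0 ≤ γ)
    (hvm : vm = (p + α + γ - Real.sqrt ((p - α + γ)^2 + 4*α*γ)) / (2*p)) :
    vm ∈ Icc (0:ℝ) 1 ∧ ∃ w : ℝ, 1 ≤ w ∧ ∀ u : ℝ,
      p * (u * (1 - u)) + (α + γ) * u - α = p * (u - vm) * (w - u) := by
  have hD : 0 ≤ (p - α + γ)^2 + 4*α*γ := by positivity
  set s := Real.sqrt ((p - α + γ)^2 + 4*α*γ)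
  have hsq : s ^ 2 = (p - α + γ)^2 + 4*α*γ := Real.sq_sqrt hD
  have hpα : 0 ≤ p * α := by positivity
  have hpγ : 0 ≤ p * γ := by positivity
  have hs_le : s ≤ p + α + γ := Real.sqrt_le_iff.2 ⟨by positivity, by nlinarith⟩
  have hle_s : |p - α - γ| ≤ s := Real.abs_le_sqrt (by nlinarith)
  obtain ⟨h₁, h₂⟩ := abs_le.1 hle_s
  refine ⟨⟨?_, ?_⟩, (p + α + γ + s) / (2*p), ?_, fun u => ?_⟩
  · rw [hvm]
    exact div_nonneg (by linarith) (by positivity)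
  · rw [hvm, div_le_one (by positivity)]
    linarith
  · rw [one_le_div (by positivity)]
    linarith
  · rw [hvm]
    field_simp
    linear_combination (-1) * hsq

/-- A differentiable function on `[0, 1]` whose derivative changes sign from nonpositive to
nonnegative at `v` attains its minimum there. -/
lemma le_of_deriv_sign_change {G : ℝ → ℝ} {v : ℝ} (hG : Differentiable ℝ G)
    (hv : v ∈ Icc (0:ℝ) 1) (hneg : ∀ u ∈ Icc 0 v, deriv G u ≤ 0)
    (hpos : ∀ u ∈ Icc v 1, 0 ≤ deriv G u) {u : ℝ} (hu : u ∈ Icc (0:ℝ) 1) : G v ≤ G u := by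
  rcases le_total u v with h | h
  · exact antitoneOn_of_deriv_nonpos (convex_Icc 0 v) hG.continuous.continuousOn
      hG.differentiableOn (fun x hx => hneg x (interior_subset hx))
      ⟨hu.1, h⟩ ⟨hv.1, le_rfl⟩ h
  · exact monotoneOn_of_deriv_nonneg (convex_Icc v 1) hG.continuous.continuousOn
      hG.differentiableOn (fun x hx => hpos x (interior_subset hx))
      ⟨le_rfl, hv.2⟩ ⟨h, hu.2⟩ h

/-- Claim (eq. v2) in the proof of Theorem 2.8:
`∂_u ℱ(u, v₋) · 𝔧(u) − p 𝒬(u, v₋) ≥ 0` for every boundary entropy flux pair,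
where `𝔧(u) = pJ(u) + (α+γ)u − α` is the stationary boundary flux at `x = 0`. -/
theorem stmt7 (p α γ : ℝ) (hp : 0 < p) (hα : 0 ≤ α) (hγ : 0 ≤ γ)
    (vm : ℝ) (hvm : vm = (p + α + γ - Real.sqrt ((p - α + γ)^2 + 4*α*γ)) / (2*p)) :
    ∀ F Q : ℝ → ℝ → ℝ, IsBoundaryPair F Q →
      ∀ u ∈ Set.Icc (0:ℝ) 1,
        0 ≤ deriv (fun w => F w vm) u * (p * (u * (1 - u)) + (α + γ) * u - α)
              - p * Q u vm := by
  intro F Q hFQ u hu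
  obtain ⟨hv, w, hw, hj⟩ := boundaryFlux_factor hp hα hγ hvm
  obtain ⟨⟨hF, hQ, hQF, hF2⟩, -, hF0, hQ0⟩ := hFQ vm hv
  set f : ℝ → ℝ := deriv (fun u => F u vm)
  have hfd : Differentiable ℝ f :=
    ((contDiff_succ_iff_deriv (n := 1)).1 hF).2.2.differentiable one_ne_zero
  have hQd : Differentiable ℝ (fun u => Q u vm) := hQ.differentiable two_ne_zero
  have hmono : MonotoneOn f (Icc 0 1) :=
    monotoneOn_of_deriv_nonneg (convex_Icc 0 1) hfd.continuous.continuousOn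
      hfd.differentiableOn fun x hx => hF2 x (interior_subset hx)
  set G : ℝ → ℝ := fun u => f u * (p * (u * (1 - u)) + (α + γ) * u - α) - p * Q u vm with hG
  have hGd : Differentiable ℝ G := by fun_prop
  have hGderiv : ∀ x ∈ Icc (0:ℝ) 1,
      deriv G x = deriv f x * (p * (x - vm) * (w - x)) + (α + γ) * f x := by
    intro x hx
    have hjx : HasDerivAt (fun u : ℝ => p * (u * (1 - u)) + (α + γ) * u - α)
        (p * (1 * (1 - x) + x * (-1)) + (α + γ) * 1) x :=
      ((((hasDerivAt_id x).mul ((hasDerivAt_id x).const_sub 1)).const_mul p).add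
        ((hasDerivAt_id x).const_mul (α + γ))).sub_const α
    have h := ((hfd x).hasDerivAt.mul hjx).sub ((hQd x).hasDerivAt.const_mul p)
    rw [hQF x hx, hj x] at h
    refine h.deriv.trans ?_
    ring
  have hGv : G vm = 0 := by simp [hG, hF0, hQ0]
  rw [← hGv]
  refine le_of_deriv_sign_change hGd hv (fun x hx => ?_) (fun x hx => ?_) hu
  · have hx1 : x ∈ Icc (0:ℝ) 1 := ⟨hx.1, hx.2.trans hv.2⟩
    have hfx : f x ≤ 0 := hF0 ▸ hmono hx1 hv hx.2
    have hjx : p * (x - vm) * (w - x) ≤ 0 :=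
      mul_nonpos_of_nonpos_of_nonneg
        (mul_nonpos_of_nonneg_of_nonpos hp.le (sub_nonpos.2 hx.2)) (by linarith [hx1.2])
    rw [hGderiv x hx1]
    exact add_nonpos (mul_nonpos_of_nonneg_of_nonpos (hF2 x hx1) hjx)
      (mul_nonpos_of_nonneg_of_nonpos (add_nonneg hα hγ) hfx)
  · have hx1 : x ∈ Icc (0:ℝ) 1 := ⟨hv.1.trans hx.1, hx.2⟩
    have hfx : 0 ≤ f x := hF0 ▸ hmono hv hx1 hx.1
    have hjx : 0 ≤ p * (x - vm) * (w - x) :=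
      mul_nonneg (mul_nonneg hp.le (sub_nonneg.2 hx.1)) (by linarith [hx1.2])
    rw [hGderiv x hx1]
    exact add_nonneg (mul_nonneg (hF2 x hx1) hjx) (mul_nonneg (add_nonneg hα hγ) hfx)
end

section
/- Fix p > 0, T > 0 and y ∈ [0,1], and define ū_y : [0,1] → ℝ by ū_y(x) = 1 if x > y and ū_y(x) = 0 otherwise. Then the time-independent function u(t,x) = ū_y(x) satisfies the three conditions defining an entropy solution of ∂_t u + p∂_x[J(u)] = 0 on [0,T]×[0,1] with boundary data v₋ = 0, v₊ = 1 and initial datum v₀ = ū_y: (i) for every Lax entropy flux pair (F,Q) and every nonnegative ψ ∈ C_c^∞((0,T)×(0,1)), ∫₀ᵀ∫₀¹ [F(ū_y(x)) ∂_t ψ + p Q(ū_y(x)) ∂_x ψ] dx dt ≥ 0; (ii) ∫₀¹ |u(t,x) − ū_y(x)| dx = 0 for all t; (iii) for every boundary entropy flux pair (ℱ,𝒬) and every nonnegative φ ∈ C([0,T]), lim_{x→0+} ∫₀ᵀ φ(t) 𝒬(ū_y(x), 0) dt ≤ 0 and lim_{x→1−} ∫₀ᵀ φ(t) 𝒬(ū_y(x),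 1) dt ≥ 0. (The single upward-shock profiles ū_y are stationary entropy solutions, Section 2.5.) -/
open Set MeasureTheory intervalIntegral Filter

/-- The single upward-shock profile `ū_y`. -/
noncomputable def ubar (y x : ℝ) : ℝ := if y < x then 1 else 0

/-- The entropy flux does not increase between the two zeros `0` and `1` of `J`. -/
theorem IsLaxPair.flux_one_le_flux_zero {F Q : ℝ → ℝ} (h : IsLaxPair F Q) : Q 1 ≤ Q 0 := by
  obtain ⟨hF, hQ, hQF, hconv⟩ := h
  have hF' : Differentiable ℝ (deriv F) :=
    (hF.iterate_deriv' 1 1).differentiable one_ne_zero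
  have hQ' : Differentiable ℝ Q := hQ.differentiable two_ne_zero
  have hG : ∀ u, HasDerivAt (fun u => Q u - u * (1 - u) * deriv F u)
      (deriv Q u - ((1 - 2 * u) * deriv F u + u * (1 - u) * deriv (deriv F) u)) u := by
    intro u
    have h1 : HasDerivAt (fun u : ℝ => u * (1 - u)) (1 - 2 * u) u := by
      have := (hasDerivAt_id' u).mul ((hasDerivAt_id' u).const_sub 1)
      exact this.congr_deriv (by ring)
    exact (hQ' u).hasDerivAt.sub (h1.mul (hF' u).hasDerivAt)
  have hanti : AntitoneOn (fun u => Q u - u * (1 - u) * deriv F u) (Icc 0 1) := by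
    refine antitoneOn_of_deriv_nonpos (convex_Icc 0 1)
      (fun u _ => (hG u).continuousAt.continuousWithinAt)
      (fun u _ => (hG u).differentiableAt.differentiableWithinAt) fun u hu => ?_
    have hu' : u ∈ Icc (0 : ℝ) 1 := interior_subset hu
    rw [(hG u).deriv, hQF u hu']
    nlinarith [mul_nonneg (mul_nonneg hu'.1 (sub_nonneg.2 hu'.2)) (hconv u hu')]
  simpa using hanti (left_mem_Icc.2 zero_le_one) (right_mem_Icc.2 zero_le_one) zero_le_one

/-- Integrating a step function against the derivative of a compactly supported function
evaluates that function at the jump. -/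
theorem integral_step_mul_deriv {g : ℝ → ℝ} (hg : ContDiff ℝ 1 g) (hc : HasCompactSupport g)
    (y a b : ℝ) : ∫ x, (if y < x then a else b) * deriv g x = (b - a) * g y := by
  have hint : Integrable (deriv g) :=
    (hg.continuous_deriv le_rfl).integrable_of_hasCompactSupport hc.deriv
  have hmeas : Measurable fun x : ℝ => if y < x then a else b :=
    Measurable.ite measurableSet_Ioi measurable_const measurable_const
  have hstep : Integrable fun x => (if y < x then a else b) * deriv g x := by
    refine hint.bdd_mul (c := max |a| |b|) hmeas.aestronglyMeasurable
      (Eventually.of_forall fun x => ?_)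
    split_ifs <;> simp
  rw [← integral_add_compl (measurableSet_Ioi (a := y)) hstep, compl_Ioi,
    setIntegral_congr_fun (g := fun x => a * deriv g x) measurableSet_Ioi
      (fun x hx => by simp [mem_Ioi.1 hx]),
    setIntegral_congr_fun (g := fun x => b * deriv g x) measurableSet_Iic
      (fun x hx => by simp [not_lt.2 (mem_Iic.1 hx)]),
    MeasureTheory.integral_const_mul, MeasureTheory.integral_const_mul,
    hc.integral_Ioi_deriv_eq hg,
    hc.integral_Iic_deriv_eq hg]
  ring

theorem comp_ubar (f : ℝ → ℝ) (y x : ℝ) : f (ubar y x) = if y < x then f 1 else f 0 := by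
  unfold ubar
  split_ifs <;> rfl

section TestFunction

variable {ψ : ℝ × ℝ → ℝ}

theorem integrable_comp_ubar_mul_fderiv (hψ : ContDiff ℝ 1 ψ) (hc : HasCompactSupport ψ)
    (f : ℝ → ℝ) (y : ℝ) (v : ℝ × ℝ) :
    Integrable fun z : ℝ × ℝ => f (ubar y z.2) * fderiv ℝ ψ z v := by
  have hint : Integrable fun z : ℝ × ℝ => fderiv ℝ ψ z v :=
    ((hψ.continuous_fderiv one_ne_zero).clm_apply
      continuous_const).integrable_of_hasCompactSupport (hc.fderiv_apply ℝ v)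
  have hmeas : Measurable fun z : ℝ × ℝ => f (ubar y z.2) := by
    simp only [comp_ubar f]
    exact Measurable.ite (measurableSet_lt measurable_const measurable_snd) measurable_const
      measurable_const
  refine hint.bdd_mul (c := max |f 1| |f 0|) hmeas.aestronglyMeasurable
    (Eventually.of_forall fun z => ?_)
  rw [comp_ubar f]
  split_ifs <;> simp

theorem integral_comp_ubar_mul_fderiv_time (hψ : ContDiff ℝ 1 ψ) (hc : HasCompactSupport ψ)
    (f : ℝ → ℝ) (y : ℝ) : ∫ z : ℝ × ℝ, f (ubar y z.2) * fderiv ℝ ψ z (1, 0) = 0 := by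
  rw [Measure.volume_eq_prod,
    integral_prod_symm _ (integrable_comp_ubar_mul_fderiv hψ hc f y (1, 0))]
  refine integral_eq_zero_of_ae (Eventually.of_forall fun x => ?_)
  have hemb : Topology.IsClosedEmbedding fun t : ℝ => (t, x) :=
    Function.LeftInverse.isClosedEmbedding (f := Prod.fst) (fun _ => rfl) continuous_fst
      (by fun_prop)
  have hderiv : ∀ t, deriv (fun t => ψ (t, x)) t = fderiv ℝ ψ (t, x) (1, 0) := fun t =>
    ((hψ.differentiable one_ne_zero (t, x)).hasFDerivAt.comp_hasDerivAt t
      ((hasDerivAt_id' t).prodMk (hasDerivAt_const t x))).deriv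
  have := integral_step_mul_deriv (g := fun t => ψ (t, x)) (hψ.comp (by fun_prop))
    (hc.comp_isClosedEmbedding hemb) 0 (f (ubar y x)) (f (ubar y x))
  simpa [hderiv] using this

theorem integral_comp_ubar_mul_fderiv_space (hψ : ContDiff ℝ 1 ψ) (hc : HasCompactSupport ψ)
    (f : ℝ → ℝ) (y : ℝ) :
    ∫ z : ℝ × ℝ, f (ubar y z.2) * fderiv ℝ ψ z (0, 1) = (f 0 - f 1) * ∫ t, ψ (t, y) := by
  rw [Measure.volume_eq_prod,
    integral_prod _ (integrable_comp_ubar_mul_fderiv hψ hc f y (0, 1)),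
    ← MeasureTheory.integral_const_mul]
  refine integral_congr_ae (Eventually.of_forall fun t => ?_)
  have hemb : Topology.IsClosedEmbedding fun x : ℝ => (t, x) :=
    Function.LeftInverse.isClosedEmbedding (f := Prod.snd) (fun _ => rfl) continuous_snd
      (by fun_prop)
  have hderiv : ∀ x, deriv (fun x => ψ (t, x)) x = fderiv ℝ ψ (t, x) (0, 1) := fun x =>
    ((hψ.differentiable one_ne_zero (t, x)).hasFDerivAt.comp_hasDerivAt x
      ((hasDerivAt_const x t).prodMk (hasDerivAt_id' x))).deriv
  have := integral_step_mul_deriv (g := fun x => ψ (t, x)) (hψ.comp (by fun_prop))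
    (hc.comp_isClosedEmbedding hemb) y (f 1) (f 0)
  simpa only [hderiv, comp_ubar f] using this

end TestFunction

/-- The traces of `ū_y` at `0` and `1` take values in `{0, 1}`. -/
theorem exists_ubar_trace {y : ℝ} (hy : y ∈ Icc (0 : ℝ) 1) :
    (∃ c, (c = 0 ∨ c = 1) ∧ ∀ᶠ x in nhdsWithin 0 (Ioi 0), ubar y x = c) ∧
    (∃ c, (c = 0 ∨ c = 1) ∧ ∀ᶠ x in nhdsWithin 1 (Iio 1), ubar y x = c) := by
  constructor
  · rcases hy.1.eq_or_lt with rfl | h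
    · exact ⟨1, .inr rfl, by filter_upwards [self_mem_nhdsWithin] with x hx; exact if_pos hx⟩
    · refine ⟨0, .inl rfl, ?_⟩
      filter_upwards [nhdsWithin_le_nhds (Iio_mem_nhds h)] with x hx
      exact if_neg (not_lt.2 (le_of_lt hx))
  · rcases hy.2.eq_or_lt with rfl | h
    · refine ⟨0, .inl rfl, ?_⟩
      filter_upwards [self_mem_nhdsWithin] with x hx
      exact if_neg (not_lt.2 (le_of_lt hx))
    · exact ⟨1, .inr rfl, by
        filter_upwards [nhdsWithin_le_nhds (Ioi_mem_nhds h)] with x hx; exact if_pos hx⟩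

/-- Section 2.5: the single upward-shock profiles `ū_y` are stationary entropy
solutions of `∂_t u + p ∂_x J(u) = 0` with boundary data `v₋ = 0`, `v₊ = 1` and
initial datum `ū_y`. -/
theorem stmt9 (p T y : ℝ) (hp : 0 < p) (hT : 0 < T) (hy : y ∈ Set.Icc (0:ℝ) 1) :
    -- (i) the entropy inequality for the time-independent function u(t,x) = ū_y(x)
    (∀ F Q : ℝ → ℝ, IsLaxPair F Q → ∀ ψ : ℝ × ℝ → ℝ,
      ContDiff ℝ (⊤ : ℕ∞) ψ → HasCompactSupport ψ →
      tsupport ψ ⊆ Set.Ioo (0:ℝ) T ×ˢ Set.Ioo (0:ℝ) 1 → (∀ z, 0 ≤ ψ z) →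
      0 ≤ ∫ z in Set.Ioo (0:ℝ) T ×ˢ Set.Ioo (0:ℝ) 1,
            (F (ubar y z.2) * fderiv ℝ ψ z (1, 0)
              + p * Q (ubar y z.2) * fderiv ℝ ψ z (0, 1))) ∧
    -- (ii) the initial condition
    (∀ t : ℝ, (∫ x in (0:ℝ)..1, |ubar y x - ubar y x|) = 0) ∧
    -- (iii) the boundary conditions with data v₋ = 0, v₊ = 1
    (∀ F Q : ℝ → ℝ → ℝ, IsBoundaryPair F Q →
      ∀ φ : ℝ → ℝ, ContinuousOn φ (Set.Icc 0 T) → (∀ t ∈ Set.Icc (0:ℝ) T, 0 ≤ φ t) →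
      (∃ Lm ≤ (0:ℝ), Tendsto (fun x => ∫ t in (0:ℝ)..T, φ t * Q (ubar y x) 0)
          (nhdsWithin 0 (Set.Ioi 0)) (nhds Lm)) ∧
      (∃ Lp, 0 ≤ Lp ∧ Tendsto (fun x => ∫ t in (0:ℝ)..T, φ t * Q (ubar y x) 1)
          (nhdsWithin 1 (Set.Iio 1)) (nhds Lp))) := by
  refine ⟨fun F Q hFQ ψ hψ hc hsupp hnonneg => ?_, fun t => by simp, fun F Q hFQ φ _ hφ => ?_⟩
  · have hψ' : ContDiff ℝ 1 ψ := hψ.of_le (by exact_mod_cast le_top)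
    rw [setIntegral_eq_integral_of_forall_compl_eq_zero fun z hz => by
      simp [fderiv_of_notMem_tsupport ℝ fun h => hz (hsupp h)]]
    have hspace := integrable_comp_ubar_mul_fderiv hψ' hc (fun u => p * Q u) y (0, 1)
    rw [integral_add (integrable_comp_ubar_mul_fderiv hψ' hc F y (1, 0)) hspace,
      integral_comp_ubar_mul_fderiv_time hψ' hc,
      integral_comp_ubar_mul_fderiv_space hψ' hc (fun u => p * Q u), zero_add, ← mul_sub]
    exact mul_nonneg (mul_nonneg hp.le (sub_nonneg.2 hFQ.flux_one_le_flux_zero))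
      (integral_nonneg fun t => hnonneg _)
  · obtain ⟨⟨a, ha, hza⟩, b, hb, hzb⟩ := exists_ubar_trace hy
    obtain ⟨hlax₀, -, -, hQ₀⟩ := hFQ 0 (left_mem_Icc.2 zero_le_one)
    obtain ⟨hlax₁, -, -, hQ₁⟩ := hFQ 1 (right_mem_Icc.2 zero_le_one)
    have hle₀ : Q a 0 ≤ 0 := by
      rcases ha with rfl | rfl
      · exact hQ₀.le
      · exact hlax₀.flux_one_le_flux_zero.trans_eq hQ₀
    have hle₁ : 0 ≤ Q b 1 := by
      rcases hb with rfl | rfl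
      · exact hQ₁.symm.trans_le hlax₁.flux_one_le_flux_zero
      · exact hQ₁.ge
    have hint : 0 ≤ ∫ t in (0 : ℝ)..T, φ t := intervalIntegral.integral_nonneg hT.le hφ
    simp only [intervalIntegral.integral_mul_const]
    refine ⟨⟨_, mul_nonpos_of_nonneg_of_nonpos hint hle₀, ?_⟩,
      ⟨_, mul_nonneg hint hle₁, ?_⟩⟩
    · exact tendsto_const_nhds.congr' (hza.mono fun x hx => by simp only [hx])
    · exact tendsto_const_nhds.congr' (hzb.mono fun x hx => by simp only [hx])
end

section
/- Fix an integer n ≥ 2, real constants p, σ > 0, κ, θ ∈ ℝ, α, β, γ, δ ≥ 0, and an integer k ≥ 1 with n ≥ 2k + 1. Then for every k+1 ≤ i ≤ n−k and every η ∈ Ω_n, (L_n η̂_{i,k})(η) = n [ p (Ĵ_{i−1,k}(η) − Ĵ_{i,k}(η)) + σ n^κ (η̂_{i+1,k}(η) − 2η̂_{i,k}(η) + η̂_{i−1,k}(η)) ]; in particular the boundary generators L₋, L₊ give no contribution. (Identity (eq. current).) -/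
open Finset

/-- Exchange the values of a configuration at sites `i` and `i+1`. -/
def swapC (η : ℕ → ℝ) (i : ℕ) : ℕ → ℝ :=
  fun j => if j = i then η (i+1) else if j = i+1 then η i else η j

/-- Flip the value (`a ↦ 1 - a`) of a configuration at site `i`. -/
def flipC (η : ℕ → ℝ) (i : ℕ) : ℕ → ℝ :=
  fun j => if j = i then 1 - η i else η j

/-- Generator of the totally asymmetric simple exclusion on `{1,…,n}`. -/
def Lta (n : ℕ) (f : (ℕ → ℝ) → ℝ) (η : ℕ → ℝ) : ℝ :=
  ∑ i ∈ Finset.Icc 1 (n-1), η i * (1 - η (i+1)) * (f (swapC η i) - f η)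

/-- Generator of the symmetric simple exclusion on `{1,…,n}`. -/
def Lss (n : ℕ) (f : (ℕ → ℝ) → ℝ) (η : ℕ → ℝ) : ℝ :=
  ∑ i ∈ Finset.Icc 1 (n-1), (f (swapC η i) - f η)

/-- Generator of the left reservoir, acting at site `1`. -/
def Lminus (α γ : ℝ) (f : (ℕ → ℝ) → ℝ) (η : ℕ → ℝ) : ℝ :=
  (α * (1 - η 1) + γ * η 1) * (f (flipC η 1) - f η)

/-- Generator of the right reservoir, acting at site `n`. -/
def Lplus (n : ℕ) (β δ : ℝ) (f : (ℕ → ℝ) → ℝ) (η : ℕ → ℝ) : ℝ :=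
  (δ * (1 - η n) + β * η n) * (f (flipC η n) - f η)

/-- The full generator `L_n = n[p L_ta + σ n^κ L_ss + n^θ (L₋ + L₊)]`. -/
noncomputable def Ln (n : ℕ) (p σ κ θ α β γ δ : ℝ) (f : (ℕ → ℝ) → ℝ) (η : ℕ → ℝ) : ℝ :=
  (n : ℝ) * (p * Lta n f η + σ * (n:ℝ)^κ * Lss n f η
    + (n:ℝ)^θ * (Lminus α γ f η + Lplus n β δ f η))

/-- The smoothly weighted average `η̂_{i,k}` with weights `w_{i'} = (k - |i'|)/k²`. -/
noncomputable def hatEta (k i : ℕ) (η : ℕ → ℝ) : ℝ :=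
  ∑ j ∈ Finset.Icc (i+1-k) (i+k-1),
    ((((k:ℤ) - |(i:ℤ) - (j:ℤ)|) : ℤ) : ℝ) / (k:ℝ)^2 * η j

/-- The smoothly weighted current `Ĵ_{i,k}`. -/
noncomputable def hatJ (k i : ℕ) (η : ℕ → ℝ) : ℝ :=
  ∑ j ∈ Finset.Icc (i+1-k) (i+k-1),
    ((((k:ℤ) - |(i:ℤ) - (j:ℤ)|) : ℤ) : ℝ) / (k:ℝ)^2 * (η j * (1 - η (j+1)))

/-- The triangular weight `(k - |i - j|)⁺ / k²`, extended by zero to all sites. -/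
noncomputable def tentWeight (k i j : ℕ) : ℝ :=
  ((max ((k:ℤ) - |(i:ℤ) - (j:ℤ)|) 0 : ℤ) : ℝ) / (k:ℝ)^2

lemma tentWeight_eq_zero {k i j : ℕ} (h : i + k ≤ j ∨ j + k ≤ i) : tentWeight k i j = 0 := by
  have : max ((k:ℤ) - |(i:ℤ) - (j:ℤ)|) 0 = 0 := by
    rw [max_eq_right]
    rcases h with h | h
    · rw [abs_of_nonpos] <;> omega
    · rw [abs_of_nonneg] <;> omega
  simp [tentWeight, this]

lemma tentWeight_succ_succ (k i j : ℕ) : tentWeight k (i+1) (j+1) = tentWeight k i j := by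
  simp [tentWeight]

/-- A sum against the weights in a window equals the sum against `tentWeight` over any range
containing the window. -/
lemma sum_window_eq_sum_range {k i N : ℕ} (hk : 1 ≤ k) (hN : i + k ≤ N) (hi : k ≤ i)
    (g : ℕ → ℝ) :
    ∑ j ∈ Finset.Icc (i+1-k) (i+k-1),
        ((((k:ℤ) - |(i:ℤ) - (j:ℤ)|) : ℤ) : ℝ) / (k:ℝ)^2 * g j
      = ∑ j ∈ Finset.range N, tentWeight k i j * g j := by
  have hsub : Finset.Icc (i+1-k) (i+k-1) ⊆ Finset.range N := by
    intro j hj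
    simp only [Finset.mem_Icc, Finset.mem_range] at hj ⊢
    omega
  rw [← Finset.sum_subset hsub]
  · refine Finset.sum_congr rfl fun j hj => ?_
    rw [Finset.mem_Icc] at hj
    have : max ((k:ℤ) - |(i:ℤ) - (j:ℤ)|) 0 = (k:ℤ) - |(i:ℤ) - (j:ℤ)| := by
      apply max_eq_left
      have : |(i:ℤ) - (j:ℤ)| ≤ k := abs_le.2 ⟨by omega, by omega⟩
      omega
    rw [tentWeight, this]
  · intro j _ hj
    rw [Finset.mem_Icc] at hj
    rw [tentWeight_eq_zero (by omega), zero_mul]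

lemma hatEta_flipC {k i m N : ℕ} (hk : 1 ≤ k) (hN : i + k ≤ N) (hi : k ≤ i)
    (hm : tentWeight k i m = 0) (η : ℕ → ℝ) : hatEta k i (flipC η m) = hatEta k i η := by
  unfold hatEta
  rw [sum_window_eq_sum_range hk hN hi, sum_window_eq_sum_range hk hN hi]
  refine Finset.sum_congr rfl fun j _ => ?_
  by_cases h : j = m
  · rw [h, hm, zero_mul, zero_mul]
  · simp [flipC, h]

lemma hatEta_swapC_sub {k i : ℕ} (hk : 1 ≤ k) (hi : k ≤ i) (η : ℕ → ℝ) (m : ℕ) :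
    hatEta k i (swapC η m) - hatEta k i η
      = (tentWeight k i m - tentWeight k i (m+1)) * (η (m+1) - η m) := by
  have hN : i + k ≤ i + k + m + 2 := by omega
  unfold hatEta
  rw [sum_window_eq_sum_range hk hN hi, sum_window_eq_sum_range hk hN hi,
    ← Finset.sum_sub_distrib]
  have hsub : ({m, m+1} : Finset ℕ) ⊆ Finset.range (i + k + m + 2) := by
    intro j hj
    simp only [Finset.mem_insert, Finset.mem_singleton, Finset.mem_range] at hj ⊢
    omega
  rw [← Finset.sum_subset hsub, Finset.sum_pair (by omega)]
  · simp [swapC]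
    ring
  · intro j _ hj
    simp only [Finset.mem_insert, Finset.mem_singleton, not_or] at hj
    simp [swapC, hj.1, hj.2]

lemma sum_Icc_one_pred_eq_sum_range {n : ℕ} (hn : 1 ≤ n) {f : ℕ → ℝ} (h0 : f 0 = 0) :
    ∑ m ∈ Finset.Icc 1 (n-1), f m = ∑ m ∈ Finset.range n, f m := by
  apply Finset.sum_subset
  · intro j hj
    simp only [Finset.mem_Icc, Finset.mem_range] at hj ⊢
    omega
  · intro j hj hj'
    simp only [Finset.mem_Icc, Finset.mem_range] at hj hj'
    rw [show j = 0 by omega, h0]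

/-- The asymmetric exclusion generator maps `η̂_{i+1,k}` to a discrete gradient of the current. -/
lemma Lta_hatEta_succ {n k i : ℕ} (hk : 1 ≤ k) (hi : k ≤ i) (hin : i + 1 + k ≤ n)
    {η : ℕ → ℝ} (hη : ∀ j, η j = 0 ∨ η j = 1) :
    Lta n (hatEta k (i+1)) η = hatJ k i η - hatJ k (i+1) η := by
  unfold Lta hatJ
  rw [sum_window_eq_sum_range hk (N := n) (by omega) hi,
    sum_window_eq_sum_range hk (N := n) (by omega) (by omega), ← Finset.sum_sub_distrib]
  simp only [hatEta_swapC_sub hk (show k ≤ i + 1 by omega), tentWeight_succ_succ]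
  rw [sum_Icc_one_pred_eq_sum_range (by omega)]
  · refine Finset.sum_congr rfl fun m _ => ?_
    rcases hη m with h | h <;> rcases hη (m+1) with h' | h' <;> rw [h, h'] <;> ring
  · rw [tentWeight_eq_zero (k := k) (i := i + 1) (j := 0) (by omega),
      tentWeight_eq_zero (k := k) (i := i) (j := 0) (by omega)]
    ring

/-- The symmetric exclusion generator maps `η̂_{i+1,k}` to its discrete Laplacian. -/
lemma Lss_hatEta_succ {n k i : ℕ} (hk : 1 ≤ k) (hi : k ≤ i) (hin : i + 1 + k ≤ n) (η : ℕ → ℝ) :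
    Lss n (hatEta k (i+1)) η = hatEta k (i+2) η - 2 * hatEta k (i+1) η + hatEta k i η := by
  have h0 : tentWeight k (i+1) 0 = 0 := tentWeight_eq_zero (by omega)
  have hlast : tentWeight k (i+1) n = 0 := tentWeight_eq_zero (by omega)
  have hleft : hatEta k i η
      = ∑ m ∈ Finset.range n, tentWeight k (i+1) (m+1) * η m := by
    simp only [tentWeight_succ_succ]
    exact sum_window_eq_sum_range hk (by omega) hi η
  have hmid : hatEta k (i+1) η = ∑ m ∈ Finset.range n, tentWeight k (i+1) m * η m :=
    sum_window_eq_sum_range hk (by omega) (by omega) η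
  have hright : hatEta k (i+2) η
      = ∑ m ∈ Finset.range n, tentWeight k (i+1) m * η (m+1) := by
    refine (sum_window_eq_sum_range hk (N := n + 1) (by omega) (by omega) η).trans ?_
    rw [Finset.sum_range_succ', tentWeight_eq_zero (j := 0) (by omega), zero_mul, add_zero]
    exact Finset.sum_congr rfl fun m _ => by rw [tentWeight_succ_succ k (i+1) m]
  have htel : ∑ m ∈ Finset.range n,
      (tentWeight k (i+1) (m+1) * η (m+1) - tentWeight k (i+1) m * η m) = 0 := by
    rw [Finset.sum_range_sub (fun m => tentWeight k (i+1) m * η m), h0, hlast]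
    ring
  unfold Lss
  simp only [hatEta_swapC_sub hk (show k ≤ i + 1 by omega)]
  rw [sum_Icc_one_pred_eq_sum_range (by omega), hleft, hmid, hright,
    ← sub_zero (_ - _ + _), ← htel, Finset.mul_sum, ← Finset.sum_sub_distrib, ← Finset.sum_add_distrib,
    ← Finset.sum_sub_distrib]
  · exact Finset.sum_congr rfl fun m _ => by ring
  · rw [h0, tentWeight_succ_succ, tentWeight_eq_zero (by omega)]
    ring

/-- Identity (eq. current): for `k+1 ≤ i ≤ n−k`, the action of the full generator on the
smoothly weighted average `η̂_{i,k}` involves only the bulk dynamics: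
`L_n η̂_{i,k} = n[p(Ĵ_{i−1,k} − Ĵ_{i,k}) + σ n^κ (η̂_{i+1,k} − 2η̂_{i,k} + η̂_{i−1,k})]`. -/
theorem stmt11 (n : ℕ) (hn : 2 ≤ n) (p σ κ θ α β γ δ : ℝ)
    (hp : 0 < p) (hσ : 0 < σ) (hα : 0 ≤ α) (hβ : 0 ≤ β) (hγ : 0 ≤ γ) (hδ : 0 ≤ δ)
    (k : ℕ) (hk : 1 ≤ k) (hkn : 2*k + 1 ≤ n)
    (i : ℕ) (hi1 : k + 1 ≤ i) (hi2 : i ≤ n - k)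
    (η : ℕ → ℝ) (hη : ∀ j, η j = 0 ∨ η j = 1) :
    Ln n p σ κ θ α β γ δ (hatEta k i) η
      = (n : ℝ) * (p * (hatJ k (i-1) η - hatJ k i η)
          + σ * (n:ℝ)^κ * (hatEta k (i+1) η - 2 * hatEta k i η + hatEta k (i-1) η)) := by
  obtain ⟨i, rfl⟩ : ∃ j, i = j + 1 := ⟨i - 1, by omega⟩
  have hi : k ≤ i := by omega
  have hin : i + 1 + k ≤ n := by omega
  have hminus : Lminus α γ (hatEta k (i+1)) η = 0 := by
    rw [Lminus, hatEta_flipC hk hin (by omega) (tentWeight_eq_zero (by omega)), sub_self,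
      mul_zero]
  have hplus : Lplus n β δ (hatEta k (i+1)) η = 0 := by
    rw [Lplus, hatEta_flipC hk hin (by omega) (tentWeight_eq_zero (by omega)), sub_self,
      mul_zero]
  rw [Ln, hminus, hplus, Lta_hatEta_succ hk hi hin hη, Lss_hatEta_succ hk hi hin,
    Nat.add_sub_cancel, add_zero, mul_zero, add_zero]
end

section
/- Fix an integer n ≥ 2 and constants p, s ≥ 0. Let μ be a strictly positive probability measure on Ω_n = {0,1}^n. Then Σ_{η ∈ Ω_n} μ(η) ((p L_ta + s L_ss)[log μ])(η) ≤ −(p + 2s) 𝔇_n(μ) + p Σ_{η ∈ Ω_n} (η_n − η₁) μ(η), where 𝔇_n(μ) = (1/2) Σ_{η ∈ Ω_n} Σ_{i=1}^{n−1} (√(μ(η^{i,i+1})) − √(μ(η)))². (The bulk entropy-production estimate in the proof of Lemma 3.3, with s = σ n^κ.) -/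
open Finset

/-- Real value of an occupation variable. -/
def b2r (b : Bool) : ℝ := if b then 1 else 0

/-- Exchange the coordinates `i` and `j` of a configuration. -/
def swapAt {n : ℕ} (η : Fin n → Bool) (i j : Fin n) : Fin n → Bool :=
  η ∘ Equiv.swap i j

/-- Generator of the totally asymmetric simple exclusion on `Ω_n = {0,1}^n`. -/
def LtaB {n : ℕ} (f : (Fin n → Bool) → ℝ) (η : Fin n → Bool) : ℝ :=
  ∑ i : Fin (n-1),
    b2r (η ⟨i.1, by have := i.2; omega⟩) * (1 - b2r (η ⟨i.1+1, by have := i.2; omega⟩)) *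
      (f (swapAt η ⟨i.1, by have := i.2; omega⟩ ⟨i.1+1, by have := i.2; omega⟩) - f η)

/-- Generator of the symmetric simple exclusion on `Ω_n = {0,1}^n`. -/
def LssB {n : ℕ} (f : (Fin n → Bool) → ℝ) (η : Fin n → Bool) : ℝ :=
  ∑ i : Fin (n-1),
    (f (swapAt η ⟨i.1, by have := i.2; omega⟩ ⟨i.1+1, by have := i.2; omega⟩) - f η)

/-- The Dirichlet form of the symmetric simple exclusion:
`𝔇_n(μ) = (1/2) Σ_η Σ_{i=1}^{n-1} (√μ(η^{i,i+1}) − √μ(η))²`. -/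
noncomputable def dirForm {n : ℕ} (μ : (Fin n → Bool) → ℝ) : ℝ :=
  (1/2) * ∑ η : Fin n → Bool, ∑ i : Fin (n-1),
    (Real.sqrt (μ (swapAt η ⟨i.1, by have := i.2; omega⟩ ⟨i.1+1, by have := i.2; omega⟩))
      - Real.sqrt (μ η))^2

theorem mul_log_sub_log_le {x y : ℝ} (hx : 0 < x) (hy : 0 < y) :
    x * (Real.log y - Real.log x) ≤ -(√y - √x) ^ 2 + (y - x) := by
  have hsx := Real.sqrt_pos.2 hx
  have hsy := Real.sqrt_pos.2 hy
  have hxx := Real.sq_sqrt hx.le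
  have hyy := Real.sq_sqrt hy.le
  have hlog : Real.log y - Real.log x = 2 * Real.log (√y / √x) := by
    rw [Real.log_div hsy.ne' hsx.ne', Real.log_sqrt hy.le, Real.log_sqrt hx.le]
    ring
  have hle := Real.log_le_sub_one_of_pos (div_pos hsy hsx)
  have hmul : x * (√y / √x - 1) = √x * √y - x := by
    field_simp
    linear_combination -√y * hxx
  have := mul_le_mul_of_nonneg_left hle hx.le
  rw [hlog]
  linarith

theorem swapAt_swapAt {n : ℕ} (η : Fin n → Bool) (i j : Fin n) :
    swapAt (swapAt η i j) i j = η := by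
  funext k
  simp [swapAt]

theorem swapAt_eq_self {n : ℕ} {η : Fin n → Bool} {i j : Fin n} (h : η i = η j) :
    swapAt η i j = η := by
  funext k
  simp only [swapAt, Function.comp_apply, Equiv.swap_apply_def]
  split_ifs <;> simp_all

theorem sum_comp_swapAt {n : ℕ} (i j : Fin n) (F : (Fin n → Bool) → ℝ) :
    ∑ η, F (swapAt η i j) = ∑ η, F η :=
  Equiv.sum_comp (Function.Involutive.toPerm (fun η : Fin n → Bool => swapAt η i j)
    fun η => swapAt_swapAt η i j) F

/-- To compare two sums over configurations it suffices to compare the summands after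
symmetrization under an exchange of two sites. -/
theorem sum_le_sum_of_add_swapAt_le {n : ℕ} (i j : Fin n) {F G : (Fin n → Bool) → ℝ}
    (h : ∀ η, F η + F (swapAt η i j) ≤ G η + G (swapAt η i j)) :
    ∑ η, F η ≤ ∑ η, G η := by
  have hle := Finset.sum_le_sum fun η (_ : η ∈ Finset.univ) => h η
  rw [Finset.sum_add_distrib, Finset.sum_add_distrib, sum_comp_swapAt, sum_comp_swapAt] at hle
  linarith

/-- Entropy production of the symmetric exchange across one bond. -/
theorem sum_mul_log_swapAt_le {n : ℕ} (i j : Fin n) {μ : (Fin n → Bool) → ℝ}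
    (hpos : ∀ η, 0 < μ η) :
    ∑ η, μ η * (Real.log (μ (swapAt η i j)) - Real.log (μ η))
      ≤ ∑ η, -(√(μ (swapAt η i j)) - √(μ η)) ^ 2 := by
  refine sum_le_sum_of_add_swapAt_le i j fun η => ?_
  rw [swapAt_swapAt]
  linarith [mul_log_sub_log_le (hpos η) (hpos (swapAt η i j)),
    mul_log_sub_log_le (hpos (swapAt η i j)) (hpos η)]

/-- Entropy production of the totally asymmetric exchange across one bond. -/
theorem sum_mul_exclusion_log_swapAt_le {n : ℕ} (i j : Fin n) {μ : (Fin n → Bool) → ℝ}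
    (hpos : ∀ η, 0 < μ η) :
    ∑ η, μ η * (b2r (η i) * (1 - b2r (η j)) *
        (Real.log (μ (swapAt η i j)) - Real.log (μ η)))
      ≤ ∑ η, (-(1 / 2) * (√(μ (swapAt η i j)) - √(μ η)) ^ 2
        + (b2r (η j) - b2r (η i)) * μ η) := by
  refine sum_le_sum_of_add_swapAt_le i j fun η => ?_
  by_cases hij : η i = η j
  · have hself := swapAt_eq_self hij
    simp only [hself, hij]
    simp
  · have hi : swapAt η i j i = η j := by simp [swapAt]
    have hj : swapAt η i j j = η i := by simp [swapAt]
    have h := mul_log_sub_log_le (hpos η) (hpos (swapAt η i j))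
    have h' := mul_log_sub_log_le (hpos (swapAt η i j)) (hpos η)
    rw [swapAt_swapAt, hi, hj]
    cases hηi : η i <;> cases hηj : η j <;> simp_all [b2r] <;> linarith

theorem sum_fin_sub_telescope {n : ℕ} (hn : 0 < n) (g : Fin n → ℝ) :
    ∑ i : Fin (n - 1), (g ⟨i.1 + 1, by have := i.2; omega⟩ - g ⟨i.1, by have := i.2; omega⟩)
      = g ⟨n - 1, by omega⟩ - g ⟨0, hn⟩ := by
  obtain ⟨m, rfl⟩ : ∃ m, n = m + 1 := ⟨n - 1, by omega⟩
  have h := (Fin.sum_univ_succ g).symm.trans (Fin.sum_univ_castSucc g)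
  change ∑ i : Fin m, (g i.succ - g i.castSucc) = g (Fin.last m) - g 0
  rw [Finset.sum_sub_distrib]
  linarith

theorem sum_mul_LssB_log_le {n : ℕ} {μ : (Fin n → Bool) → ℝ} (hpos : ∀ η, 0 < μ η) :
    ∑ η, μ η * LssB (fun ζ => Real.log (μ ζ)) η ≤ -2 * dirForm μ := by
  have h := Finset.sum_le_sum fun (i : Fin (n - 1)) (_ : i ∈ Finset.univ) =>
    sum_mul_log_swapAt_le ⟨i.1, by have := i.2; omega⟩ ⟨i.1 + 1, by have := i.2; omega⟩ hpos
  rw [Finset.sum_comm, Finset.sum_comm (s := Finset.univ (α := Fin (n - 1)))] at h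
  simp only [LssB, dirForm, Finset.mul_sum] at h ⊢
  refine h.trans_eq (Finset.sum_congr rfl fun η _ => Finset.sum_congr rfl fun i _ => ?_)
  ring

theorem sum_mul_LtaB_log_le {n : ℕ} (hn : 0 < n) {μ : (Fin n → Bool) → ℝ}
    (hpos : ∀ η, 0 < μ η) :
    ∑ η, μ η * LtaB (fun ζ => Real.log (μ ζ)) η
      ≤ -dirForm μ + ∑ η, (b2r (η ⟨n - 1, by omega⟩) - b2r (η ⟨0, hn⟩)) * μ η := by
  have h := Finset.sum_le_sum fun (i : Fin (n - 1)) (_ : i ∈ Finset.univ) =>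
    sum_mul_exclusion_log_swapAt_le ⟨i.1, by have := i.2; omega⟩
      ⟨i.1 + 1, by have := i.2; omega⟩ hpos
  rw [Finset.sum_comm, Finset.sum_comm (s := Finset.univ (α := Fin (n - 1)))] at h
  simp only [LtaB, dirForm, Finset.mul_sum] at h ⊢
  refine h.trans_eq ?_
  rw [← Finset.sum_neg_distrib, ← Finset.sum_add_distrib]
  refine Finset.sum_congr rfl fun η _ => ?_
  rw [← sum_fin_sub_telescope hn fun k => b2r (η k), Finset.sum_add_distrib, Finset.sum_mul,
    ← Finset.sum_neg_distrib]
  simp only [neg_mul]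

/-- The bulk entropy-production estimate in the proof of Lemma 3.3:
`Σ_η μ(η) (pL_ta + sL_ss)[log μ](η) ≤ −(p+2s) 𝔇_n(μ) + p Σ_η (η_n − η₁) μ(η)`. -/
theorem stmt15 (n : ℕ) (hn : 2 ≤ n) (p s : ℝ) (hp : 0 ≤ p) (hs : 0 ≤ s)
    (μ : (Fin n → Bool) → ℝ) (hpos : ∀ η, 0 < μ η)
    (hsum : ∑ η : Fin n → Bool, μ η = 1) :
    ∑ η : Fin n → Bool, μ η *
        (p * LtaB (fun ζ => Real.log (μ ζ)) η + s * LssB (fun ζ => Real.log (μ ζ)) η)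
      ≤ -(p + 2*s) * dirForm μ
        + p * ∑ η : Fin n → Bool,
            (b2r (η ⟨n-1, by omega⟩) - b2r (η ⟨0, by omega⟩)) * μ η := by
  have hta := mul_le_mul_of_nonneg_left (sum_mul_LtaB_log_le (by omega) hpos) hp
  have hss := mul_le_mul_of_nonneg_left (sum_mul_LssB_log_le hpos) hs
  have hsplit : ∑ η : Fin n → Bool, μ η *
        (p * LtaB (fun ζ => Real.log (μ ζ)) η + s * LssB (fun ζ => Real.log (μ ζ)) η)
      = p * ∑ η, μ η * LtaB (fun ζ => Real.log (μ ζ)) η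
        + s * ∑ η, μ η * LssB (fun ζ => Real.log (μ ζ)) η := by
    rw [Finset.mul_sum, Finset.mul_sum, ← Finset.sum_add_distrib]
    exact Finset.sum_congr rfl fun η _ => by ring
  rw [hsplit]
  linarith
end

section
/- Fix an integer n ≥ 1 and constants α, γ ≥ 0. Let μ be a strictly positive probability measure on Ω_n = {0,1}^n and let L₋ f(η) = [α(1−η₁) + γη₁][f(η^1) − f(η)]. Then Σ_{η ∈ Ω_n} μ(η) (L₋[log μ])(η) ≤ −Σ_{η ∈ Ω_n} [α(1−η₁) + γη₁] (√(μ(η^1)) − √(μ(η)))² + (α−γ) Σ_{η ∈ Ω_n} (2η₁ − 1) μ(η). (The boundary entropy-production estimate in the proof of Lemma 3.3.) -/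
open Finset

/-- Flip the coordinate `i` of a configuration. -/
def flipAt {n : ℕ} (η : Fin n → Bool) (i : Fin n) : Fin n → Bool :=
  Function.update η i (!η i)

/-- Generator of the left reservoir, acting on the first coordinate:
`L₋ f(η) = [α(1−η₁) + γη₁][f(η^1) − f(η)]`. -/
def LmB {n : ℕ} (α γ : ℝ) (i0 : Fin n) (f : (Fin n → Bool) → ℝ) (η : Fin n → Bool) : ℝ :=
  (α * (1 - b2r (η i0)) + γ * b2r (η i0)) * (f (flipAt η i0) - f η)

theorem flipAt_involutive {n : ℕ} (i : Fin n) :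
    Function.Involutive (fun η : Fin n → Bool => flipAt η i) := by
  intro η
  simp [flipAt]

theorem b2r_flipAt_self {n : ℕ} (η : Fin n → Bool) (i : Fin n) :
    b2r (flipAt η i i) = 1 - b2r (η i) := by
  cases h : η i <;> simp [flipAt, b2r, h]

theorem sum_rate_mul_flipAt_sub {n : ℕ} (α γ : ℝ) (i : Fin n) (μ : (Fin n → Bool) → ℝ) :
    ∑ η, (α * (1 - b2r (η i)) + γ * b2r (η i)) * (μ (flipAt η i) - μ η)
      = (α - γ) * ∑ η, (2 * b2r (η i) - 1) * μ η := by
  have hflip : ∑ η, (α * (1 - b2r (η i)) + γ * b2r (η i)) * μ (flipAt η i)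
      = ∑ η, (α * b2r (η i) + γ * (1 - b2r (η i))) * μ η := by
    rw [← Equiv.sum_comp (flipAt_involutive i).toPerm
      (fun η => (α * b2r (η i) + γ * (1 - b2r (η i))) * μ η)]
    refine Finset.sum_congr rfl fun η _ => ?_
    simp only [Function.Involutive.coe_toPerm, b2r_flipAt_self]
    ring
  simp only [mul_sub _ (μ _) (μ _)]
  rw [Finset.sum_sub_distrib, hflip, ← Finset.sum_sub_distrib, Finset.mul_sum]
  exact Finset.sum_congr rfl fun η _ => by ring

/-- The boundary entropy-production estimate in the proof of Lemma 3.3: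
`Σ_η μ(η) L₋[log μ](η) ≤ −Σ_η [α(1−η₁)+γη₁](√μ(η^1) − √μ(η))²
  + (α−γ) Σ_η (2η₁−1) μ(η)`. -/
theorem stmt16 (n : ℕ) (hn : 1 ≤ n) (α γ : ℝ) (hα : 0 ≤ α) (hγ : 0 ≤ γ)
    (μ : (Fin n → Bool) → ℝ) (hpos : ∀ η, 0 < μ η)
    (hsum : ∑ η : Fin n → Bool, μ η = 1) :
    ∑ η : Fin n → Bool, μ η * LmB α γ ⟨0, by omega⟩ (fun ζ => Real.log (μ ζ)) η
      ≤ -(∑ η : Fin n → Bool,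
            (α * (1 - b2r (η ⟨0, by omega⟩)) + γ * b2r (η ⟨0, by omega⟩)) *
              (Real.sqrt (μ (flipAt η ⟨0, by omega⟩)) - Real.sqrt (μ η))^2)
        + (α - γ) * ∑ η : Fin n → Bool, (2 * b2r (η ⟨0, by omega⟩) - 1) * μ η := by
  rw [← sum_rate_mul_flipAt_sub, ← Finset.sum_neg_distrib, ← Finset.sum_add_distrib]
  refine Finset.sum_le_sum fun η _ => ?_
  have hrate : 0 ≤ α * (1 - b2r (η ⟨0, by omega⟩)) + γ * b2r (η ⟨0, by omega⟩) := by
    cases η ⟨0, by omega⟩ <;> simp [b2r, hα, hγ]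
  have key := mul_le_mul_of_nonneg_left
    (mul_log_sub_log_le (hpos η) (hpos (flipAt η ⟨0, by omega⟩))) hrate
  unfold LmB
  linarith
end

section
/- Fix integers k ≥ 1 and 1 ≤ ℓ ≤ 2k−1, and ρ ∈ [0,1]. Let ν_ρ be the Bernoulli product measure with density ρ on {0,1}^{2k−1}, let f : {0,1}^ℓ → [0,1], and set ⟨f⟩(ρ) = E_{ν_ρ}[f(η₁,…,η_ℓ)]. Then for every a ∈ ℝ, log E_{ν_ρ}[ exp( a ( (2k−ℓ)^{−1} Σ_{i=0}^{2k−ℓ−1} f(η_{i+1},…,η_{i+ℓ}) − ⟨f⟩(ρ) ) ) ] ≤ ℓ a² / (8(2k−ℓ)). (The block exponential moment bound obtained via Hoeffding's lemma and the generalized Hölder inequality in the proof of Lemma 3.2.) -/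
open Finset

/-- Density of the Bernoulli product measure with parameter `ρ` on `{0,1}^N`. -/
def bern (N : ℕ) (ρ : ℝ) (η : Fin N → Bool) : ℝ :=
  ∏ i : Fin N, (if η i then ρ else 1 - ρ)

open MeasureTheory ProbabilityTheory
open scoped NNReal

namespace ProbabilityTheory

/-- Restricting a product of identical measures along an injection gives the product measure. -/
lemma map_pi_comp_injective {ι κ α : Type*} [Fintype ι] [Fintype κ] [MeasurableSpace α]
    (μ : Measure α) [IsProbabilityMeasure μ] {e : κ → ι} (he : Function.Injective e) :
    (Measure.pi fun _ : ι => μ).map (fun η j => η (e j)) = Measure.pi fun _ : κ => μ := by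
  have h := (iIndepFun_pi (μ := fun _ : ι => μ) (X := fun _ => id)
    fun _ => aemeasurable_id).precomp he
  have h' := h.map_fun_eq_pi_map fun j => (measurable_pi_apply (e j)).aemeasurable
  refine h'.trans ?_
  congr 1
  ext1 j
  exact (measurePreserving_eval (fun _ : ι => μ) (e j)).map_eq

/-- Blocks of coordinates indexed by disjoint sets are independent under a product measure. -/
lemma iIndepFun_pi_blocks {ι β κ α : Type*} [Fintype ι] [Fintype β] [Fintype κ] [Countable α]
    [MeasurableSpace α] [MeasurableSingletonClass α]
    (μ : Measure α) [IsProbabilityMeasure μ] {e : β → κ → ι}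
    (he : Function.Injective fun p : β × κ => e p.1 p.2) :
    iIndepFun (fun b (η : ι → α) j => η (e b j)) (Measure.pi fun _ : ι => μ) := by
  have hblock (b : β) : Measurable fun (η : ι → α) j => η (e b j) := by fun_prop
  have hinj (b : β) : Function.Injective (e b) := fun j j' hj =>
    (Prod.ext_iff.1 (he (a₁ := (b, j)) (a₂ := (b, j')) hj)).2
  rw [iIndepFun_iff_map_fun_eq_pi_map fun b => (hblock b).aemeasurable]
  simp_rw [fun b => map_pi_comp_injective μ (hinj b)]
  refine Measure.ext_of_singleton fun x => ?_
  rw [Measure.map_apply (measurable_pi_lambda _ hblock) (measurableSet_singleton x)]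
  have hpre : (fun (η : ι → α) b j => η (e b j)) ⁻¹' {x} =
      (fun (η : ι → α) (p : β × κ) => η (e p.1 p.2)) ⁻¹' {fun p => x p.1 p.2} := by
    ext η
    simp [funext_iff]
  rw [hpre, ← Measure.map_apply (by fun_prop) (measurableSet_singleton _),
    map_pi_comp_injective μ he]
  simp [Fintype.prod_prod_type]

/-- A sum of `m` arbitrarily dependent sub-Gaussian variables is sub-Gaussian, with parameter at
most `m` times the sum of the parameters. -/
lemma HasSubgaussianMGF.finset_sum {Ω ι : Type*} {mΩ : MeasurableSpace Ω} {μ : Measure Ω}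
    [IsProbabilityMeasure μ] {X : ι → Ω → ℝ} {c : ι → ℝ≥0} (s : Finset ι)
    (h : ∀ i ∈ s, HasSubgaussianMGF (X i) (c i) μ) :
    HasSubgaussianMGF (fun ω => ∑ i ∈ s, X i ω) (#s * ∑ i ∈ s, c i) μ := by
  classical
  have key : HasSubgaussianMGF (fun ω => ∑ i ∈ s, X i ω) ((∑ i ∈ s, (c i).sqrt) ^ 2) μ := by
    induction s using Finset.induction_on with
    | empty => simp
    | insert i s his ih =>
      simp_rw [Finset.sum_insert his]
      simpa using (h i (mem_insert_self i s)).add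
        (ih fun j hj => h j (mem_insert_of_mem hj))
  refine ⟨key.integrable_exp_mul, fun t => (key.mgf_le t).trans ?_⟩
  have hle : (∑ i ∈ s, (c i).sqrt) ^ 2 ≤ #s * ∑ i ∈ s, c i := by
    simpa using sq_sum_le_card_mul_sum_sq (s := s) (f := fun i => (c i).sqrt)
  gcongr

lemma integral_pi_bernoulliMeasure (N : ℕ) {ρ : ℝ} (hρ : ρ ∈ Set.Icc (0 : ℝ) 1)
    (g : (Fin N → Bool) → ℝ) :
    ∫ η, g η ∂(Measure.pi fun _ : Fin N => bernoulliMeasure true false ⟨ρ, hρ⟩) =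
      ∑ η, bern N ρ η * g η := by
  rw [integral_fintype .of_finite]
  refine Finset.sum_congr rfl fun η _ => ?_
  rw [smul_eq_mul, measureReal_def, Measure.pi_singleton, ENNReal.toReal_prod, bern]
  congr 1
  refine Finset.prod_congr rfl fun i _ => ?_
  cases η i <;> simp

/-- The centred sum of a `[0, 1]`-valued function over the `n` windows of length `ℓ` of an i.i.d.
sequence is sub-Gaussian with parameter `ℓ n / 4`. -/
lemma hasSubgaussianMGF_sum_windows {α : Type*} [Countable α] [MeasurableSpace α]
    [MeasurableSingletonClass α] (μ : Measure α) [IsProbabilityMeasure μ] {n ℓ N : ℕ}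
    (hℓ : 1 ≤ ℓ) (e : Fin n → Fin ℓ → Fin N) (he : ∀ i j, (e i j : ℕ) = i + j)
    {f : (Fin ℓ → α) → ℝ} (hf : ∀ ζ, f ζ ∈ Set.Icc (0 : ℝ) 1) :
    HasSubgaussianMGF
      (fun η : Fin N → α => ∑ i, (f (fun j => η (e i j)) - ∫ ζ, f ζ ∂(Measure.pi fun _ => μ)))
      (ℓ * (n * (1 / 4))) (Measure.pi fun _ => μ) := by
  set m := ∫ ζ, f ζ ∂(Measure.pi fun _ : Fin ℓ => μ)
  have hfm : Measurable f := measurable_of_countable f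
  have hterm (i : Fin n) : HasSubgaussianMGF (fun η : Fin N → α => f (fun j => η (e i j)) - m)
      (1 / 4) (Measure.pi fun _ => μ) := by
    have hinj : Function.Injective (e i) := fun j j' h => by
      have := congrArg Fin.val h
      simp only [he] at this
      omega
    have hm : ∫ η : Fin N → α, f (fun j => η (e i j)) ∂(Measure.pi fun _ => μ) = m := by
      rw [← integral_map (φ := fun (η : Fin N → α) j => η (e i j))
        (measurable_pi_lambda _ fun j => measurable_pi_apply (e i j)).aemeasurable
        hfm.aestronglyMeasurable, map_pi_comp_injective μ hinj]
    have h := hasSubgaussianMGF_of_mem_Icc (μ := Measure.pi fun _ : Fin N => μ)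
      (X := fun η => f (fun j => η (e i j))) (a := 0) (b := 1)
      (hfm.comp (by fun_prop)).aemeasurable (.of_forall fun η => hf _)
    rw [hm] at h
    convert h using 1
    norm_num
  have hclass (r : ℕ) : HasSubgaussianMGF
      (fun η : Fin N → α => ∑ i : Fin n with i.1 % ℓ = r, (f (fun j => η (e i j)) - m))
      (∑ i : Fin n with i.1 % ℓ = r, 1 / 4) (Measure.pi fun _ => μ) := by
    have hinj : Function.Injective
        fun p : {i : Fin n // i.1 % ℓ = r} × Fin ℓ => e p.1 p.2 := by
      rintro ⟨⟨i, hi⟩, j⟩ ⟨⟨i', hi'⟩, j'⟩ h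
      have h' := congrArg Fin.val h
      simp only [he] at h'
      have hj : j.1 = j'.1 := by
        have : j.1 ≡ j'.1 [MOD ℓ] :=
          Nat.ModEq.add_left_cancel (show i.1 ≡ i'.1 [MOD ℓ] from hi.trans hi'.symm)
            (congrArg (· % ℓ) h')
        exact this.eq_of_lt_of_lt j.2 j'.2
      have hii : i.1 = i'.1 := by omega
      simp [Fin.ext_iff, hj, hii]
    have hind := (iIndepFun_pi_blocks μ
      (e := fun (i : {i : Fin n // i.1 % ℓ = r}) => e i) hinj).comp
        (fun _ ζ => f ζ - m) fun _ => hfm.sub_const m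
    have h := HasSubgaussianMGF.sum_of_iIndepFun hind (s := Finset.univ) (c := fun _ => 1 / 4)
      fun i _ => hterm i
    convert h using 1
    · ext η
      exact Finset.sum_subtype _ (by simp) _
    · exact Finset.sum_subtype _ (by simp) _
  have h := HasSubgaussianMGF.finset_sum (Finset.range ℓ) fun r _ => hclass r
  have hmaps : ∀ i ∈ (Finset.univ : Finset (Fin n)), i.1 % ℓ ∈ Finset.range ℓ :=
    fun i _ => Finset.mem_range.2 (Nat.mod_lt _ hℓ)
  simp_rw [Finset.sum_fiberwise_of_maps_to hmaps] at h
  simpa using h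

end ProbabilityTheory


/-- The block exponential moment bound in the proof of Lemma 3.2, obtained from
Hoeffding's lemma and the generalized Hölder inequality: for a local function
`f : {0,1}^ℓ → [0,1]` and i.i.d. Bernoulli(ρ) variables `η₁,…,η_{2k−1}`,
`log E[exp(a((2k−ℓ)⁻¹ Σ_{i=0}^{2k−ℓ−1} f(τ_i η) − ⟨f⟩(ρ)))] ≤ ℓa²/(8(2k−ℓ))`. -/
theorem stmt19 (k ℓ : ℕ) (hk : 1 ≤ k) (hl1 : 1 ≤ ℓ) (hl2 : ℓ ≤ 2*k - 1)
    (ρ : ℝ) (hρ : ρ ∈ Set.Icc (0:ℝ) 1)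
    (f : (Fin ℓ → Bool) → ℝ) (hf : ∀ ζ, f ζ ∈ Set.Icc (0:ℝ) 1) (a : ℝ) :
    Real.log (∑ η : Fin (2*k - 1) → Bool, bern (2*k - 1) ρ η *
        Real.exp (a * (((2*k - ℓ : ℕ) : ℝ)⁻¹ *
            (∑ i : Fin (2*k - ℓ),
              f (fun j => η ⟨i.1 + j.1, by have := i.2; have := j.2; omega⟩))
          - ∑ ζ : Fin ℓ → Bool, bern ℓ ρ ζ * f ζ)))
      ≤ (ℓ : ℝ) * a^2 / (8 * ((2*k - ℓ : ℕ) : ℝ)) := by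
  have hn : (0 : ℝ) < ((2*k - ℓ : ℕ) : ℝ) := by
    exact_mod_cast (by omega : 0 < 2*k - ℓ)
  have h := (hasSubgaussianMGF_sum_windows (bernoulliMeasure true false ⟨ρ, hρ⟩) hl1
    (fun (i : Fin (2*k - ℓ)) (j : Fin ℓ) =>
      (⟨i.1 + j.1, by have := i.2; have := j.2; omega⟩ : Fin (2*k - 1)))
    (fun _ _ => rfl) hf).cgf_le (a / ((2*k - ℓ : ℕ) : ℝ))
  rw [cgf, mgf, integral_pi_bernoulliMeasure, integral_pi_bernoulliMeasure] at h
  convert h using 1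
  · congr 1
    refine Finset.sum_congr rfl fun η _ => ?_
    rw [Finset.sum_sub_distrib, Finset.sum_const, Finset.card_univ, Fintype.card_fin, nsmul_eq_mul]
    congr 2
    field_simp
  · rw [NNReal.coe_mul, NNReal.coe_mul, NNReal.coe_natCast, NNReal.coe_natCast]
    push_cast
    field_simp
    ring
end
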